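/- arXiv:2407.20226 — 2 statements merged into one kernel-verified Lean document; each statement's English description precedes it below -/
import Mathlib

section
/- Let n ≥ 2, let T⋆ be any spanning tree of K_n that is a star (all edges incident to one vertex), and let T_P be any spanning tree of K_n that is a Hamiltonian path. Then for every spanning tree T of K_n, P_MST(T⋆; K_n) ≥ P_MST(T; K_n) ≥ P_MST(T_P; K_n); moreover the left inequality is an equality if and only if T is itself a star, and the right inequality is an equality if and only if T is itself a path. -/
open MeasureTheory SimpleGraph
open scoped Classical

noncomputable section

namespace RST

variable {V : Type*}

/-- The i.i.d. uniform-on-`[0,1]` product measure on weight vectors indexed by `E`. -/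
def edgeUniform (E : Type*) [Fintype E] : Measure (E → ℝ) :=
  Measure.pi fun _ => (volume : Measure ℝ).restrict (Set.Icc (0 : ℝ) 1)

/-- The graph on `V` whose edge set is the finset `T`. -/
def spanGraph (T : Finset (Sym2 V)) : SimpleGraph V :=
  SimpleGraph.fromEdgeSet ↑T

/-- `T` is (the edge set of) a spanning tree of `G`. -/
def IsSpanningTree (G : SimpleGraph V) (T : Finset (Sym2 V)) : Prop :=
  ↑T ⊆ G.edgeSet ∧ (spanGraph T).Connected ∧ (spanGraph T).IsAcyclic

/-- Total weight `∑_{e ∈ T} w e` of the tree `T`. -/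
def treeWeight (G : SimpleGraph V) [Fintype V] (w : G.edgeSet → ℝ) (T : Finset (Sym2 V)) : ℝ :=
  ∑ e : G.edgeSet, if (e : Sym2 V) ∈ T then w e else 0

/-- The event that `T` is the unique minimum-weight spanning tree of `G`. -/
def mstEvent (G : SimpleGraph V) [Fintype V] (T : Finset (Sym2 V)) : Set (G.edgeSet → ℝ) :=
  {w | IsSpanningTree G T ∧ ∀ T' : Finset (Sym2 V), IsSpanningTree G T' → T' ≠ T →
    treeWeight G w T < treeWeight G w T'}

/-- `P_MST(T; G)`: probability that `T` is the unique minimum-weight spanning tree. -/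
def mstProb (G : SimpleGraph V) [Fintype V] (T : Finset (Sym2 V)) : ℝ :=
  (edgeUniform G.edgeSet (mstEvent G T)).toReal

/-- A star spanning tree of `K_n`: a spanning tree all of whose edges share a common
vertex. -/
def IsStarTree (n : ℕ) (T : Finset (Sym2 (Fin n))) : Prop :=
  IsSpanningTree (⊤ : SimpleGraph (Fin n)) T ∧ ∃ c : Fin n, ∀ e ∈ T, c ∈ e

/-- A Hamiltonian-path spanning tree of `K_n`: the consecutive edges of an enumeration
of `n` distinct vertices. -/
def IsPathTree (n : ℕ) (T : Finset (Sym2 (Fin n))) : Prop :=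
  IsSpanningTree (⊤ : SimpleGraph (Fin n)) T ∧
    ∃ f : ℕ → Fin n, (∀ i < n, ∀ j < n, f i = f j → i = j) ∧
      T = (Finset.range (n - 1)).image fun i => s(f i, f (i + 1))



/-! ### Iterated integrals and the four functions theorem -/

/-- Prepend a value to a sequence. -/
def scons (s : ENNReal) (x : ℕ → ENNReal) : ℕ → ENNReal
  | 0 => s
  | n + 1 => x n

/-- Iterated integral over the first `k` coordinates. -/
def II (ν : Measure ENNReal) : ℕ → ((ℕ → ENNReal) → ENNReal) → ENNReal
  | 0, G => G (fun _ => 0)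
  | k + 1, G => ∫⁻ s, II ν k (fun x => G (scons s x)) ∂ν

lemma measurable_scons : Measurable (fun z : ENNReal × (ℕ → ENNReal) => scons z.1 z.2) := by
  refine measurable_pi_iff.2 fun i => ?_
  cases i with
  | zero => exact measurable_fst
  | succ n => exact (measurable_pi_apply n).comp measurable_snd

lemma measurable_scons' (s : ENNReal) : Measurable (scons s) :=
  measurable_scons.comp (measurable_const.prodMk measurable_id)

lemma II_measurable (ν : Measure ENNReal) [SFinite ν] (k : ℕ) :
    ∀ {β : Type} [MeasurableSpace β] (G : β × (ℕ → ENNReal) → ENNReal), Measurable G →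
      Measurable (fun b => II ν k (fun x => G (b, x))) := by
  induction k with
  | zero => intro β _ G hG; exact hG.comp (measurable_id.prodMk measurable_const)
  | succ k ih =>
    intro β _ G hG
    have h := ih (β := β × ENNReal) (fun z => G (z.1.1, scons z.1.2 z.2)) (by
      refine hG.comp ((measurable_fst.comp measurable_fst).prodMk ?_)
      exact measurable_scons.comp ((measurable_snd.comp measurable_fst).prodMk measurable_snd))
    exact h.lintegral_prod_right'

lemma II_measurable_cons (ν : Measure ENNReal) [SFinite ν] (k : ℕ)
    (G : (ℕ → ENNReal) → ENNReal) (hG : Measurable G) :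
    Measurable (fun s => II ν k (fun x => G (scons s x))) :=
  II_measurable ν k (fun z : ENNReal × (ℕ → ENNReal) => G (scons z.1 z.2)) (hG.comp measurable_scons)

lemma II_mono (ν : Measure ENNReal) (S : Set ENNReal) (hS : ∀ᵐ a ∂ν, a ∈ S) (k : ℕ) :
    ∀ (G H : (ℕ → ENNReal) → ENNReal), (∀ x, (∀ i < k, x i ∈ S) → G x ≤ H x) →
      II ν k G ≤ II ν k H := by
  induction k with
  | zero => intro G H h; exact h _ (by simp)
  | succ k ih =>
    intro G H h
    refine lintegral_mono_ae ?_
    filter_upwards [hS] with a ha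
    refine ih _ _ fun x hx => h _ ?_
    intro i hi
    cases i with
    | zero => exact ha
    | succ n => exact hx n (by omega)

lemma II_congr (ν : Measure ENNReal) (S : Set ENNReal) (hS : ∀ᵐ a ∂ν, a ∈ S) (k : ℕ)
    (G H : (ℕ → ENNReal) → ENNReal) (h : ∀ x, (∀ i < k, x i ∈ S) → G x = H x) :
    II ν k G = II ν k H :=
  le_antisymm (II_mono ν S hS k _ _ fun x hx => (h x hx).le)
    (II_mono ν S hS k _ _ fun x hx => (h x hx).ge)

lemma II_const_mul (ν : Measure ENNReal) [SFinite ν] (k : ℕ) (c : ENNReal) :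
    ∀ (G : (ℕ → ENNReal) → ENNReal), Measurable G →
      II ν k (fun x => c * G x) = c * II ν k G := by
  induction k with
  | zero => intro G _; rfl
  | succ k ih =>
    intro G hG
    simp only [II]
    rw [← lintegral_const_mul _ (II_measurable_cons ν k G hG)]
    refine lintegral_congr fun s => ?_
    exact ih _ (hG.comp (measurable_scons' s))

lemma II_mul_const (ν : Measure ENNReal) [SFinite ν] (k : ℕ) (c : ENNReal)
    (G : (ℕ → ENNReal) → ENNReal) (hG : Measurable G) :
      II ν k (fun x => G x * c) = II ν k G * c := by
  simp_rw [mul_comm _ c]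
  exact II_const_mul ν k c G hG

lemma II_sum (ν : Measure ENNReal) [SFinite ν] (k : ℕ) {J : Type} (t : Finset J) :
    ∀ (G : J → (ℕ → ENNReal) → ENNReal), (∀ j, Measurable (G j)) →
      II ν k (fun x => ∑ j ∈ t, G j x) = ∑ j ∈ t, II ν k (G j) := by
  induction k with
  | zero => intro G _; rfl
  | succ k ih =>
    intro G hG
    simp only [II]
    rw [← lintegral_finsetSum _ fun j _ => (II_measurable_cons ν k (G j) (hG j))]
    refine lintegral_congr fun s => ?_
    exact ih _ fun j => ((hG j).comp (measurable_scons' s))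

lemma II_swap (ν ν' : Measure ENNReal) [SFinite ν] [SFinite ν'] (k : ℕ) :
    ∀ (H : ENNReal × (ℕ → ENNReal) → ENNReal), Measurable H →
      II ν k (fun x => ∫⁻ s, H (s, x) ∂ν') = ∫⁻ s, II ν k (fun x => H (s, x)) ∂ν' := by
  induction k with
  | zero => intro H _; rfl
  | succ k ih =>
    intro H hH
    simp only [II]
    have hm : Measurable (fun z : (ENNReal × ENNReal) × (ℕ → ENNReal) =>
        H (z.1.2, scons z.1.1 z.2)) := by
      refine hH.comp ((measurable_snd.comp measurable_fst).prodMk ?_)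
      exact measurable_scons.comp ((measurable_fst.comp measurable_fst).prodMk measurable_snd)
    have h := II_measurable ν k _ hm
    rw [lintegral_congr fun t => ih (fun z => H (z.1, scons t z.2)) ?_]
    · exact lintegral_lintegral_swap h.aemeasurable
    · refine hH.comp (measurable_fst.prodMk ?_)
      exact (measurable_scons' t).comp measurable_snd

lemma II_extend (ν : Measure ENNReal) [SFinite ν] (k : ℕ) :
    ∀ (G : (ℕ → ENNReal) → ENNReal), Measurable G →
      (∀ x y, (∀ i < k, x i = y i) → G x = G y) →
      II ν (k + 1) G = II ν k G * ν Set.univ := by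
  induction k with
  | zero =>
    intro G _ h
    simp only [II]
    rw [lintegral_congr fun s => h (scons s fun _ => 0) (fun _ => 0) (by simp)]
    simp
  | succ k ih =>
    intro G hG h
    rw [II, II, ← lintegral_mul_const _ (II_measurable_cons ν k G hG)]
    refine lintegral_congr fun s => ?_
    refine ih _ (hG.comp (measurable_scons' s)) fun x y hxy => h _ _ ?_
    intro i hi
    cases i with
    | zero => rfl
    | succ n => exact hxy n (by omega)

lemma four_alg (A B C D : ENNReal) (h1 : A ≤ C) (h2 : B ≤ C) (h3 : A * B ≤ C * D) :
    A + B ≤ C + D := by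
  by_cases hC : C = ⊤
  · simp [hC]
  by_cases hD : D = ⊤
  · simp [hD]
  have hA : A ≠ ⊤ := ne_top_of_le_ne_top hC h1
  have hB : B ≠ ⊤ := ne_top_of_le_ne_top hC h2
  lift A to NNReal using hA
  lift B to NNReal using hB
  lift C to NNReal using hC
  lift D to NNReal using hD
  norm_cast at *
  have h1' : (A : ℝ) ≤ C := by exact_mod_cast h1
  have h2' : (B : ℝ) ≤ C := by exact_mod_cast h2
  have h3' : (A : ℝ) * B ≤ C * D := by exact_mod_cast h3
  have : (A : ℝ) + B ≤ C + D := by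
    rcases eq_or_lt_of_le C.coe_nonneg with h | h
    · have := D.coe_nonneg; linarith
    · have : (C : ℝ) * (A + B) ≤ C * (C + D) := by
        nlinarith [mul_nonneg (sub_nonneg.2 h1') (sub_nonneg.2 h2')]
      exact le_of_mul_le_mul_left this h
  exact_mod_cast this

lemma four_one (ν : Measure ENNReal) [SFinite ν] (S : Set ENNReal) (hS : ∀ᵐ a ∂ν, a ∈ S)
    (f1 f2 f3 f4 : ENNReal → ENNReal) (h1 : Measurable f1) (h2 : Measurable f2)
    (h3 : Measurable f3) (h4 : Measurable f4)
    (h : ∀ a ∈ S, ∀ b ∈ S, f1 a * f2 b ≤ f3 (a ⊔ b) * f4 (a ⊓ b)) :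
    (∫⁻ a, f1 a ∂ν) * (∫⁻ a, f2 a ∂ν) ≤ (∫⁻ a, f3 a ∂ν) * (∫⁻ a, f4 a ∂ν) := by
  have key : ∀ (f g : ENNReal → ENNReal), Measurable f → Measurable g →
      2 * ((∫⁻ a, f a ∂ν) * (∫⁻ a, g a ∂ν)) =
        ∫⁻ a, ∫⁻ b, (f a * g b + f b * g a) ∂ν ∂ν := by
    intro f g hf hg
    have e1 : ∀ a, ∫⁻ b, (f a * g b + f b * g a) ∂ν
        = f a * (∫⁻ b, g b ∂ν) + (∫⁻ b, f b ∂ν) * g a := by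
      intro a
      rw [lintegral_add_left (by fun_prop), lintegral_const_mul _ hg, lintegral_mul_const _ hf]
    simp_rw [e1]
    rw [lintegral_add_left (by fun_prop), lintegral_mul_const _ hf, lintegral_const_mul _ hg,
      two_mul]
  have : 2 * ((∫⁻ a, f1 a ∂ν) * (∫⁻ a, f2 a ∂ν)) ≤
      2 * ((∫⁻ a, f3 a ∂ν) * (∫⁻ a, f4 a ∂ν)) := by
    rw [key f1 f2 h1 h2, key f3 f4 h3 h4]
    refine lintegral_mono_ae ?_
    filter_upwards [hS] with a ha
    refine lintegral_mono_ae ?_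
    filter_upwards [hS] with b hb
    rcases le_total a b with hab | hab
    · have k1 := h a ha b hb
      have k2 := h b hb a ha
      have k3 := h a ha a ha
      have k4 := h b hb b hb
      simp only [sup_of_le_right hab, inf_of_le_left hab, sup_of_le_left hab,
        inf_of_le_right hab, sup_idem, inf_idem] at k1 k2 k3 k4
      rw [add_comm (f3 a * f4 b)]
      refine four_alg _ _ _ _ k1 k2 ?_
      calc f1 a * f2 b * (f1 b * f2 a) = (f1 a * f2 a) * (f1 b * f2 b) := by ring
        _ ≤ (f3 a * f4 a) * (f3 b * f4 b) := mul_le_mul' k3 k4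
        _ = _ := by ring
    · have k1 := h a ha b hb
      have k2 := h b hb a ha
      have k3 := h a ha a ha
      have k4 := h b hb b hb
      simp only [sup_of_le_right hab, inf_of_le_left hab, sup_of_le_left hab,
        inf_of_le_right hab, sup_idem, inf_idem] at k1 k2 k3 k4
      refine four_alg _ _ _ _ k1 k2 ?_
      calc f1 a * f2 b * (f1 b * f2 a) = (f1 a * f2 a) * (f1 b * f2 b) := by ring
        _ ≤ (f3 a * f4 a) * (f3 b * f4 b) := mul_le_mul' k3 k4
        _ = _ := by ring
  exact (ENNReal.mul_le_mul_iff_right (by simp) (by simp)).1 this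

lemma scons_sup (s t : ENNReal) (x y : ℕ → ENNReal) :
    scons s x ⊔ scons t y = scons (s ⊔ t) (x ⊔ y) := by
  ext i; cases i <;> rfl

lemma scons_inf (s t : ENNReal) (x y : ℕ → ENNReal) :
    scons s x ⊓ scons t y = scons (s ⊓ t) (x ⊓ y) := by
  ext i; cases i <;> rfl

/-- The four functions theorem for iterated integrals. -/
lemma four_II (ν : Measure ENNReal) [SFinite ν] (S : Set ENNReal) (hS : ∀ᵐ a ∂ν, a ∈ S) (k : ℕ) :
    ∀ (f1 f2 f3 f4 : (ℕ → ENNReal) → ENNReal), Measurable f1 → Measurable f2 →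
    Measurable f3 → Measurable f4 →
    (∀ x y, (∀ i < k, x i ∈ S) → (∀ i < k, y i ∈ S) → f1 x * f2 y ≤ f3 (x ⊔ y) * f4 (x ⊓ y)) →
    II ν k f1 * II ν k f2 ≤ II ν k f3 * II ν k f4 := by
  induction k with
  | zero =>
    intro f1 f2 f3 f4 _ _ _ _ h
    simpa [II] using h (fun _ => 0) (fun _ => 0) (by simp) (by simp)
  | succ k ih =>
    intro f1 f2 f3 f4 h1 h2 h3 h4 h
    refine four_one ν S hS _ _ _ _ (II_measurable_cons ν k f1 h1) (II_measurable_cons ν k f2 h2)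
      (II_measurable_cons ν k f3 h3) (II_measurable_cons ν k f4 h4) ?_
    intro a ha b hb
    refine ih _ _ _ _ (h1.comp (measurable_scons' _)) (h2.comp (measurable_scons' _))
      (h3.comp (measurable_scons' _)) (h4.comp (measurable_scons' _)) ?_
    intro x y hx hy
    have := h (scons a x) (scons b y) ?_ ?_
    · rwa [scons_sup, scons_inf] at this
    · intro i hi
      cases i with
      | zero => exact ha
      | succ n => exact hx n (by omega)
    · intro i hi
      cases i with
      | zero => exact hb
      | succ n => exact hy n (by omega)

/-- Concatenation of `x 0, …, x (k-1)`, `s`, `y`. -/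
def app : ℕ → (ℕ → ENNReal) → ENNReal → (ℕ → ENNReal) → (ℕ → ENNReal)
  | 0, _, s, y => scons s y
  | k + 1, x, s, y => scons (x 0) (app k (fun i => x (i + 1)) s y)

lemma app_lt (k : ℕ) : ∀ (x : ℕ → ENNReal) (s : ENNReal) (y : ℕ → ENNReal) (i : ℕ), i < k →
    app k x s y i = x i := by
  induction k with
  | zero => intro x s y i h; omega
  | succ k ih =>
    intro x s y i h
    cases i with
    | zero => rfl
    | succ n => exact ih _ s y n (by omega)

lemma app_eq (k : ℕ) : ∀ (x : ℕ → ENNReal) (s : ENNReal) (y : ℕ → ENNReal),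
    app k x s y k = s := by
  induction k with
  | zero => intro x s y; rfl
  | succ k ih => intro x s y; exact ih _ s y

lemma app_gt (k : ℕ) : ∀ (x : ℕ → ENNReal) (s : ENNReal) (y : ℕ → ENNReal) (i : ℕ),
    app k x s y (k + 1 + i) = y i := by
  induction k with
  | zero => intro x s y i; rw [Nat.add_comm (0 + 1)]; rfl
  | succ k ih =>
    intro x s y i
    have := ih (fun i => x (i + 1)) s y i
    rw [show k + 1 + 1 + i = (k + 1 + i) + 1 by omega]
    exact this

lemma measurable_app (k : ℕ) : Measurable (fun z : (ENNReal × (ℕ → ENNReal)) × (ℕ → ENNReal) =>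
    app k z.1.2 z.1.1 z.2) := by
  refine measurable_pi_iff.2 fun i => ?_
  rcases lt_trichotomy i k with h | h | h
  · simp_rw [app_lt k _ _ _ i h]
    exact (measurable_pi_apply i).comp (measurable_snd.comp measurable_fst)
  · subst h
    simp_rw [app_eq]
    exact measurable_fst.comp measurable_fst
  · obtain ⟨j, rfl⟩ := Nat.exists_eq_add_of_le (Nat.succ_le_of_lt h)
    simp_rw [app_gt]
    exact (measurable_pi_apply j).comp measurable_snd

lemma II_split (ν : Measure ENNReal) (k b : ℕ) :
    ∀ (G : (ℕ → ENNReal) → ENNReal),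
      II ν (k + 1 + b) G = II ν k (fun x => ∫⁻ s, II ν b (fun y => G (app k x s y)) ∂ν) := by
  induction k with
  | zero => intro G; rw [show 0 + 1 + b = b + 1 by omega]; rfl
  | succ k ih =>
    intro G
    rw [show k + 1 + 1 + b = (k + 1 + b) + 1 by omega]
    simp only [II]
    refine lintegral_congr fun s => ?_
    rw [ih]
    rfl

lemma II_restrict (ν : Measure ENNReal) [SFinite ν] (S : Set ENNReal) (hS : MeasurableSet S)
    (k : ℕ) : ∀ (G : (ℕ → ENNReal) → ENNReal), Measurable G →
      II ν k (fun x => if ∀ i < k, x i ∈ S then G x else 0) = II (ν.restrict S) k G := by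
  induction k with
  | zero => intro G _; simp [II]
  | succ k ih =>
    intro G hG
    simp only [II]
    rw [← lintegral_indicator hS]
    refine lintegral_congr fun s => ?_
    by_cases hs : s ∈ S
    · rw [Set.indicator_of_mem hs, ← ih (fun x => G (scons s x)) (hG.comp (measurable_scons' s))]
      congr 1
      ext x
      have : (∀ i < k + 1, scons s x i ∈ S) ↔ ∀ i < k, x i ∈ S := by
        constructor
        · intro h i hi; exact h (i + 1) (by omega)
        · intro h i hi
          cases i with
          | zero => exact hs
          | succ n => exact h n (by omega)
      simp only [this]
    · rw [Set.indicator_of_notMem hs]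
      have : ∀ x, ¬ (∀ i < k + 1, scons s x i ∈ S) := fun x h => hs (h 0 (by omega))
      simp only [this, if_false]
      have := II_const_mul ν k 0 (fun _ => 0) measurable_const
      simpa using this


/-! ### The core correlation inequality on a path -/

/-- Minimum of the coordinates `i, …, j-1`. -/
def Mn (x : ℕ → ENNReal) (i j : ℕ) : ENNReal := (Finset.Ico i j).inf x

/-- Product of all minima over non-adjacent pairs of the path with `p` edges. -/
def kap (p : ℕ) (x : ℕ → ENNReal) : ENNReal :=
  ∏ i ∈ Finset.range (p + 1), ∏ j ∈ Finset.range (p + 1), if i + 2 ≤ j then Mn x i j else 1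

def Phi (φ : ENNReal → ENNReal) (p : ℕ) (x : ℕ → ENNReal) : ENNReal :=
  ∏ j ∈ Finset.range p, φ (Mn x 0 (j + 1))

def PhiR (φ : ENNReal → ENNReal) (p : ℕ) (x : ℕ → ENNReal) : ENNReal :=
  ∏ i ∈ Finset.range p, φ (Mn x i p)

lemma measurable_finset_inf_apply {ι : Type*} (S : Finset ι) :
    Measurable (fun x : ι → ENNReal => S.inf x) := by
  induction S using Finset.induction_on with
  | empty => simp
  | insert a s ha ih =>
    simp only [Finset.inf_insert]
    exact (measurable_pi_apply a).inf ih

lemma measurable_Mn (i j : ℕ) : Measurable (fun x => Mn x i j) :=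
  measurable_finset_inf_apply (Finset.Ico i j)

lemma measurable_kap (p : ℕ) : Measurable (kap p) := by
  refine Finset.measurable_prod _ fun i _ => Finset.measurable_prod _ fun j _ => ?_
  by_cases h : i + 2 ≤ j
  · simpa [h] using measurable_Mn i j
  · simp [h]

lemma measurable_Phi (φ : ENNReal → ENNReal) (hφ : Monotone φ) (p : ℕ) : Measurable (Phi φ p) :=
  Finset.measurable_prod _ fun _ _ => hφ.measurable.comp (measurable_Mn _ _)

lemma measurable_PhiR (φ : ENNReal → ENNReal) (hφ : Monotone φ) (p : ℕ) :
    Measurable (PhiR φ p) :=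
  Finset.measurable_prod _ fun _ _ => hφ.measurable.comp (measurable_Mn _ _)

lemma Mn_mono {x y : ℕ → ENNReal} (h : x ≤ y) (i j : ℕ) : Mn x i j ≤ Mn y i j :=
  Finset.inf_mono_fun fun k _ => h k

lemma Mn_congr {x y : ℕ → ENNReal} {i j : ℕ} (h : ∀ l, i ≤ l → l < j → x l = y l) :
    Mn x i j = Mn y i j :=
  Finset.inf_congr rfl fun k hk => h k (Finset.mem_Ico.1 hk).1 (Finset.mem_Ico.1 hk).2

lemma Mn_inf (x y : ℕ → ENNReal) (i j : ℕ) : Mn (x ⊓ y) i j = Mn x i j ⊓ Mn y i j :=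
  le_antisymm (le_inf (Mn_mono inf_le_left _ _) (Mn_mono inf_le_right _ _))
    (Finset.le_inf fun k hk => le_inf (inf_le_left.trans (Finset.inf_le hk))
      (inf_le_right.trans (Finset.inf_le hk)))

lemma Mn_super (x y : ℕ → ENNReal) (i j : ℕ) :
    Mn x i j * Mn y i j ≤ Mn (x ⊔ y) i j * Mn (x ⊓ y) i j := by
  rw [Mn_inf]
  rcases le_total (Mn x i j) (Mn y i j) with h | h
  · rw [inf_of_le_left h, mul_comm]
    exact mul_le_mul' (Mn_mono le_sup_right _ _) le_rfl
  · rw [inf_of_le_right h]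
    exact mul_le_mul' (Mn_mono le_sup_left _ _) le_rfl

lemma kap_super (p : ℕ) (x y : ℕ → ENNReal) :
    kap p x * kap p y ≤ kap p (x ⊔ y) * kap p (x ⊓ y) := by
  unfold kap
  rw [← Finset.prod_mul_distrib, ← Finset.prod_mul_distrib]
  refine Finset.prod_le_prod' fun i _ => ?_
  rw [← Finset.prod_mul_distrib, ← Finset.prod_mul_distrib]
  refine Finset.prod_le_prod' fun j _ => ?_
  by_cases h : i + 2 ≤ j
  · simpa [h] using Mn_super x y i j
  · simp [h]

lemma Phi_mono (φ : ENNReal → ENNReal) (hφ : Monotone φ) (p : ℕ) : Monotone (Phi φ p) :=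
  fun _ _ h => Finset.prod_le_prod' fun _ _ => hφ (Mn_mono h _ _)

lemma kap_add (k d : ℕ) : ∃ H : (ℕ → ENNReal) → ENNReal, Monotone H ∧
    ∀ x, kap (k + d) x = kap k x * H x := by
  induction d with
  | zero => exact ⟨fun _ => 1, fun _ _ _ => le_rfl, fun x => by simp⟩
  | succ d ih =>
    obtain ⟨H, hH, h⟩ := ih
    refine ⟨fun x => H x * ∏ i ∈ Finset.range (k + d + 1),
      if i + 2 ≤ k + d + 1 then Mn x i (k + d + 1) else 1, ?_, ?_⟩
    · intro x y hxy
      refine mul_le_mul' (hH hxy) (Finset.prod_le_prod' fun i _ => ?_)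
      split_ifs
      · exact Mn_mono hxy _ _
      · exact le_rfl
    · intro x
      rw [← mul_assoc, ← h x]
      unfold kap
      rw [show k + (d + 1) + 1 = (k + d + 1) + 1 by omega, Finset.prod_range_succ]
      simp_rw [Finset.prod_range_succ _ (k + d + 1)]
      rw [Finset.prod_mul_distrib]
      have : ∏ j ∈ Finset.range (k + d + 1),
          (if k + d + 1 + 2 ≤ j then Mn x (k + d + 1) j else 1) = 1 := by
        refine Finset.prod_eq_one fun j hj => ?_
        have := Finset.mem_range.1 hj
        rw [if_neg (by omega)]
      rw [this, if_neg (by omega)]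
      ring

lemma kap_le_one (p : ℕ) (x : ℕ → ENNReal) (hx : ∀ i < p, x i ≤ 1) : kap p x ≤ 1 := by
  refine Finset.prod_le_one' fun i hi => Finset.prod_le_one' fun j hj => ?_
  have h1 := Finset.mem_range.1 hi
  have h2 := Finset.mem_range.1 hj
  split_ifs with h
  · exact (Finset.inf_le (Finset.mem_Ico.2 ⟨le_rfl, by omega⟩)).trans (hx i (by omega))
  · exact le_rfl

lemma Phi_le_one (φ : ENNReal → ENNReal) (hφ : ∀ z, φ z ≤ 1) (p : ℕ) (x : ℕ → ENNReal) :
    Phi φ p x ≤ 1 := Finset.prod_le_one' fun _ _ => hφ _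

lemma II_one_le (ν : Measure ENNReal) (hν : ν Set.univ ≤ 1) (k : ℕ) :
    II ν k (fun _ => 1) ≤ 1 := by
  induction k with
  | zero => simp [II]
  | succ k ih =>
    simp only [II]
    calc ∫⁻ _, II ν k (fun _ => 1) ∂ν ≤ ∫⁻ _, 1 ∂ν := lintegral_mono fun _ => ih
      _ ≤ 1 := by simpa using hν

/-- FKG on the path. -/
lemma fkg_path (ν : Measure ENNReal) [SFinite ν] (φ ψ : ENNReal → ENNReal) (hφ : Monotone φ)
    (hψ : Monotone ψ) (k : ℕ) :
    II ν k (fun x => kap k x * Phi φ k x) * II ν k (fun x => kap k x * Phi ψ k x) ≤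
      II ν k (fun x => kap k x * (Phi φ k x * Phi ψ k x)) * II ν k (kap k) := by
  have mk := measurable_kap k
  have m1 := measurable_Phi φ hφ k
  have m2 := measurable_Phi ψ hψ k
  refine four_II ν Set.univ (by simp) k _ _ _ _ (mk.mul m1) (mk.mul m2) (mk.mul (m1.mul m2)) mk ?_
  intro x y _ _
  calc kap k x * Phi φ k x * (kap k y * Phi ψ k y)
      = (kap k x * kap k y) * (Phi φ k x * Phi ψ k y) := by ring
    _ ≤ (kap k (x ⊔ y) * kap k (x ⊓ y)) * (Phi φ k (x ⊔ y) * Phi ψ k (x ⊔ y)) :=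
        mul_le_mul' (kap_super k x y) (mul_le_mul' (Phi_mono φ hφ k le_sup_left)
          (Phi_mono ψ hψ k le_sup_right))
    _ = _ := by ring

lemma II_extend_add (ν : Measure ENNReal) [SFinite ν] (k d : ℕ)
    (G : (ℕ → ENNReal) → ENNReal) (hG : Measurable G)
    (h : ∀ x y, (∀ i < k, x i = y i) → G x = G y) :
      II ν (k + d) G = II ν k G * ν Set.univ ^ d := by
  induction d with
  | zero => simp
  | succ d ih =>
    rw [← Nat.add_assoc, II_extend ν (k + d) G hG (fun x y hxy => h x y fun i hi => hxy i (by omega)),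
      ih, pow_succ, mul_assoc]

lemma kap_dep (k : ℕ) (x y : ℕ → ENNReal) (h : ∀ i < k, x i = y i) : kap k x = kap k y := by
  refine Finset.prod_congr rfl fun i hi => Finset.prod_congr rfl fun j hj => ?_
  have h1 := Finset.mem_range.1 hi
  have h2 := Finset.mem_range.1 hj
  rw [Mn_congr fun l _ hl => h l (by omega)]

lemma Phi_dep (φ : ENNReal → ENNReal) (k : ℕ) (x y : ℕ → ENNReal) (h : ∀ i < k, x i = y i) :
    Phi φ k x = Phi φ k y := by
  refine Finset.prod_congr rfl fun j hj => ?_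
  have h2 := Finset.mem_range.1 hj
  rw [Mn_congr fun l _ hl => h l (by omega)]

/-- Monotonicity in the length of the path. -/
lemma mono_path (ν : Measure ENNReal) [IsFiniteMeasure ν] (s : ENNReal)
    (hs : ∀ᵐ a ∂ν, a ∈ Set.Ioi s) (φ : ENNReal → ENNReal)
    (hφ : Monotone φ) (k d : ℕ) :
    II ν k (fun x => kap k x * Phi φ k x) * φ s ^ d * II ν (k + d) (kap (k + d)) ≤
      II ν (k + d) (fun x => kap (k + d) x * Phi φ (k + d) x) * II ν k (kap k) := by
  rcases Nat.eq_zero_or_pos d with rfl | hd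
  · simp
  by_cases h0 : ν Set.univ = 0
  · have : ν = 0 := Measure.measure_univ_eq_zero.1 h0
    obtain ⟨d, rfl⟩ := Nat.exists_eq_succ_of_ne_zero hd.ne'
    have : II ν (k + (d + 1)) (kap (k + (d + 1))) = 0 := by
      rw [this, ← Nat.add_assoc]; simp [II]
    simp [this]
  have mk := measurable_kap k
  have mk' := measurable_kap (k + d)
  have m1 := measurable_Phi φ hφ k
  have m2 := measurable_Phi φ hφ (k + d)
  obtain ⟨H, hH, hk⟩ := kap_add k d
  have key := four_II ν (Set.Ioi s) hs (k + d) (fun x => kap k x * Phi φ k x * φ s ^ d)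
    (kap (k + d)) (fun x => kap (k + d) x * Phi φ (k + d) x) (kap k)
    ((mk.mul m1).mul measurable_const) mk' (mk'.mul m2) mk (by
      intro x y hx hy
      have hP : Phi φ k x * φ s ^ d ≤ Phi φ (k + d) (x ⊔ y) := by
        unfold Phi
        rw [Finset.prod_range_add]
        refine mul_le_mul' (Phi_mono φ hφ k le_sup_left) ?_
        calc φ s ^ d = ∏ _i ∈ Finset.range d, φ s := by simp
          _ ≤ _ := Finset.prod_le_prod' fun i hi => hφ ?_
        have hi' := Finset.mem_range.1 hi
        refine Finset.le_inf fun l hl => ?_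
        have := (Finset.mem_Ico.1 hl).2
        exact (le_of_lt (hx l (by omega))).trans (le_sup_left (a := x l))
      calc kap k x * Phi φ k x * φ s ^ d * kap (k + d) y
          = (kap k x * kap k y) * H y * (Phi φ k x * φ s ^ d) := by rw [hk]; ring
        _ ≤ (kap k (x ⊔ y) * kap k (x ⊓ y)) * H (x ⊔ y) * Phi φ (k + d) (x ⊔ y) :=
          mul_le_mul' (mul_le_mul' (kap_super k x y) (hH le_sup_right)) hP
        _ = _ := by rw [hk]; ring)
  rw [II_extend_add ν k d (kap k) mk (kap_dep k),
    II_extend_add ν k d (fun x => kap k x * Phi φ k x * φ s ^ d) ((mk.mul m1).mul measurable_const)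
      (fun x y h => by rw [kap_dep k x y h, Phi_dep φ k x y h]),
    II_mul_const ν k _ (fun x => kap k x * Phi φ k x) (mk.mul m1)] at key
  have hm0 : ν Set.univ ^ d ≠ 0 := pow_ne_zero _ h0
  have hm1 : ν Set.univ ^ d ≠ ⊤ := ENNReal.pow_ne_top (measure_ne_top _ _)
  refine (ENNReal.mul_le_mul_iff_right hm0 hm1).1 ?_
  calc _ = _ := ?_
    _ ≤ _ := key
    _ = _ := ?_
  · ring
  · ring

lemma D_alg (ak ab bk bb ck cb pk pb : ENNReal) (hpk : pk ≠ ⊤) (hpb : pb ≠ ⊤)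
    (h1 : ak * bk ≤ ck * pk) (h2 : ab * bb ≤ cb * pb) (h3 : ak * pb ≤ ab * pk)
    (h4 : bk * pb ≤ bb * pk) (l1 : ak ≤ pk) (l2 : ab ≤ pb) (l3 : bk ≤ pk) (l4 : bb ≤ pb)
    (l5 : ck ≤ pk) (l6 : cb ≤ pb) :
    ak * bb + ab * bk ≤ ck * pb + cb * pk := by
  by_cases k0 : pk = 0
  · subst k0
    have : ak = 0 := le_antisymm l1 zero_le
    have : bk = 0 := le_antisymm l3 zero_le
    simp [*]
  by_cases b0 : pb = 0
  · subst b0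
    have : ab = 0 := le_antisymm l2 zero_le
    have : bb = 0 := le_antisymm l4 zero_le
    simp [*]
  lift pk to NNReal using hpk
  lift pb to NNReal using hpb
  lift ak to NNReal using ne_top_of_le_ne_top ENNReal.coe_ne_top l1
  lift ab to NNReal using ne_top_of_le_ne_top ENNReal.coe_ne_top l2
  lift bk to NNReal using ne_top_of_le_ne_top ENNReal.coe_ne_top l3
  lift bb to NNReal using ne_top_of_le_ne_top ENNReal.coe_ne_top l4
  lift ck to NNReal using ne_top_of_le_ne_top ENNReal.coe_ne_top l5
  lift cb to NNReal using ne_top_of_le_ne_top ENNReal.coe_ne_top l6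
  norm_cast at *
  have h1' : (ak : ℝ) * bk ≤ ck * pk := by exact_mod_cast h1
  have h2' : (ab : ℝ) * bb ≤ cb * pb := by exact_mod_cast h2
  have h3' : (ak : ℝ) * pb ≤ ab * pk := by exact_mod_cast h3
  have h4' : (bk : ℝ) * pb ≤ bb * pk := by exact_mod_cast h4
  have hk : (0 : ℝ) < pk := by exact_mod_cast pos_iff_ne_zero.2 k0
  have hb : (0 : ℝ) < pb := by exact_mod_cast pos_iff_ne_zero.2 b0
  have : (ak : ℝ) * bb + ab * bk ≤ ck * pb + cb * pk := by
    have e : ((pk : ℝ) * pb) * (ak * bb + ab * bk) ≤ (pk * pb) * (ck * pb + cb * pk) := by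
      have e1 := mul_nonneg (sub_nonneg.2 h3') (sub_nonneg.2 h4')
      have e2 := mul_le_mul_of_nonneg_left h1' (sq_nonneg (pb : ℝ))
      have e3 := mul_le_mul_of_nonneg_left h2' (sq_nonneg (pk : ℝ))
      nlinarith
    exact le_of_mul_le_mul_left e (mul_pos hk hb)
  exact_mod_cast this

/-- Symmetrised inequality for the two pieces of lengths `k ≤ b`. -/
lemma D_path_aux (ν : Measure ENNReal) [IsFiniteMeasure ν] (hν : ν Set.univ ≤ 1) (s : ENNReal)
    (hs : ∀ᵐ a ∂ν, a ∈ Set.Ioi s) (h1 : ∀ᵐ a ∂ν, a ≤ 1)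
    (φ ψ : ENNReal → ENNReal) (hφ : Monotone φ) (hψ : Monotone ψ)
    (hφ1 : ∀ z, φ z ≤ 1) (hψ1 : ∀ z, ψ z ≤ 1) (k d e : ℕ) :
    (II ν k (fun x => kap k x * Phi φ k x) * φ s ^ (d + e)) *
        (II ν (k + d) (fun x => kap (k + d) x * Phi ψ (k + d) x) * ψ s ^ e) +
      (II ν (k + d) (fun x => kap (k + d) x * Phi φ (k + d) x) * φ s ^ e) *
        (II ν k (fun x => kap k x * Phi ψ k x) * ψ s ^ (d + e)) ≤
    (II ν k (fun x => kap k x * (Phi φ k x * Phi ψ k x)) * (φ s ^ (d + e) * ψ s ^ (d + e))) *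
        II ν (k + d) (kap (k + d)) +
      (II ν (k + d) (fun x => kap (k + d) x * (Phi φ (k + d) x * Phi ψ (k + d) x)) *
        (φ s ^ e * ψ s ^ e)) * II ν k (kap k) := by
  have P1 : ∀ k, II ν k (kap k) ≠ ⊤ := fun k =>
    ne_top_of_le_ne_top ENNReal.one_ne_top
      ((II_mono ν {a | a ≤ 1} h1 k _ _ fun x hx => kap_le_one k x hx).trans (II_one_le ν hν k))
  have L : ∀ (k : ℕ) (F : (ℕ → ENNReal) → ENNReal) (c : ENNReal), (∀ x, F x ≤ 1) → c ≤ 1 →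
      II ν k (fun x => kap k x * F x) * c ≤ II ν k (kap k) := by
    intro k F c hF hc
    refine (mul_le_of_le_one_right zero_le hc).trans ?_
    exact II_mono ν Set.univ (by simp) k _ _ fun x _ => mul_le_of_le_one_right zero_le (hF x)
  have p1 : ∀ (φ : ENNReal → ENNReal), (∀ z, φ z ≤ 1) → ∀ e : ℕ, φ s ^ e ≤ 1 :=
    fun φ h e => pow_le_one₀ zero_le (h s)
  refine D_alg _ _ _ _ _ _ _ _ (P1 k) (P1 (k + d)) ?_ ?_ ?_ ?_
    (L k _ _ (Phi_le_one φ hφ1 k) (p1 φ hφ1 _)) (L (k + d) _ _ (Phi_le_one φ hφ1 _) (p1 φ hφ1 _))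
    (L k _ _ (Phi_le_one ψ hψ1 k) (p1 ψ hψ1 _)) (L (k + d) _ _ (Phi_le_one ψ hψ1 _) (p1 ψ hψ1 _))
    (L k _ _ (fun x => mul_le_one' (Phi_le_one φ hφ1 k x) (Phi_le_one ψ hψ1 k x))
      (mul_le_one' (p1 φ hφ1 _) (p1 ψ hψ1 _)))
    (L _ _ _ (fun x => mul_le_one' (Phi_le_one φ hφ1 _ x) (Phi_le_one ψ hψ1 _ x))
      (mul_le_one' (p1 φ hφ1 _) (p1 ψ hψ1 _)))
  · have := mul_le_mul_left (fkg_path ν φ ψ hφ hψ k) (φ s ^ (d + e) * ψ s ^ (d + e))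
    calc _ = _ := ?_
      _ ≤ _ := this
      _ = _ := ?_
    · ring
    · ring
  · have := mul_le_mul_left (fkg_path ν φ ψ hφ hψ (k + d)) (φ s ^ e * ψ s ^ e)
    calc _ = _ := ?_
      _ ≤ _ := this
      _ = _ := ?_
    · ring
    · ring
  · have := mul_le_mul_left (mono_path ν s hs φ hφ k d) (φ s ^ e)
    calc _ = _ := ?_
      _ ≤ _ := this
      _ = _ := ?_
    · ring
    · ring
  · have := mul_le_mul_left (mono_path ν s hs ψ hψ k d) (ψ s ^ e)
    calc _ = _ := ?_
      _ ≤ _ := this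
      _ = _ := ?_
    · ring
    · ring


/-! ### Cutting at the minimum -/

def cc (k b : ℕ) (s : ENNReal) : ENNReal :=
  ∏ i ∈ Finset.range (k + 1), ∏ j ∈ Finset.range (b + 1), if i + 2 ≤ k + 1 + j then s else 1

lemma cc_symm (k b : ℕ) (s : ENNReal) : cc k b s = cc b k s := by
  have h : ∀ k b, cc k b s =
      ∏ i ∈ Finset.range (k + 1), ∏ j ∈ Finset.range (b + 1), if 1 ≤ i + j then s else 1 := by
    intro k b
    unfold cc
    rw [← Finset.prod_range_reflect]
    refine Finset.prod_congr rfl fun i hi => Finset.prod_congr rfl fun j hj => ?_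
    have h1 := Finset.mem_range.1 hi
    have : (k + 1 - 1 - i + 2 ≤ k + 1 + j) ↔ 1 ≤ i + j := by omega
    simp only [this]
  rw [h, h, Finset.prod_comm]
  simp only [add_comm]

lemma measurable_cc (k b : ℕ) : Measurable (cc k b) := by
  refine Finset.measurable_prod _ fun i _ => Finset.measurable_prod _ fun j _ => ?_
  by_cases h : i + 2 ≤ k + 1 + j
  · simp only [h, if_true]; exact measurable_id
  · simp [h]

def reg (p k : ℕ) (z : ℕ → ENNReal) : Prop :=
  (∀ i < k, z k < z i) ∧ ∀ i, k < i → i < p → z k ≤ z i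

lemma measurable_reg (p k : ℕ) : MeasurableSet {z | reg p k z} := by
  unfold reg
  simp only [Set.ofPred_and, Set.ofPred_forall]
  refine MeasurableSet.inter ?_ ?_
  · exact MeasurableSet.iInter fun i => MeasurableSet.iInter fun _ =>
      measurableSet_lt (measurable_pi_apply k) (measurable_pi_apply i)
  · exact MeasurableSet.iInter fun i => MeasurableSet.iInter fun _ => MeasurableSet.iInter fun _ =>
      measurableSet_le (measurable_pi_apply k) (measurable_pi_apply i)

lemma sum_reg (p : ℕ) (hp : 0 < p) (z : ℕ → ENNReal) (a : ENNReal) :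
    ∑ k ∈ Finset.range p, (if reg p k z then a else 0) = a := by
  have ex : ∃ k, k < p ∧ ∀ i < p, z k ≤ z i := by
    obtain ⟨k, hk, h⟩ := Finset.exists_min_image (Finset.range p) z ⟨0, by simpa using hp⟩
    exact ⟨k, by simpa using hk, fun i hi => h i (by simpa using hi)⟩
  have h0 := Nat.find_spec ex
  have h1 : ∀ i < Nat.find ex, _ := fun i hi => Nat.find_min ex hi
  generalize Nat.find ex = k at *
  rw [Finset.sum_eq_single k]
  · refine if_pos ⟨fun i hi => ?_, fun i _ hi => h0.2 i hi⟩
    by_contra hc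
    exact h1 i hi ⟨by omega, fun j hj => (not_lt.1 hc).trans (h0.2 j hj)⟩
  · intro j hj hne
    refine if_neg fun hr => ?_
    have hj := Finset.mem_range.1 hj
    rcases lt_or_gt_of_ne hne with h | h
    · exact h1 j h ⟨hj, fun i hi => (hr.2 k h h0.1).trans (h0.2 i hi)⟩
    · exact absurd (hr.1 k h) (not_lt.2 (h0.2 j hj))
  · intro h; exact absurd (Finset.mem_range.2 h0.1) h

def allIn (k : ℕ) (S : Set ENNReal) (x : ℕ → ENNReal) : Prop := ∀ i < k, x i ∈ S

lemma II_restrict' (ν : Measure ENNReal) [SFinite ν] (S : Set ENNReal) (hS : MeasurableSet S)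
    (k : ℕ) (G : (ℕ → ENNReal) → ENNReal) (hG : Measurable G) :
      II ν k (fun x => if allIn k S x then G x else 0) = II (ν.restrict S) k G := by
  rw [← II_restrict ν S hS k G hG]
  unfold allIn
  congr!

lemma measurable_II_Ioi (μ : Measure ENNReal) [IsFiniteMeasure μ] (k : ℕ)
    (G : (ℕ → ENNReal) → ENNReal) (hG : Measurable G) :
    Measurable (fun s => II (μ.restrict (Set.Ioi s)) k G) := by
  have : (fun s => II (μ.restrict (Set.Ioi s)) k G) =
      fun s => II μ k (fun x => if allIn k (Set.Ioi s) x then G x else 0) := by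
    ext s
    rw [II_restrict' μ _ measurableSet_Ioi k G hG]
  rw [this]
  refine II_measurable μ k (fun z : ENNReal × (ℕ → ENNReal) =>
    if allIn k (Set.Ioi z.1) z.2 then G z.2 else 0) ?_
  refine Measurable.ite ?_ (hG.comp measurable_snd) measurable_const
  simp only [allIn, Set.ofPred_forall]
  exact MeasurableSet.iInter fun i => MeasurableSet.iInter fun _ =>
      measurableSet_lt measurable_fst ((measurable_pi_apply i).comp measurable_snd)

lemma reg_app (k b : ℕ) (x y : ℕ → ENNReal) (s : ENNReal) :
    reg (k + 1 + b) k (app k x s y) ↔ (∀ i < k, x i ∈ Set.Ioi s) ∧ ∀ i < b, y i ∈ Set.Ici s := by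
  unfold reg
  rw [app_eq]
  refine and_congr ?_ ?_
  · refine forall₂_congr fun i hi => ?_
    rw [app_lt k x s y i hi]; rfl
  · constructor
    · intro h i hi
      have := h (k + 1 + i) (by omega) (by omega)
      rwa [app_gt] at this
    · intro h i h1 h2
      obtain ⟨j, rfl⟩ := Nat.exists_eq_add_of_le (show k + 1 ≤ i by omega)
      rw [app_gt]
      exact h j (by omega)

lemma II_cut (μ : Measure ENNReal) [IsFiniteMeasure μ] [NullSingletonClass μ] (k b : ℕ)
    (F G1 G2 : (ℕ → ENNReal) → ENNReal) (h : ENNReal → ENNReal)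
    (m1 : Measurable G1) (m2 : Measurable G2) (mh : Measurable h)
    (hF : ∀ x y s, (∀ i < k, x i ∈ Set.Ioi s) → (∀ i < b, y i ∈ Set.Ici s) →
      F (app k x s y) = h s * G1 x * G2 y) :
    II μ (k + 1 + b) (fun z => if reg (k + 1 + b) k z then F z else 0) =
      ∫⁻ s, h s * II (μ.restrict (Set.Ioi s)) k G1 * II (μ.restrict (Set.Ioi s)) b G2 ∂μ := by
  rw [II_split]
  have e1 : ∀ x s, II μ b (fun y => if reg (k + 1 + b) k (app k x s y) then F (app k x s y) else 0)
      = (h s * (if allIn k (Set.Ioi s) x then G1 x else 0)) *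
        II (μ.restrict (Set.Ioi s)) b G2 := by
    intro x s
    rw [Measure.restrict_congr_set (Ioi_ae_eq_Ici (a := s)), ← II_restrict' μ _ measurableSet_Ici b G2 m2, ← II_const_mul]
    · refine II_congr μ Set.univ (by simp) b _ _ fun y _ => ?_
      simp only [reg_app]
      by_cases c1 : allIn k (Set.Ioi s) x
      · by_cases c2 : allIn b (Set.Ici s) y
        · rw [if_pos ⟨c1, c2⟩, if_pos c1, if_pos c2, hF x y s c1 c2]
        · rw [if_neg (fun h => c2 h.2), if_neg c2, mul_zero]
      · rw [if_neg (fun h => c1 h.1), if_neg c1, mul_zero, zero_mul]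
    · refine Measurable.ite ?_ m2 measurable_const
      simp only [allIn, Set.ofPred_forall]
      exact MeasurableSet.iInter fun i => MeasurableSet.iInter fun _ =>
        measurableSet_le measurable_const (measurable_pi_apply i)
  simp_rw [e1]
  have mR := measurable_II_Ioi μ b G2 m2
  have mI : Measurable (fun z : ENNReal × (ℕ → ENNReal) =>
      if allIn k (Set.Ioi z.1) z.2 then G1 z.2 else 0) := by
    refine Measurable.ite ?_ (m1.comp measurable_snd) measurable_const
    simp only [allIn, Set.ofPred_forall]
    exact MeasurableSet.iInter fun i => MeasurableSet.iInter fun _ =>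
      measurableSet_lt measurable_fst ((measurable_pi_apply i).comp measurable_snd)
  rw [II_swap μ μ k (fun z : ENNReal × (ℕ → ENNReal) =>
    h z.1 * (if allIn k (Set.Ioi z.1) z.2 then G1 z.2 else 0) *
      II (μ.restrict (Set.Ioi z.1)) b G2)
    (((mh.comp measurable_fst).mul mI).mul (mR.comp measurable_fst))]
  refine lintegral_congr fun s => ?_
  have mI' : Measurable (fun x : ℕ → ENNReal => if allIn k (Set.Ioi s) x then G1 x else 0) :=
    mI.comp (measurable_const.prodMk measurable_id)
  dsimp only
  rw [II_mul_const μ k _ (fun x => h s * (if allIn k (Set.Ioi s) x then G1 x else 0))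
    (measurable_const.mul mI'), II_const_mul μ k _ _ mI', II_restrict' μ _ measurableSet_Ioi k G1 m1]

lemma II_regions (μ : Measure ENNReal) [IsFiniteMeasure μ] (p : ℕ) (hp : 0 < p)
    (F : (ℕ → ENNReal) → ENNReal) (mF : Measurable F) :
    II μ p F = ∑ k ∈ Finset.range p, II μ p (fun z => if reg p k z then F z else 0) := by
  rw [← II_sum μ p (Finset.range p) (fun k z => if reg p k z then F z else 0)
    (fun k => Measurable.ite (measurable_reg p k) mF measurable_const)]
  refine II_congr μ Set.univ (by simp) p _ _ fun z _ => ?_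
  rw [sum_reg p hp]

section region
variable {k b : ℕ} {x y : ℕ → ENNReal} {s : ENNReal}

lemma Mn_app_left {i j : ℕ} (hj : j ≤ k) : Mn (app k x s y) i j = Mn x i j :=
  Mn_congr fun l _ hl => app_lt k x s y l (by omega)

lemma Mn_app_right {i j : ℕ} : Mn (app k x s y) (k + 1 + i) (k + 1 + j) = Mn y i j := by
  unfold Mn
  refine le_antisymm (Finset.le_inf fun l hl => ?_) (Finset.le_inf fun l hl => ?_)
  · have := Finset.mem_Ico.1 hl
    rw [← app_gt k x s y l]
    exact Finset.inf_le (Finset.mem_Ico.2 (by omega))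
  · have := Finset.mem_Ico.1 hl
    obtain ⟨l, rfl⟩ := Nat.exists_eq_add_of_le (show k + 1 ≤ l by omega)
    rw [app_gt]
    exact Finset.inf_le (Finset.mem_Ico.2 (by omega))

lemma Mn_app_mid (h1 : ∀ i < k, x i ∈ Set.Ioi s) (h2 : ∀ i < b, y i ∈ Set.Ici s)
    {i j : ℕ} (hi : i ≤ k) (hj : k < j) (hj' : j ≤ k + 1 + b) : Mn (app k x s y) i j = s := by
  refine le_antisymm ?_ (Finset.le_inf fun l hl => ?_)
  · conv_rhs => rw [← app_eq k x s y]
    exact Finset.inf_le (Finset.mem_Ico.2 ⟨hi, hj⟩)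
  · have := Finset.mem_Ico.1 hl
    rcases lt_trichotomy l k with h | h | h
    · rw [app_lt k x s y l h]; exact le_of_lt (h1 l h)
    · subst h; rw [app_eq]
    · obtain ⟨l, rfl⟩ := Nat.exists_eq_add_of_le (show k + 1 ≤ l by omega)
      rw [app_gt]
      exact h2 l (by omega)

lemma kap_app (h1 : ∀ i < k, x i ∈ Set.Ioi s) (h2 : ∀ i < b, y i ∈ Set.Ici s) :
    kap (k + 1 + b) (app k x s y) = cc k b s * kap k x * kap b y := by
  unfold kap cc
  rw [show k + 1 + b + 1 = (k + 1) + (b + 1) by omega, Finset.prod_range_add]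
  simp_rw [Finset.prod_range_add _ (k + 1) (b + 1)]
  rw [Finset.prod_mul_distrib, Finset.prod_mul_distrib]
  have e3 : ∏ i ∈ Finset.range (b + 1), ∏ j ∈ Finset.range (k + 1),
      (if k + 1 + i + 2 ≤ j then Mn (app k x s y) (k + 1 + i) j else 1) = 1 := by
    refine Finset.prod_eq_one fun i _ => Finset.prod_eq_one fun j hj => ?_
    have := Finset.mem_range.1 hj
    rw [if_neg (by omega)]
  rw [e3, one_mul]
  have e1 : ∏ i ∈ Finset.range (k + 1), ∏ j ∈ Finset.range (k + 1),
      (if i + 2 ≤ j then Mn (app k x s y) i j else 1) =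
      ∏ i ∈ Finset.range (k + 1), ∏ j ∈ Finset.range (k + 1),
      (if i + 2 ≤ j then Mn x i j else 1) := by
    refine Finset.prod_congr rfl fun i _ => Finset.prod_congr rfl fun j hj => ?_
    have := Finset.mem_range.1 hj
    rw [Mn_app_left (by omega)]
  have e2 : ∏ i ∈ Finset.range (k + 1), ∏ j ∈ Finset.range (b + 1),
      (if i + 2 ≤ k + 1 + j then Mn (app k x s y) i (k + 1 + j) else 1) =
      ∏ i ∈ Finset.range (k + 1), ∏ j ∈ Finset.range (b + 1),
      (if i + 2 ≤ k + 1 + j then s else 1) := by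
    refine Finset.prod_congr rfl fun i hi => Finset.prod_congr rfl fun j hj => ?_
    have := Finset.mem_range.1 hj
    have := Finset.mem_range.1 hi
    rw [Mn_app_mid h1 h2 (by omega) (by omega) (by omega)]
  have e4 : ∏ i ∈ Finset.range (b + 1), ∏ j ∈ Finset.range (b + 1),
      (if k + 1 + i + 2 ≤ k + 1 + j then Mn (app k x s y) (k + 1 + i) (k + 1 + j) else 1) =
      ∏ i ∈ Finset.range (b + 1), ∏ j ∈ Finset.range (b + 1),
      (if i + 2 ≤ j then Mn y i j else 1) := by
    refine Finset.prod_congr rfl fun i _ => Finset.prod_congr rfl fun j hj => ?_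
    rw [Mn_app_right]
    have : (k + 1 + i + 2 ≤ k + 1 + j) ↔ i + 2 ≤ j := by omega
    simp only [this]
  rw [e1, e2, e4]
  ring

lemma Phi_app (φ : ENNReal → ENNReal)
    (h1 : ∀ i < k, x i ∈ Set.Ioi s) (h2 : ∀ i < b, y i ∈ Set.Ici s) :
    Phi φ (k + 1 + b) (app k x s y) = Phi φ k x * φ s ^ (b + 1) := by
  unfold Phi
  rw [show k + 1 + b = k + (b + 1) by omega, Finset.prod_range_add]
  congr 1
  · refine Finset.prod_congr rfl fun j hj => ?_
    have := Finset.mem_range.1 hj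
    rw [Mn_app_left (by omega)]
  · rw [Finset.prod_congr rfl (g := fun _ => φ s)]
    · simp
    · intro j hj
      have := Finset.mem_range.1 hj
      rw [Mn_app_mid h1 h2 (by omega) (by omega) (by omega)]

lemma PhiR_app (φ : ENNReal → ENNReal)
    (h1 : ∀ i < k, x i ∈ Set.Ioi s) (h2 : ∀ i < b, y i ∈ Set.Ici s) :
    PhiR φ (k + 1 + b) (app k x s y) = φ s ^ (k + 1) * PhiR φ b y := by
  unfold PhiR
  rw [Finset.prod_range_add]
  congr 1
  · rw [Finset.prod_congr rfl (g := fun _ => φ s)]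
    · simp
    · intro j hj
      have := Finset.mem_range.1 hj
      rw [Mn_app_mid h1 h2 (by omega) (by omega) (by omega)]
  · refine Finset.prod_congr rfl fun j hj => ?_
    rw [Mn_app_right]

end region

/-! ### Link with product measures; reversal -/

def ext0 (p : ℕ) (y : Fin p → ENNReal) : ℕ → ENNReal := fun i => if h : i < p then y ⟨i, h⟩ else 0

lemma measurable_ext0 (p : ℕ) : Measurable (ext0 p) := by
  refine measurable_pi_iff.2 fun i => ?_
  unfold ext0
  by_cases h : i < p
  · simpa [h] using measurable_pi_apply _
  · simp [h]

lemma II_eq_pi (ν : Measure ENNReal) [SigmaFinite ν] (p : ℕ) :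
    ∀ (G : (ℕ → ENNReal) → ENNReal), Measurable G →
    II ν p G = ∫⁻ y, G (ext0 p y) ∂(Measure.pi fun _ : Fin p => ν) := by
  induction p with
  | zero =>
    intro G _
    rw [Measure.pi_of_empty (fun _ : Fin 0 => ν), lintegral_dirac]
    simp only [II]
    congr 1
  | succ p ih =>
    intro G hG
    have mp := measurePreserving_piFinSuccAbove (fun _ : Fin (p + 1) => ν) 0
    have key := mp.lintegral_comp (f := fun z : ENNReal × (Fin p → ENNReal) =>
      G (scons z.1 (ext0 p z.2))) (hG.comp (measurable_scons.comp
        (measurable_fst.prodMk ((measurable_ext0 p).comp measurable_snd))))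
    rw [lintegral_prod (fun z : ENNReal × (Fin p → ENNReal) =>
      G (scons z.1 (ext0 p z.2))) (hG.comp (measurable_scons.comp
        (measurable_fst.prodMk ((measurable_ext0 p).comp measurable_snd)))).aemeasurable] at key
    simp only [II]
    rw [lintegral_congr fun s => ih (fun x => G (scons s x)) (hG.comp (measurable_scons' s)), ← key]
    refine lintegral_congr fun y => ?_
    congr 1
    ext i
    cases i with
    | zero => simp [scons, ext0, MeasurableEquiv.piFinSuccAbove, Fin.insertNthEquiv]
    | succ i =>
      simp only [scons, ext0]
      by_cases h : i < p
      · simp [h, MeasurableEquiv.piFinSuccAbove, Fin.insertNthEquiv, Fin.removeNth, Fin.tail]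
      · simp [h]

lemma lintegral_pi_reindex {ι κ : Type*} [Fintype ι] [Fintype κ] (ν : Measure ENNReal)
    [SigmaFinite ν] (e : ι ≃ κ) (F : (ι → ENNReal) → ENNReal) :
    ∫⁻ y, F (fun i => y (e i)) ∂(Measure.pi fun _ : κ => ν) =
      ∫⁻ x, F x ∂(Measure.pi fun _ : ι => ν) := by
  have mp := measurePreserving_piCongrLeft (fun _ : ι => ν) e.symm
  rw [← mp.lintegral_comp_emb (MeasurableEquiv.measurableEmbedding _)]
  refine lintegral_congr fun y => ?_
  congr 1
  ext i
  rw [MeasurableEquiv.coe_piCongrLeft]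
  have := Equiv.piCongrLeft_apply_apply (fun _ : ι => ENNReal) e.symm y (e i)
  simpa using this.symm

lemma Mn_rev (p : ℕ) (y : Fin p → ENNReal) (i j : ℕ) (hj : j ≤ p) :
    Mn (ext0 p fun i => y i.rev) i j = Mn (ext0 p y) (p - j) (p - i) := by
  have h : ∀ l < p, ext0 p (fun i => y i.rev) l = ext0 p y (p - 1 - l) := by
    intro l hl
    simp only [ext0, hl, dif_pos, show p - 1 - l < p by omega]
    congr 1
    ext
    simp [Fin.rev]
    omega
  refine le_antisymm (Finset.le_inf fun l hl => ?_) (Finset.le_inf fun l hl => ?_)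
  · have := Finset.mem_Ico.1 hl
    rw [show l = p - 1 - (p - 1 - l) by omega, ← h _ (by omega)]
    exact Finset.inf_le (Finset.mem_Ico.2 (by omega))
  · have := Finset.mem_Ico.1 hl
    rw [h _ (by omega)]
    exact Finset.inf_le (Finset.mem_Ico.2 (by omega))

lemma kap_rev (p : ℕ) (y : Fin p → ENNReal) :
    kap p (ext0 p fun i => y i.rev) = kap p (ext0 p y) := by
  unfold kap
  rw [← Finset.prod_range_reflect, Finset.prod_comm, ← Finset.prod_range_reflect]
  refine Finset.prod_congr rfl fun i hi => Finset.prod_congr rfl fun j hj => ?_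
  have h1 := Finset.mem_range.1 hi
  have h2 := Finset.mem_range.1 hj
  rw [Mn_rev _ _ _ _ (by omega)]
  have : (p + 1 - 1 - j + 2 ≤ p + 1 - 1 - i) ↔ i + 2 ≤ j := by omega
  simp only [this, show p - (p + 1 - 1 - i) = i by omega, show p - (p + 1 - 1 - j) = j by omega]

lemma PhiR_rev (φ : ENNReal → ENNReal) (p : ℕ) (y : Fin p → ENNReal) :
    PhiR φ p (ext0 p fun i => y i.rev) = Phi φ p (ext0 p y) := by
  unfold PhiR Phi
  rw [← Finset.prod_range_reflect]
  refine Finset.prod_congr rfl fun i hi => ?_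
  have h1 := Finset.mem_range.1 hi
  rw [Mn_rev _ _ _ _ (by omega)]
  simp only [Nat.sub_self, show p - (p - 1 - i) = i + 1 by omega]

lemma II_reverse (ν : Measure ENNReal) [SigmaFinite ν] (p : ℕ) (ψ : ENNReal → ENNReal)
    (hψ : Monotone ψ) :
    II ν p (fun x => kap p x * PhiR ψ p x) = II ν p (fun x => kap p x * Phi ψ p x) := by
  rw [II_eq_pi ν p (fun x => kap p x * PhiR ψ p x)
      ((measurable_kap p).mul (measurable_PhiR ψ hψ p)),
    II_eq_pi ν p (fun x => kap p x * Phi ψ p x) ((measurable_kap p).mul (measurable_Phi ψ hψ p)),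
    ← lintegral_pi_reindex ν (Fin.revPerm (n := p))]
  refine lintegral_congr fun y => ?_
  have := kap_rev p y
  have := PhiR_rev ψ p y
  simp_all

/-! ### The core inequality -/

lemma core_pair (μ : Measure ENNReal) [IsProbabilityMeasure μ]
    (h1 : ∀ᵐ a ∂μ, a ≤ 1) (φ ψ : ENNReal → ENNReal) (hφ : Monotone φ) (hψ : Monotone ψ)
    (hφ1 : ∀ z, φ z ≤ 1) (hψ1 : ∀ z, ψ z ≤ 1) (k b : ℕ)
    (Tl Tr : ℕ → ℕ → ENNReal → ENNReal)
    (hTl : ∀ k b s, Tl k b s = cc k b s * (φ s ^ (b + 1) * ψ s ^ (k + 1)) *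
      II (μ.restrict (Set.Ioi s)) k (fun x => kap k x * Phi φ k x) *
      II (μ.restrict (Set.Ioi s)) b (fun x => kap b x * Phi ψ b x))
    (hTr : ∀ k b s, Tr k b s = cc k b s * (φ s ^ (b + 1) * ψ s ^ (b + 1)) *
      II (μ.restrict (Set.Ioi s)) k (fun x => kap k x * (Phi φ k x * Phi ψ k x)) *
      II (μ.restrict (Set.Ioi s)) b (kap b)) (s : ENNReal) :
    Tl k b s + Tl b k s ≤ Tr k b s + Tr b k s := by
  have key : ∀ k b, k ≤ b → Tl k b s + Tl b k s ≤ Tr k b s + Tr b k s := by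
    intro k b hkb
    obtain ⟨d, rfl⟩ := Nat.exists_eq_add_of_le hkb
    have hν : (μ.restrict (Set.Ioi s)) Set.univ ≤ 1 := by simpa using prob_le_one
    have := D_path_aux (μ.restrict (Set.Ioi s)) hν s (ae_restrict_mem measurableSet_Ioi)
      (ae_restrict_of_ae h1) φ ψ hφ hψ hφ1 hψ1 k d (k + 1)
    have := mul_le_mul_left this (cc k (k + d) s)
    rw [show d + (k + 1) = k + d + 1 by omega] at this
    rw [hTl, hTl, hTr, hTr, cc_symm (k + d) k]
    calc _ = _ := ?_
      _ ≤ _ := this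
      _ = _ := ?_
    · ring
    · ring
  rcases le_total k b with h | h
  · exact key k b h
  · rw [add_comm, add_comm (Tr k b s)]
    exact key b k h

lemma core (μ : Measure ENNReal) [IsProbabilityMeasure μ] [NullSingletonClass μ]
    (h1 : ∀ᵐ a ∂μ, a ≤ 1) (φ ψ : ENNReal → ENNReal) (hφ : Monotone φ) (hψ : Monotone ψ)
    (hφ1 : ∀ z, φ z ≤ 1) (hψ1 : ∀ z, ψ z ≤ 1) (p : ℕ) :
    II μ p (fun x => kap p x * (Phi φ p x * PhiR ψ p x)) ≤
      II μ p (fun x => kap p x * (Phi φ p x * Phi ψ p x)) := by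
  rcases Nat.eq_zero_or_pos p with rfl | hp
  · simp [II, Phi, PhiR]
  have mk := measurable_kap
  have mφ := measurable_Phi φ hφ
  have mψ := measurable_Phi ψ hψ
  have mψ' := measurable_PhiR ψ hψ
  rw [II_regions μ p hp (fun x => kap p x * (Phi φ p x * PhiR ψ p x)) ((mk p).mul ((mφ p).mul (mψ' p))),
    II_regions μ p hp (fun x => kap p x * (Phi φ p x * Phi ψ p x)) ((mk p).mul ((mφ p).mul (mψ p)))]
  let Tl : ℕ → ℕ → ENNReal → ENNReal := fun k b s => cc k b s * (φ s ^ (b + 1) * ψ s ^ (k + 1)) *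
      II (μ.restrict (Set.Ioi s)) k (fun x => kap k x * Phi φ k x) *
      II (μ.restrict (Set.Ioi s)) b (fun x => kap b x * Phi ψ b x)
  let Tr : ℕ → ℕ → ENNReal → ENNReal := fun k b s => cc k b s * (φ s ^ (b + 1) * ψ s ^ (b + 1)) *
      II (μ.restrict (Set.Ioi s)) k (fun x => kap k x * (Phi φ k x * Phi ψ k x)) *
      II (μ.restrict (Set.Ioi s)) b (kap b)
  have ml : ∀ k b, Measurable (Tl k b) := fun k b =>
    (((measurable_cc k b).mul ((hφ.measurable.pow_const _).mul (hψ.measurable.pow_const _))).mul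
      (measurable_II_Ioi μ k _ ((mk k).mul (mφ k)))).mul
      (measurable_II_Ioi μ b _ ((mk b).mul (mψ b)))
  have mr : ∀ k b, Measurable (Tr k b) := fun k b =>
    (((measurable_cc k b).mul ((hφ.measurable.pow_const _).mul (hψ.measurable.pow_const _))).mul
      (measurable_II_Ioi μ k _ ((mk k).mul ((mφ k).mul (mψ k))))).mul
      (measurable_II_Ioi μ b _ (mk b))
  have el : ∀ k ∈ Finset.range p,
      II μ p (fun z => if reg p k z then kap p z * (Phi φ p z * PhiR ψ p z) else 0) =
      ∫⁻ s, Tl k (p - 1 - k) s ∂μ := by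
    intro k hk
    have hk := Finset.mem_range.1 hk
    obtain ⟨b, rfl⟩ := Nat.exists_eq_add_of_le (show k + 1 ≤ p by omega)
    rw [show k + 1 + b - 1 - k = b by omega]
    rw [II_cut μ k b (fun z => kap (k + 1 + b) z * (Phi φ (k + 1 + b) z * PhiR ψ (k + 1 + b) z))
      (fun x => kap k x * Phi φ k x) (fun x => kap b x * PhiR ψ b x)
      (fun s => cc k b s * (φ s ^ (b + 1) * ψ s ^ (k + 1))) ((mk k).mul (mφ k)) ((mk b).mul (mψ' b))
      ((measurable_cc k b).mul ((hφ.measurable.pow_const _).mul (hψ.measurable.pow_const _)))]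
    · refine lintegral_congr fun s => ?_
      rw [II_reverse _ b ψ hψ]
    · intro x y s h1 h2
      rw [kap_app h1 h2, Phi_app φ h1 h2, PhiR_app ψ h1 h2]
      ring
  have er : ∀ k ∈ Finset.range p,
      II μ p (fun z => if reg p k z then kap p z * (Phi φ p z * Phi ψ p z) else 0) =
      ∫⁻ s, Tr k (p - 1 - k) s ∂μ := by
    intro k hk
    have hk := Finset.mem_range.1 hk
    obtain ⟨b, rfl⟩ := Nat.exists_eq_add_of_le (show k + 1 ≤ p by omega)
    rw [show k + 1 + b - 1 - k = b by omega]
    rw [II_cut μ k b (fun z => kap (k + 1 + b) z * (Phi φ (k + 1 + b) z * Phi ψ (k + 1 + b) z))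
      (fun x => kap k x * (Phi φ k x * Phi ψ k x)) (kap b)
      (fun s => cc k b s * (φ s ^ (b + 1) * ψ s ^ (b + 1))) ((mk k).mul ((mφ k).mul (mψ k))) (mk b)
      ((measurable_cc k b).mul ((hφ.measurable.pow_const _).mul (hψ.measurable.pow_const _)))]
    intro x y s h1 h2
    rw [kap_app h1 h2, Phi_app φ h1 h2, Phi_app ψ h1 h2]
    ring
  rw [Finset.sum_congr rfl el, Finset.sum_congr rfl er]
  have dbl : ∀ T : ℕ → ℕ → ENNReal → ENNReal, (∀ k b, Measurable (T k b)) →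
      2 * ∑ k ∈ Finset.range p, ∫⁻ s, T k (p - 1 - k) s ∂μ =
      ∑ k ∈ Finset.range p, ∫⁻ s, (T k (p - 1 - k) s + T (p - 1 - k) k s) ∂μ := by
    intro T mT
    rw [two_mul]
    nth_rw 2 [← Finset.sum_range_reflect]
    rw [← Finset.sum_add_distrib]
    refine Finset.sum_congr rfl fun k hk => ?_
    have hk := Finset.mem_range.1 hk
    rw [lintegral_add_left (mT _ _), show p - 1 - (p - 1 - k) = k by omega]
  refine (ENNReal.mul_le_mul_iff_right (a := 2) (by simp) (by simp)).1 ?_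
  rw [dbl Tl ml, dbl Tr mr]
  refine Finset.sum_le_sum fun k _ => lintegral_mono fun s => ?_
  exact core_pair μ h1 φ ψ hφ hψ hφ1 hψ1 k (p - 1 - k) Tl Tr (fun _ _ _ => rfl) (fun _ _ _ => rfl) s

/-! ### Labelled trees -/

/-- `pos` records on which side of each edge a vertex lies. -/
structure Lab {ι : Type*} (T : Finset (Sym2 V)) (ed : ι → Sym2 V) (pos : V → ι → Bool) : Prop where
  inj : Function.Injective ed
  range : ∀ e, e ∈ T ↔ ∃ i, ed i = e
  flip : ∀ i u w, ed i = s(u, w) → ∀ j, pos u j ≠ pos w j ↔ j = i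

lemma spanGraph_adj (T : Finset (Sym2 V)) (a b : V) :
    (spanGraph T).Adj a b ↔ s(a, b) ∈ T ∧ a ≠ b := by
  simp [spanGraph]

lemma spanning_iff [Fintype V] (T : Finset (Sym2 V)) :
    IsSpanningTree (⊤ : SimpleGraph V) T ↔
      (∀ e ∈ T, ¬ e.IsDiag) ∧ (spanGraph T).Connected ∧ T.card + 1 = Fintype.card V := by
  unfold IsSpanningTree
  have h1 : (↑T ⊆ (⊤ : SimpleGraph V).edgeSet) ↔ ∀ e ∈ T, ¬ e.IsDiag := by
    constructor
    · intro h e he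
      have := h he
      simpa using this
    · intro h e he
      simpa using h e he
  rw [h1]
  refine and_congr_right fun hd => ?_
  have h2 := isTree_iff_connected_and_card (G := spanGraph T)
  have h3 : (spanGraph T).edgeSet = ↑T := by
    ext e
    simp only [spanGraph, edgeSet_fromEdgeSet]
    constructor
    · intro h; exact h.1
    · intro h; exact ⟨h, hd e h⟩
  rw [h3] at h2
  simp only [Nat.card_eq_fintype_card, Finset.coe_sort_coe, Fintype.card_coe] at h2
  rw [← h2, isTree_iff]

lemma reach_of_connected {G H : SimpleGraph V} (hG : G.Connected)
    (h : ∀ a b, G.Adj a b → H.Reachable a b) : H.Connected := by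
  haveI := hG.nonempty
  refine Connected.mk fun a b => ?_
  obtain ⟨p⟩ := hG.preconnected a b
  induction p with
  | nil => exact Reachable.refl _
  | cons hab _ ih => exact (h _ _ hab).trans ih

lemma prop_of_connected {G : SimpleGraph V} (hG : G.Connected) (P : V → Prop)
    (h : ∀ a b, G.Adj a b → P a → P b) (a b : V) (ha : P a) : P b := by
  obtain ⟨p⟩ := hG.preconnected a b
  induction p with
  | nil => exact ha
  | cons hab _ ih => exact ih (h _ _ hab ha)

section lab
variable {ι : Type*} {T : Finset (Sym2 V)} {ed : ι → Sym2 V} {pos : V → ι → Bool}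

lemma Lab.not_diag (L : Lab T ed pos) (e : Sym2 V) (he : e ∈ T) : ¬ e.IsDiag := by
  obtain ⟨i, rfl⟩ := (L.range e).1 he
  induction h : ed i with
  | h u w =>
    intro hd
    have : u = w := by simpa using hd
    subst this
    exact ((L.flip i u u h i).2 rfl) rfl

/-- A function constant along all edges is constant. -/
lemma Lab.const {β : Type*} (L : Lab T ed pos) (hc : (spanGraph T).Connected) (g : V → β)
    (h : ∀ i u w, ed i = s(u, w) → g u = g w) (a b : V) : g a = g b := by
  refine prop_of_connected hc (fun x => g a = g x) ?_ a b rfl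
  intro x y hxy hx
  obtain ⟨i, hi⟩ := (L.range _).1 ((spanGraph_adj T x y).1 hxy).1
  exact hx.trans (h i x y hi)

/-- If `g` separates `a` and `b`, it flips across some edge separating `a` and `b`. -/
lemma Lab.exists_flip [Fintype ι] (L : Lab T ed pos) (hc : (spanGraph T).Connected) (g : V → Prop)
    (a b : V) (hab : ¬ (g a ↔ g b)) :
    ∃ i u w, pos a i ≠ pos b i ∧ ed i = s(u, w) ∧ ¬ (g u ↔ g w) := by
  by_contra hcon
  push Not at hcon
  let δ : ι → Prop := fun i => ∃ u w, ed i = s(u, w) ∧ ¬ (g u ↔ g w)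
  have hδ : ∀ i u w, ed i = s(u, w) → (δ i ↔ ¬ (g u ↔ g w)) := by
    intro i u w hi
    constructor
    · rintro ⟨u', w', h', hg⟩
      rw [hi] at h'
      rcases Sym2.eq_iff.1 h' with ⟨rfl, rfl⟩ | ⟨rfl, rfl⟩
      · exact hg
      · exact fun h => hg h.symm
    · exact fun h => ⟨u, w, hi, h⟩
  let h : V → ZMod 2 := fun x => (if g x then 1 else 0) + ∑ i, if pos x i ∧ δ i then 1 else 0
  have hz : ∀ z : ZMod 2, z + z = 0 := by decide
  have hconst := L.const hc h (by
    intro i u w hi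
    have key : ∀ j ∈ Finset.univ.erase i, (if pos u j ∧ δ j then (1 : ZMod 2) else 0) =
        if pos w j ∧ δ j then 1 else 0 := by
      intro j hj
      have : pos u j = pos w j := by
        by_contra hne
        exact Finset.ne_of_mem_erase hj ((L.flip i u w hi j).1 hne)
      rw [this]
    simp only [h]
    rw [← Finset.add_sum_erase _ _ (Finset.mem_univ i), ← Finset.add_sum_erase (a := i) _
      (fun i => if pos w i ∧ δ i then (1 : ZMod 2) else 0) (Finset.mem_univ i),
      Finset.sum_congr rfl key, ← add_assoc, ← add_assoc]
    congr 1
    have hf := (L.flip i u w hi i).2 rfl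
    have hd := hδ i u w hi
    by_cases gu : g u <;> by_cases gw : g w <;> cases pu : pos u i <;> cases pw : pos w i <;>
      simp_all) a b
  simp only [h] at hconst
  have : ∀ i, (if pos a i ∧ δ i then (1 : ZMod 2) else 0) = if pos b i ∧ δ i then 1 else 0 := by
    intro i
    by_cases hp : pos a i = pos b i
    · rw [hp]
    · have : ¬ δ i := by
        rintro ⟨u, w, hi, hg⟩
        exact hg (hcon i u w hp hi)
      simp [this]
  rw [Finset.sum_congr rfl fun i _ => this i, add_left_inj] at hconst
  by_cases ga : g a <;> by_cases gb : g b <;> simp_all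

lemma Lab.pos_inj [Fintype ι] (L : Lab T ed pos) (hc : (spanGraph T).Connected) :
    Function.Injective pos := by
  intro a b hab
  by_contra hne
  obtain ⟨i, u, w, hi, -⟩ := L.exists_flip hc (fun x => x = a) a b
    (by simp; exact fun h => hne h.symm)
  rw [hab] at hi
  exact hi rfl

/-- Two edges starting at `u` cannot both separate `u` from `w`. -/
lemma Lab.uniq_start (L : Lab T ed pos) (hc : (spanGraph T).Connected) (u w : V) (i j : ι)
    (hi : u ∈ ed i) (hj : u ∈ ed j) (h1 : pos u i ≠ pos w i) (h2 : pos u j ≠ pos w j) : i = j := by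
  by_contra hne
  have := L.const hc (fun x => (pos u i ≠ pos x i ∧ pos u j ≠ pos x j)) (by
    intro k a b hk
    by_cases k1 : k = i
    · subst k1
      have e1 : pos a j = pos b j := by
        by_contra h; exact hne (((L.flip k a b hk j).1 h).symm)
      rw [hk] at hi
      rcases Sym2.mem_iff.1 hi with rfl | rfl
      · simp [e1]
      · simp [e1]
    · by_cases k2 : k = j
      · subst k2
        have e1 : pos a i = pos b i := by
          by_contra h; exact hne (((L.flip k a b hk i).1 h))
        rw [hk] at hj
        rcases Sym2.mem_iff.1 hj with rfl | rfl
        · simp [e1]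
        · simp [e1]
      · have e1 : pos a i = pos b i := by
          by_contra h; exact k1 (((L.flip k a b hk i).1 h).symm)
        have e2 : pos a j = pos b j := by
          by_contra h; exact k2 (((L.flip k a b hk j).1 h).symm)
        simp only [e1, e2]) u w
  have h3 : (pos u i ≠ pos w i ∧ pos u j ≠ pos w j) := ⟨h1, h2⟩
  have h4 := this ▸ h3
  exact h4.1 rfl

/-- A single separating edge means adjacency. -/
lemma Lab.eq_of_single [Fintype ι] (L : Lab T ed pos) (hc : (spanGraph T).Connected) (a b : V)
    (hab : a ≠ b) (i : ι) (h : ∀ j, pos a j ≠ pos b j → j = i) : ed i = s(a, b) := by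
  have key : ∀ x, (x = a ∨ x = b) → x ∈ ed i := by
    intro x hx
    obtain ⟨j, u, w, hj, he, hg⟩ := L.exists_flip hc (fun y => y = x) a b (by
      rcases hx with rfl | rfl
      · simpa using hab.symm
      · simpa using hab)
    rw [← h j hj, he]
    by_cases hu : u = x
    · subst hu; simp
    · by_cases hw : w = x
      · subst hw; simp
      · simp [hu, hw] at hg
  exact ((Sym2.mem_and_mem_iff hab).1 ⟨key a (Or.inl rfl), key b (Or.inr rfl)⟩)

lemma Lab.card_eq [Fintype ι] (L : Lab T ed pos) : Fintype.card ι = T.card := by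
  have : T = Finset.univ.image ed := by
    ext e; simp [L.range e]
  rw [this, Finset.card_image_of_injective _ L.inj, Finset.card_univ]

/-- In `T - ed i`, each vertex is reachable from the endpoint of `ed i` on the same side. -/
lemma Lab.exchange [Fintype V] (L : Lab T ed pos) (hT : IsSpanningTree (⊤ : SimpleGraph V) T)
    (i : ι) (a b : V) (hab : pos a i ≠ pos b i) (hf : s(a, b) ∉ T) :
    IsSpanningTree (⊤ : SimpleGraph V) (insert s(a, b) (T.erase (ed i))) := by
  obtain ⟨hd, hc, hcard⟩ := (spanning_iff T).1 hT
  have hne : a ≠ b := fun h => hab (by rw [h])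
  have hiT : ed i ∈ T := (L.range _).2 ⟨i, rfl⟩
  set T' := insert s(a, b) (T.erase (ed i)) with hT'
  refine (spanning_iff _).2 ⟨?_, ?_, ?_⟩
  · intro e he
    rcases Finset.mem_insert.1 he with rfl | he
    · simpa using hne
    · exact hd e (Finset.mem_of_mem_erase he)
  · obtain ⟨u, w, hi⟩ : ∃ u w, ed i = s(u, w) := by
      induction h : ed i with
      | h u w => exact ⟨u, w, rfl⟩
    have hflip := (L.flip i u w hi i).2 rfl
    have adj : ∀ x y, s(x, y) ∈ T → s(x, y) ≠ ed i → (spanGraph T').Adj x y := by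
      intro x y h1 h2
      rw [spanGraph_adj]
      refine ⟨Finset.mem_insert_of_mem (Finset.mem_erase.2 ⟨h2, h1⟩), ?_⟩
      have := hd _ h1
      simpa using this
    have adjf : (spanGraph T').Adj a b := by
      rw [spanGraph_adj]
      exact ⟨Finset.mem_insert_self _ _, hne⟩
    let R := (spanGraph T').Reachable
    have side : ∀ x, (pos x i = pos u i → R u x) ∧ (pos x i = pos w i → R w x) := by
      intro x
      refine prop_of_connected hc (fun x => (pos x i = pos u i → R u x) ∧
        (pos x i = pos w i → R w x)) ?_ u x
        ⟨fun _ => Reachable.refl _, fun h => absurd h hflip⟩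
      intro x y hxy hx
      have hm := ((spanGraph_adj T x y).1 hxy).1
      by_cases he : s(x, y) = ed i
      · rw [hi] at he
        rcases Sym2.eq_iff.1 he with ⟨rfl, rfl⟩ | ⟨rfl, rfl⟩
        · exact ⟨fun h => absurd h hflip.symm, fun _ => Reachable.refl _⟩
        · exact ⟨fun _ => Reachable.refl _, fun h => absurd h hflip⟩
      · have e1 : pos x i = pos y i := by
          obtain ⟨j, hj⟩ := (L.range _).1 hm
          by_contra h
          have := (L.flip j x y hj i).1 h
          rw [this] at he
          exact he hj.symm
        rw [← e1]
        exact ⟨fun h => (hx.1 h).trans (adj x y hm he).reachable,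
          fun h => (hx.2 h).trans (adj x y hm he).reachable⟩
    have ruw : R u w := by
      by_cases h : pos a i = pos u i
      · have hb : pos b i = pos w i := by
          revert hab h hflip
          cases pos a i <;> cases pos b i <;> cases pos u i <;> cases pos w i <;> simp
        exact ((side a).1 h).trans (adjf.reachable.trans ((side b).2 hb).symm)
      · have ha : pos a i = pos w i := by
          revert hab h hflip
          cases pos a i <;> cases pos b i <;> cases pos u i <;> cases pos w i <;> simp
        have hb : pos b i = pos u i := by
          revert hab h hflip
          cases pos a i <;> cases pos b i <;> cases pos u i <;> cases pos w i <;> simp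
        exact ((side b).1 hb).trans (adjf.reachable.symm.trans ((side a).2 ha).symm)
    refine reach_of_connected hc fun x y hxy => ?_
    have hm := ((spanGraph_adj T x y).1 hxy).1
    by_cases he : s(x, y) = ed i
    · rw [hi] at he
      rcases Sym2.eq_iff.1 he with ⟨rfl, rfl⟩ | ⟨rfl, rfl⟩
      · exact ruw
      · exact ruw.symm
    · exact (adj x y hm he).reachable
  · rw [Finset.card_insert_of_notMem (fun h => hf (Finset.mem_of_mem_erase h)),
      Finset.card_erase_of_mem hiT]
    have : 0 < T.card := Finset.card_pos.2 ⟨_, hiT⟩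
    omega

end lab

/-- Every labelling of the edges of a spanning tree has a position function. -/
lemma exists_lab [Fintype V] {ι : Type*} (T : Finset (Sym2 V))
    (hT : IsSpanningTree (⊤ : SimpleGraph V) T)
    (ed : ι → Sym2 V) (inj : Function.Injective ed) (range : ∀ e, e ∈ T ↔ ∃ i, ed i = e) :
    ∃ pos : V → ι → Bool, Lab T ed pos := by
  obtain ⟨hd, hc, -⟩ := (spanning_iff T).1 hT
  obtain ⟨-, -, hac⟩ := hT
  obtain ⟨r⟩ := hc.nonempty
  refine ⟨fun u i => decide ((spanGraph (T.erase (ed i))).Reachable r u), inj, range, ?_⟩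
  intro i u w hi j
  have hiT : ed i ∈ T := (range _).2 ⟨i, rfl⟩
  have huw : u ≠ w := by
    have := hd _ hiT
    rw [hi] at this
    simpa using this
  constructor
  · intro h
    by_contra hne
    refine h ?_
    have hadj : (spanGraph (T.erase (ed j))).Adj u w := by
      rw [spanGraph_adj, ← hi]
      exact ⟨Finset.mem_erase.2 ⟨fun h => hne (inj h).symm, hiT⟩, huw⟩
    rw [decide_eq_decide]
    exact ⟨fun h => h.trans hadj.reachable, fun h => h.trans hadj.reachable.symm⟩
  · rintro rfl
    let R := (spanGraph (T.erase (ed j))).Reachable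
    have hbr : ¬ R u w := by
      have hadj : (spanGraph T).Adj u w := by
        rw [spanGraph_adj, ← hi]; exact ⟨hiT, huw⟩
      have := isAcyclic_iff_forall_edge_isBridge.1 hac (e := s(u, w)) hadj
      rw [isBridge_iff] at this
      have hg : spanGraph (T.erase (ed j)) = (spanGraph T).deleteEdges {s(u, w)} := by
        ext x y
        rw [spanGraph_adj, deleteEdges_adj, spanGraph_adj, Finset.mem_erase, ← hi]
        simp only [Set.mem_singleton_iff]
        tauto
      simp only [R]
      rw [hg]
      exact this
    have hor : R u r ∨ R w r := by
      refine prop_of_connected hc (fun x => R u x ∨ R w x) ?_ u r (Or.inl (Reachable.refl _))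
      intro x y hxy hx
      have hm := (spanGraph_adj T x y).1 hxy
      by_cases he : s(x, y) = ed j
      · rw [hi] at he
        rcases Sym2.eq_iff.1 he with ⟨rfl, rfl⟩ | ⟨rfl, rfl⟩
        · exact Or.inr (Reachable.refl _)
        · exact Or.inl (Reachable.refl _)
      · have hadj : (spanGraph (T.erase (ed j))).Adj x y := by
          rw [spanGraph_adj]
          exact ⟨Finset.mem_erase.2 ⟨he, hm.1⟩, hm.2⟩
        exact hx.imp (fun h => h.trans hadj.reachable) (fun h => h.trans hadj.reachable)
    intro h
    rw [decide_eq_decide] at h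
    rcases hor with h1 | h1
    · exact hbr (h1.trans (h.1 h1.symm))
    · exact hbr ((h.2 h1.symm).symm.trans h1.symm)

/-! ### The minimum spanning tree event -/

/-- Extension of weights by zero. -/
def wex (w : (⊤ : SimpleGraph V).edgeSet → ℝ) (e : Sym2 V) : ℝ :=
  if h : e ∈ (⊤ : SimpleGraph V).edgeSet then w ⟨e, h⟩ else 0

lemma treeWeight_eq [Fintype V] (w : (⊤ : SimpleGraph V).edgeSet → ℝ) (T : Finset (Sym2 V))
    (hT : ∀ e ∈ T, ¬ e.IsDiag) : treeWeight ⊤ w T = ∑ e ∈ T, wex w e := by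
  unfold treeWeight
  have h1 : ∀ e : (⊤ : SimpleGraph V).edgeSet, (if (e : Sym2 V) ∈ T then w e else 0) =
      if (e : Sym2 V) ∈ T then wex w e else 0 := by
    intro e
    rw [wex, dif_pos e.2]
  rw [Finset.sum_congr rfl fun e _ => h1 e]
  rw [← Finset.sum_filter]
  refine Finset.sum_bij (fun e _ => (e : Sym2 V)) ?_ ?_ ?_ ?_
  · intro e he; exact (Finset.mem_filter.1 he).2
  · intro a _ b _ h; exact Subtype.ext h
  · intro e he
    exact ⟨⟨e, by simpa using hT e he⟩, by simpa using he, rfl⟩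
  · intro e _; rfl

lemma weight_exchange {T : Finset (Sym2 V)} {W : Sym2 V → ℝ} {e f : Sym2 V} (he : e ∈ T)
    (hf : f ∉ T) : ∑ x ∈ insert f (T.erase e), W x = ∑ x ∈ T, W x - W e + W f := by
  rw [Finset.sum_insert (fun h => hf (Finset.mem_of_mem_erase h)),
    ← Finset.add_sum_erase T W he]
  ring

lemma exists_rep (e : Sym2 V) : ∃ u w, e = s(u, w) := by
  induction e with
  | h u w => exact ⟨u, w, rfl⟩

section
variable {ι : Type*} [Fintype ι] {T : Finset (Sym2 V)} {ed : ι → Sym2 V} {pos : V → ι → Bool}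

lemma mst_of_cycle [Fintype V] (L : Lab T ed pos) (hT : IsSpanningTree (⊤ : SimpleGraph V) T)
    (W : Sym2 V → ℝ)
    (H : ∀ a b, a ≠ b → s(a, b) ∉ T → ∀ i, pos a i ≠ pos b i → W (ed i) < W s(a, b)) :
    ∀ (m : ℕ) (T' : Finset (Sym2 V)), (T' \ T).card = m → IsSpanningTree (⊤ : SimpleGraph V) T' →
      T' ≠ T → ∑ e ∈ T, W e < ∑ e ∈ T', W e := by
  intro m
  induction m using Nat.strong_induction_on with
  | _ m ih =>
    intro T' hm hT' hne
    obtain ⟨hd, hc, hcard⟩ := (spanning_iff T).1 hT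
    obtain ⟨hd', hc', hcard'⟩ := (spanning_iff T').1 hT'
    have : ¬ T' ⊆ T := fun h => hne (Finset.eq_of_subset_of_card_le h (by omega))
    obtain ⟨f, hf', hf⟩ := Finset.not_subset.1 this
    obtain ⟨pos', L'⟩ := exists_lab T' hT' (fun e : T' => (e : Sym2 V)) Subtype.val_injective
      (fun e => ⟨fun h => ⟨⟨e, h⟩, rfl⟩, fun ⟨i, hi⟩ => hi ▸ i.2⟩)
    obtain ⟨a, b, rfl⟩ := exists_rep f
    have hab : a ≠ b := by simpa using hd' _ hf'
    have hflip := (L'.flip ⟨_, hf'⟩ a b rfl ⟨_, hf'⟩).2 rfl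
    obtain ⟨i, u, w, hi, he, hg⟩ := L.exists_flip hc (fun x => pos' x ⟨_, hf'⟩ = true) a b (by
      intro h
      rw [Bool.eq_iff_iff.2 h] at hflip
      exact hflip rfl)
    have hg' : pos' u ⟨_, hf'⟩ ≠ pos' w ⟨_, hf'⟩ := fun h => hg (by rw [h])
    have heT : s(u, w) ∈ T := by rw [← he]; exact (L.range _).2 ⟨i, rfl⟩
    have hlt := H a b hab hf i hi
    by_cases hin : s(u, w) ∈ T'
    · exfalso
      have := (L'.flip ⟨_, hin⟩ u w rfl ⟨_, hf'⟩).1 hg'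
      have h2 : s(a, b) = s(u, w) := congrArg Subtype.val this
      rw [h2] at hf
      exact hf heT
    have hex := L'.exchange hT' ⟨_, hf'⟩ u w hg' hin
    dsimp only at hex
    have hw : ∑ x ∈ insert s(u, w) (T'.erase s(a, b)), W x < ∑ x ∈ T', W x := by
      rw [weight_exchange hf' hin, ← he]
      linarith
    by_cases h3 : insert s(u, w) (T'.erase s(a, b)) = T
    · rwa [h3] at hw
    · refine lt_trans (ih _ ?_ _ rfl hex h3) hw
      rw [← hm]
      refine Finset.card_lt_card ?_
      refine (Finset.ssubset_iff_of_subset ?_).2 ⟨s(a, b), by simp [hf, hf'], ?_⟩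
      · intro x hx
        rw [Finset.mem_sdiff, Finset.mem_insert, Finset.mem_erase] at hx
        rcases hx.1 with rfl | h
        · exact absurd heT hx.2
        · exact Finset.mem_sdiff.2 ⟨h.2, hx.2⟩
      · intro hx
        rw [Finset.mem_sdiff, Finset.mem_insert, Finset.mem_erase] at hx
        rcases hx.1 with h | h
        · rw [h] at hf; exact hf heT
        · exact h.1 rfl

lemma mstEvent_iff [Fintype V] (L : Lab T ed pos) (hT : IsSpanningTree (⊤ : SimpleGraph V) T)
    (w : (⊤ : SimpleGraph V).edgeSet → ℝ) :
    w ∈ mstEvent ⊤ T ↔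
      ∀ a b, a ≠ b → s(a, b) ∉ T → ∀ i, pos a i ≠ pos b i → wex w (ed i) < wex w s(a, b) := by
  have hd := ((spanning_iff T).1 hT).1
  constructor
  · intro h a b hab hf i hi
    have hex := L.exchange hT i a b hi hf
    have h1 := h.2 _ hex (fun h => hf (h ▸ Finset.mem_insert_self _ _))
    rw [treeWeight_eq w T hd, treeWeight_eq w _ ((spanning_iff _).1 hex).1,
      weight_exchange ((L.range _).2 ⟨i, rfl⟩) hf] at h1
    linarith
  · intro H
    refine ⟨hT, fun T' hT' hne => ?_⟩
    rw [treeWeight_eq w T hd, treeWeight_eq w _ ((spanning_iff _).1 hT').1]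
    exact mst_of_cycle L hT (wex w) H _ T' rfl hT' hne

end

/-! ### The law of the edge variables -/

def unif : Measure ℝ := (volume : Measure ℝ).restrict (Set.Icc (0 : ℝ) 1)

instance : IsProbabilityMeasure unif := ⟨by simp [unif]⟩

def gg (a : ℝ) : ENNReal := unif (Set.Ioi a)

lemma gg_anti : Antitone gg := fun _ _ h => measure_mono (Set.Ioi_subset_Ioi h)

lemma gg_eq (a : ℝ) (h0 : 0 ≤ a) : gg a = ENNReal.ofReal (1 - a) := by
  unfold gg unif
  rw [Measure.restrict_apply measurableSet_Ioi]
  have : Set.Ioi a ∩ Set.Icc 0 1 = Set.Ioc a 1 := by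
    ext t
    simp only [Set.mem_inter_iff, Set.mem_Ioi, Set.mem_Icc, Set.mem_Ioc]
    constructor
    · rintro ⟨h, h1, h2⟩; exact ⟨h, h2⟩
    · rintro ⟨h, h1⟩; exact ⟨h, by linarith, h1⟩
  rw [this, Real.volume_Ioc]

def mu : Measure ENNReal := unif.map gg

lemma gg_meas : Measurable gg := gg_anti.measurable

instance : IsProbabilityMeasure mu := Measure.isProbabilityMeasure_map gg_meas.aemeasurable

lemma mu_le_one : ∀ᵐ a ∂mu, a ≤ 1 := by
  unfold mu
  rw [ae_map_iff gg_meas.aemeasurable measurableSet_Iic]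
  exact Filter.Eventually.of_forall fun a => prob_le_one

instance : NullSingletonClass mu := by
  constructor
  intro c
  unfold mu
  rw [Measure.map_apply gg_meas (measurableSet_singleton c)]
  unfold unif
  rw [Measure.restrict_apply (gg_meas (measurableSet_singleton c))]
  refine measure_mono_null (t := {1 - c.toReal}) ?_ (by simp)
  rintro t ⟨h1, h2⟩
  have h1 : gg t = c := h1
  rw [gg_eq t h2.1] at h1
  rw [Set.mem_singleton_iff, ← h1, ENNReal.toReal_ofReal (by linarith [h2.2])]
  ring

lemma mu_Ioo (a b : ℝ) (ha : 0 ≤ a) (hab : a < b) (hb : b ≤ 1) :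
    0 < mu (Set.Ioo (ENNReal.ofReal a) (ENNReal.ofReal b)) := by
  unfold mu
  rw [Measure.map_apply gg_meas measurableSet_Ioo]
  unfold unif
  rw [Measure.restrict_apply (gg_meas measurableSet_Ioo)]
  refine lt_of_lt_of_le (b := volume (Set.Ioo (1 - b) (1 - a))) ?_ (measure_mono ?_)
  · rw [Real.volume_Ioo]; simpa using hab
  · intro t ht
    refine ⟨?_, ⟨by linarith [ht.1], by linarith [ht.2]⟩⟩
    change gg t ∈ Set.Ioo (ENNReal.ofReal a) (ENNReal.ofReal b)
    rw [gg_eq t (by linarith [ht.1])]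
    constructor
    · exact (ENNReal.ofReal_lt_ofReal_iff (by linarith [ht.2])).2 (by linarith [ht.2])
    · exact (ENNReal.ofReal_lt_ofReal_iff (by linarith [ht.1])).2 (by linarith [ht.1])

lemma unif_inter {ι : Type*} (S : Finset ι) (hS : S.Nonempty) (a : ι → ℝ) :
    unif {t | ∀ i ∈ S, a i < t} = S.inf fun i => gg (a i) := by
  obtain ⟨m, hm, hmax⟩ := Finset.exists_max_image S a hS
  have : {t | ∀ i ∈ S, a i < t} = Set.Ioi (a m) := by
    ext t
    constructor
    · intro h; exact h m hm
    · intro h i hi; exact lt_of_le_of_lt (hmax i hi) h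
  rw [this]
  refine le_antisymm (Finset.le_inf fun i hi => gg_anti (hmax i hi)) ?_
  exact Finset.inf_le (f := fun i => gg (a i)) hm

/-! ### The product formula -/

section
variable {ι : Type*} [Fintype ι]

def pth (pos : V → ι → Bool) : Sym2 V → Finset ι :=
  Sym2.lift ⟨fun u w => Finset.univ.filter fun i => pos u i ≠ pos w i, by
    intro u w; ext i; simp [eq_comm]⟩

lemma mem_pth (pos : V → ι → Bool) (u w : V) (i : ι) :
    i ∈ pth pos s(u, w) ↔ pos u i ≠ pos w i := by
  simp [pth]

def wt (S : Finset ι) (x : ι → ENNReal) : ENNReal := if 2 ≤ S.card then S.inf x else 1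

lemma measurable_wt (S : Finset ι) : Measurable (wt S) := by
  unfold wt
  by_cases h : 2 ≤ S.card
  · simp only [h, if_true]; exact measurable_finset_inf_apply S
  · simp only [h, if_false]; exact measurable_const

lemma wt_le_one (S : Finset ι) (x : ι → ENNReal) (hx : ∀ i, x i ≤ 1) : wt S x ≤ 1 := by
  unfold wt
  split_ifs with h
  · obtain ⟨i, hi⟩ := Finset.card_pos.1 (show 0 < S.card by omega)
    exact (Finset.inf_le hi).trans (hx i)
  · exact le_rfl

def Iv [Fintype V] (pos : V → ι → Bool) (x : ι → ENNReal) : ENNReal :=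
  ∏ e : Sym2 V, wt (pth pos e) x

def Fv [Fintype V] (pos : V → ι → Bool) : ENNReal :=
  ∫⁻ x, Iv pos x ∂(Measure.pi fun _ : ι => mu)

lemma measurable_Iv [Fintype V] (pos : V → ι → Bool) : Measurable (Iv pos) :=
  Finset.measurable_prod _ fun _ _ => measurable_wt _

lemma ae_pi_le_one : ∀ᵐ x ∂(Measure.pi fun _ : ι => mu), ∀ i, x i ≤ 1 := by
  have := fun i : ι => Measure.tendsto_eval_ae_ae (μ := fun _ : ι => mu) (i := i)
  rw [ae_all_iff]
  intro i
  exact (this i).eventually mu_le_one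

lemma Iv_le_one [Fintype V] (pos : V → ι → Bool) (x : ι → ENNReal) (hx : ∀ i, x i ≤ 1) :
    Iv pos x ≤ 1 := Finset.prod_le_one' fun _ _ => wt_le_one _ _ hx

lemma Fv_le_one [Fintype V] (pos : V → ι → Bool) : Fv pos ≤ 1 := by
  unfold Fv
  calc _ ≤ ∫⁻ _, 1 ∂(Measure.pi fun _ : ι => mu) :=
        lintegral_mono_ae (ae_pi_le_one.mono fun x hx => Iv_le_one pos x hx)
    _ = 1 := by simp

variable {T : Finset (Sym2 V)} {ed : ι → Sym2 V} {pos : V → ι → Bool}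

lemma Lab.pth_card [Fintype V] (L : Lab T ed pos) (hc : (spanGraph T).Connected) (e : Sym2 V) :
    2 ≤ (pth pos e).card ↔ ¬ e.IsDiag ∧ e ∉ T := by
  obtain ⟨a, b, rfl⟩ := exists_rep e
  constructor
  · intro h
    obtain ⟨i, j, hi, hj, hij⟩ := Finset.one_lt_card_iff.1 h
    rw [mem_pth] at hi hj
    refine ⟨fun hd => ?_, fun hT => ?_⟩
    · have : a = b := by simpa using hd
      rw [this] at hi; exact hi rfl
    · obtain ⟨k, hk⟩ := (L.range _).1 hT
      exact hij (((L.flip k a b hk i).1 hi).trans ((L.flip k a b hk j).1 hj).symm)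
  · rintro ⟨hd, hT⟩
    have hab : a ≠ b := by simpa using hd
    by_contra hlt
    have hne : (pth pos s(a, b)).Nonempty := by
      by_contra h0
      rw [Finset.not_nonempty_iff_eq_empty] at h0
      refine hab (L.pos_inj hc (funext fun i => ?_))
      by_contra h
      have := (mem_pth pos a b i).2 h
      simp [h0] at this
    obtain ⟨i, hi⟩ := Finset.card_eq_one.1 (show (pth pos s(a, b)).card = 1 by
      have := Finset.card_pos.2 hne; omega)
    have := L.eq_of_single hc a b hab i (fun j hj => by
      have := (mem_pth pos a b j).2 hj
      rw [hi] at this; simpa using this)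
    exact hT ((L.range _).2 ⟨i, this⟩)

end

section
variable {ι : Type*} [Fintype ι] {T : Finset (Sym2 V)} {ed : ι → Sym2 V} {pos : V → ι → Bool}

lemma event_measure [Fintype V] (L : Lab T ed pos) (hT : IsSpanningTree (⊤ : SimpleGraph V) T) :
    edgeUniform (⊤ : SimpleGraph V).edgeSet (mstEvent ⊤ T) = Fv pos := by
  obtain ⟨hd, hc, -⟩ := (spanning_iff T).1 hT
  let E := (⊤ : SimpleGraph V).edgeSet
  have memE : ∀ e : Sym2 V, e ∈ E ↔ ¬ e.IsDiag := by intro e; simp [E]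
  let pr : E → Prop := fun e => (e : Sym2 V) ∈ T
  let eι : ι → {e : E // pr e} := fun i =>
    ⟨⟨ed i, (memE _).2 <| L.not_diag _ ((L.range _).2 ⟨i, rfl⟩)⟩, (L.range _).2 ⟨i, rfl⟩⟩
  have heι : Function.Bijective eι := by
    constructor
    · intro i j h
      exact L.inj (congrArg (fun z => ((z : {e : E // pr e}) : E).1) h)
    · rintro ⟨⟨e, he⟩, hp⟩
      obtain ⟨i, hi⟩ := (L.range e).1 hp
      exact ⟨i, Subtype.ext (Subtype.ext hi)⟩
  let ee := Equiv.ofBijective eι heι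
  let B : Set (({e : E // pr e} → ℝ) × ({e : E // ¬ pr e} → ℝ)) :=
    {z | ∀ f : {e : E // ¬ pr e}, ∀ i ∈ pth pos f.1.1, z.1 (eι i) < z.2 f}
  have hB : MeasurableSet B := by
    simp only [B, Set.ofPred_forall]
    exact MeasurableSet.iInter fun f => MeasurableSet.iInter fun i => MeasurableSet.iInter fun _ =>
      measurableSet_lt ((measurable_pi_apply _).comp measurable_fst)
        ((measurable_pi_apply _).comp measurable_snd)
  have mp := measurePreserving_piEquivPiSubtypeProd (fun _ : E => unif) pr
  have hE : mstEvent ⊤ T = (MeasurableEquiv.piEquivPiSubtypeProd (fun _ : E => ℝ) pr) ⁻¹' B := by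
    ext w
    rw [mstEvent_iff L hT w]
    constructor
    · intro H f i hi
      obtain ⟨⟨e, he⟩, hp⟩ := f
      obtain ⟨a, b, rfl⟩ := exists_rep e
      have hab : a ≠ b := by simpa using (memE _).1 he
      have := H a b hab hp i ((mem_pth _ _ _ _).1 hi)
      rw [wex, wex, dif_pos he, dif_pos (eι i).1.2] at this
      exact this
    · intro H a b hab hf i hi
      have he : s(a, b) ∈ E := by simpa [E] using hab
      have := H ⟨⟨s(a, b), he⟩, hf⟩ i ((mem_pth _ _ _ _).2 hi)
      rw [wex, wex, dif_pos he, dif_pos (eι i).1.2]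
      exact this
  have h1 : edgeUniform E (mstEvent ⊤ T) =
      ((Measure.pi fun _ : {e : E // pr e} => unif).prod
        (Measure.pi fun _ : {e : E // ¬ pr e} => unif)) B := by
    rw [hE]
    exact mp.measure_preimage hB.nullMeasurableSet
  change edgeUniform E (mstEvent ⊤ T) = _
  rw [h1, Measure.prod_apply hB]
  have h2 : ∀ a : {e : E // pr e} → ℝ,
      (Measure.pi fun _ : {e : E // ¬ pr e} => unif) (Prod.mk a ⁻¹' B) =
        Iv pos (fun i => gg (a (eι i))) := by
    intro a
    have hs : Prod.mk a ⁻¹' B = Set.pi Set.univ fun f : {e : E // ¬ pr e} =>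
        {t | ∀ i ∈ pth pos f.1.1, a (eι i) < t} := by
      ext b
      simp [B, Set.mem_pi]
    rw [hs, Measure.pi_pi]
    have h3 : ∀ f : {e : E // ¬ pr e}, unif {t | ∀ i ∈ pth pos f.1.1, a (eι i) < t} =
        wt (pth pos f.1.1) (fun i => gg (a (eι i))) := by
      intro f
      have h2 := (L.pth_card hc f.1.1).2 ⟨(memE _).1 f.1.2, f.2⟩
      rw [unif_inter _ (Finset.card_pos.1 (by omega)), wt, if_pos h2]
    rw [Finset.prod_congr rfl fun f _ => h3 f]
    unfold Iv
    refine Finset.prod_bij_ne_one (fun f _ _ => f.1.1) ?_ ?_ ?_ ?_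
    · intro f _ _; exact Finset.mem_univ _
    · intro f _ _ f' _ _ h; exact Subtype.ext (Subtype.ext h)
    · intro e _ hne
      have hcard : 2 ≤ (pth pos e).card := by
        by_contra h
        exact hne (by rw [wt, if_neg h])
      obtain ⟨h1, h2⟩ := (L.pth_card hc e).1 hcard
      exact ⟨⟨⟨e, by simpa [E] using h1⟩, h2⟩, Finset.mem_univ _, hne, rfl⟩
    · intro f _ _; rfl
  rw [lintegral_congr h2]
  have mp2 : MeasurePreserving (fun (a : {e : E // pr e} → ℝ) i => gg (a i))
      (Measure.pi fun _ => unif) (Measure.pi fun _ => mu) :=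
    measurePreserving_pi _ _ fun _ => ⟨gg_meas, rfl⟩
  have h4 := mp2.lintegral_comp (f := fun x => Iv pos (fun i => x (eι i)))
    ((measurable_Iv pos).comp (measurable_pi_iff.2 fun i => measurable_pi_apply _))
  rw [h4]
  exact lintegral_pi_reindex mu ee (Iv pos)

lemma mstProb_eq [Fintype V] (L : Lab T ed pos) (hT : IsSpanningTree (⊤ : SimpleGraph V) T) :
    mstProb ⊤ T = (Fv pos).toReal := by
  rw [mstProb]
  convert congrArg ENNReal.toReal (event_measure L hT)

end

/-! ### Stars are maximal -/

set_option linter.unusedSectionVars false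

section
variable {ι : Type*} [Fintype ι]

def box (k : ι) : Set (ι → ENNReal) :=
  Set.pi Set.univ fun i => if i = k then Set.Ioo (ENNReal.ofReal 0) (ENNReal.ofReal (1 / 2))
    else Set.Ioo (ENNReal.ofReal (1 / 2)) (ENNReal.ofReal 1)

lemma box_pos (k : ι) : (Measure.pi fun _ : ι => mu) (box k) ≠ 0 := by
  unfold box
  rw [Measure.pi_pi]
  refine Finset.prod_ne_zero_iff.2 fun i _ => ?_
  split_ifs
  · exact (mu_Ioo 0 (1 / 2) le_rfl (by norm_num) (by norm_num)).ne'
  · exact (mu_Ioo (1 / 2) 1 (by norm_num) (by norm_num) le_rfl).ne'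

lemma box_self {k : ι} {x : ι → ENNReal} (h : x ∈ box k) : x k < ENNReal.ofReal (1 / 2) := by
  have := h k (Set.mem_univ _)
  simp only [if_true] at this
  exact this.2

lemma box_ne {k : ι} {x : ι → ENNReal} (h : x ∈ box k) {i : ι} (hi : i ≠ k) :
    ENNReal.ofReal (1 / 2) < x i := by
  have := h i (Set.mem_univ _)
  simp only [if_neg hi] at this
  exact this.1

lemma box_le_one {k : ι} {x : ι → ENNReal} (h : x ∈ box k) (i : ι) : x i ≤ 1 := by
  have := h i (Set.mem_univ _)
  by_cases hi : i = k
  · simp only [if_pos hi] at this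
    refine this.2.le.trans ?_
    rw [← ENNReal.ofReal_one]
    exact ENNReal.ofReal_le_ofReal (by norm_num)
  · simp only [if_neg hi] at this
    simpa using this.2.le

lemma box_gt_zero {k : ι} {x : ι → ENNReal} (h : x ∈ box k) (i : ι) : 0 < x i := by
  have := h i (Set.mem_univ _)
  by_cases hi : i = k
  · simp only [if_pos hi] at this
    exact lt_of_le_of_lt zero_le this.1
  · simp only [if_neg hi] at this
    exact lt_of_le_of_lt zero_le this.1

lemma wt_pos (S : Finset ι) (x : ι → ENNReal) (hx : ∀ i, 0 < x i) : wt S x ≠ 0 := by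
  unfold wt
  split_ifs
  · refine ne_of_gt ?_
    rw [Finset.lt_inf_iff ENNReal.zero_lt_top]
    exact fun i _ => hx i
  · simp

lemma wt_diag_toFinset (e : Sym2 ι) (h : e.IsDiag) (x : ι → ENNReal) : wt e.toFinset x = 1 := by
  rw [wt, Sym2.card_toFinset_of_isDiag e h, if_neg (by norm_num)]

lemma toFinset_eq_of (e : Sym2 ι) (S : Finset ι) (h : ∀ i, i ∈ e ↔ i ∈ S) (x : ι → ENNReal) :
    wt e.toFinset x = wt S x := by
  congr 1
  ext i
  rw [Sym2.mem_toFinset, h]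

def starI (x : ι → ENNReal) : ENNReal := ∏ e : Sym2 ι, wt e.toFinset x

lemma measurable_starI : Measurable (starI (ι := ι)) :=
  Finset.measurable_prod _ fun _ _ => measurable_wt _

lemma starI_eq (x : ι → ENNReal) :
    starI x = ∏ e ∈ Finset.univ.filter (fun e : Sym2 ι => ¬ e.IsDiag), wt e.toFinset x := by
  unfold starI
  symm
  refine Finset.prod_subset (Finset.subset_univ _) fun e _ he => ?_
  have : e.IsDiag := by simpa using he
  rw [wt, Sym2.card_toFinset_of_isDiag e this, if_neg (by norm_num)]

variable {T : Finset (Sym2 V)} {ed : ι → Sym2 V} {pos : V → ι → Bool}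

def Outer (ed : ι → Sym2 V) (pos : V → ι → Bool) (e : Sym2 ι) (f : Sym2 V) : Prop :=
  ∃ i j u w, e = s(i, j) ∧ f = s(u, w) ∧ u ∈ ed i ∧ w ∈ ed j ∧ pos u i ≠ pos w i ∧ pos u j ≠ pos w j

lemma Lab.exists_outer (L : Lab T ed pos) (e : Sym2 ι) (he : ¬ e.IsDiag) :
    ∃ f, Outer ed pos e f := by
  obtain ⟨i, j, rfl⟩ := exists_rep e
  have hij : i ≠ j := by simpa using he
  obtain ⟨a, b, hi⟩ := exists_rep (ed i)
  obtain ⟨c, d, hj⟩ := exists_rep (ed j)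
  have f1 := (L.flip i a b hi i).2 rfl
  have f2 := (L.flip j c d hj j).2 rfl
  have g1 : pos a j = pos b j := by
    by_contra h; exact hij ((L.flip i a b hi j).1 h).symm
  have g2 : pos c i = pos d i := by
    by_contra h; exact hij ((L.flip j c d hj i).1 h)
  obtain ⟨u, hu, hu1, hu2⟩ : ∃ u, u ∈ ed i ∧ pos u i ≠ pos c i ∧ pos u j = pos a j := by
    by_cases h : pos a i = pos c i
    · refine ⟨b, by simp [hi], fun h2 => f1 (h.trans h2.symm), g1.symm⟩
    · exact ⟨a, by simp [hi], h, rfl⟩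
  obtain ⟨w, hw, hw1, hw2⟩ : ∃ w, w ∈ ed j ∧ pos a j ≠ pos w j ∧ pos w i = pos c i := by
    by_cases h : pos a j = pos c j
    · refine ⟨d, by simp [hj], fun h2 => f2 (h.symm.trans h2), g2.symm⟩
    · exact ⟨c, by simp [hj], h, rfl⟩
  exact ⟨s(u, w), i, j, u, w, rfl, rfl, hu, hw, by rwa [hw2], by rwa [hu2]⟩

lemma Lab.outer_inj (L : Lab T ed pos) (hc : (spanGraph T).Connected) (e e' : Sym2 ι) (f : Sym2 V)
    (h : Outer ed pos e f) (h' : Outer ed pos e' f) : e = e' := by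
  obtain ⟨i, j, u, w, rfl, rfl, hu, hw, h1, h2⟩ := h
  obtain ⟨i', j', u', w', rfl, hf, hu', hw', h1', h2'⟩ := h'
  rcases Sym2.eq_iff.1 hf with ⟨rfl, rfl⟩ | ⟨rfl, rfl⟩
  · rw [L.uniq_start hc u w i i' hu hu' h1 h1', L.uniq_start hc w u j j' hw hw' h2.symm h2'.symm]
  · rw [L.uniq_start hc u w i j' hu hw' h1 h2'.symm, L.uniq_start hc w u j i' hw hu' h2.symm h1',
      Sym2.eq_swap]

lemma Outer.subset {e : Sym2 ι} {f : Sym2 V} (h : Outer ed pos e f) : e.toFinset ⊆ pth pos f := by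
  obtain ⟨i, j, u, w, rfl, rfl, hu, hw, h1, h2⟩ := h
  intro k hk
  rw [Sym2.mem_toFinset, Sym2.mem_iff] at hk
  rw [mem_pth]
  rcases hk with rfl | rfl
  · exact h1
  · exact h2

lemma Outer.wt_le {e : Sym2 ι} {f : Sym2 V} (h : Outer ed pos e f) (he : ¬ e.IsDiag)
    (x : ι → ENNReal) : wt (pth pos f) x ≤ wt e.toFinset x := by
  have h2 := Sym2.card_toFinset_of_not_isDiag e he
  have h3 := Finset.card_le_card h.subset
  rw [wt, wt, if_pos (by omega), if_pos (by omega)]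
  exact Finset.inf_mono h.subset

lemma Lab.Iv_le_outer [Fintype V] (L : Lab T ed pos) (hc : (spanGraph T).Connected)
    (Ψ : Sym2 ι → Sym2 V) (hΨ : ∀ e, ¬ e.IsDiag → Outer ed pos e (Ψ e))
    (x : ι → ENNReal) (hx : ∀ i, x i ≤ 1) :
    Iv pos x ≤ ∏ e ∈ Finset.univ.filter (fun e : Sym2 ι => ¬ e.IsDiag), wt (pth pos (Ψ e)) x := by
  set D := Finset.univ.filter (fun e : Sym2 ι => ¬ e.IsDiag) with hD
  have hinj : Set.InjOn Ψ D := by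
    intro e he e' he' h
    have h1 : ¬ e.IsDiag := by simpa [hD] using he
    have h2 : ¬ e'.IsDiag := by simpa [hD] using he'
    exact L.outer_inj hc e e' (Ψ e) (hΨ e h1) (h ▸ hΨ e' h2)
  unfold Iv
  rw [← Finset.prod_image (f := fun f => wt (pth pos f) x) hinj,
    ← Finset.prod_sdiff (Finset.subset_univ (D.image Ψ))]
  exact mul_le_of_le_one_left zero_le (Finset.prod_le_one' fun _ _ => wt_le_one _ _ hx)

lemma Lab.Iv_le_star [Fintype V] (L : Lab T ed pos) (hc : (spanGraph T).Connected)
    (x : ι → ENNReal) (hx : ∀ i, x i ≤ 1) : Iv pos x ≤ starI x := by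
  have : Nonempty (Sym2 V) := hc.nonempty.map fun r => s(r, r)
  choose! Ψ hΨ using L.exists_outer
  refine (L.Iv_le_outer hc Ψ hΨ x hx).trans ?_
  rw [starI_eq]
  refine Finset.prod_le_prod' fun e he => (hΨ e ?_).wt_le ?_ x
  all_goals simpa using he

lemma Lab.Fv_le_star [Fintype V] (L : Lab T ed pos) (hc : (spanGraph T).Connected) :
    Fv pos ≤ ∫⁻ x, starI x ∂(Measure.pi fun _ : ι => mu) :=
  lintegral_mono_ae (ae_pi_le_one.mono fun x hx => L.Iv_le_star hc x hx)

lemma Lab.Fv_lt_star [Fintype V] (L : Lab T ed pos) (hc : (spanGraph T).Connected) (i j : ι)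
    (hij : ∀ v, v ∈ ed i → v ∉ ed j) :
    Fv pos < ∫⁻ x, starI x ∂(Measure.pi fun _ : ι => mu) := by
  have : Nonempty (Sym2 V) := hc.nonempty.map fun r => s(r, r)
  choose! Ψ hΨ using L.exists_outer
  have hne : i ≠ j := by
    rintro rfl
    obtain ⟨a, b, hi⟩ := exists_rep (ed i)
    exact hij a (by simp [hi]) (by simp [hi])
  have hnd : ¬ s(i, j).IsDiag := by simpa using hne
  obtain ⟨k, hk, hk1⟩ : ∃ k ∈ pth pos (Ψ s(i, j)), k ∉ s(i, j) := by
    by_contra hcon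
    push Not at hcon
    obtain ⟨i', j', u, w, he, hf, hu, hw, h1, h2⟩ := hΨ _ hnd
    have hij' : ∀ v, v ∈ ed i' → v ∉ ed j' := by
      rcases Sym2.eq_iff.1 he with ⟨rfl, rfl⟩ | ⟨rfl, rfl⟩
      · exact hij
      · exact fun v h1 h2 => hij v h2 h1
    have hne' : i' ≠ j' := by
      rw [he] at hnd
      simpa using hnd
    obtain ⟨u', hu'⟩ := Sym2.mem_iff_exists.1 hu
    have hfl := (L.flip i' u u' hu')
    have huw : pos u' j' ≠ pos w j' := by
      have : pos u j' = pos u' j' := by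
        by_contra h; exact hne' ((hfl j').1 h).symm
      rwa [← this]
    have := L.eq_of_single hc u' w (fun h => huw (by rw [h])) j' (by
      intro l hl
      by_contra hlj
      by_cases hli : l = i'
      · subst hli
        have := (hfl l).2 rfl
        revert this hl h1
        cases pos u l <;> cases pos u' l <;> cases pos w l <;> simp
      · have e1 : pos u l = pos u' l := by
          by_contra h; exact hli ((hfl l).1 h)
        have := hcon l (by rw [hf, mem_pth, e1]; exact hl)
        rw [he, Sym2.mem_iff] at this
        rcases this with h | h
        · exact hli h
        · exact hlj h)
    exact hij' u' (by simp [hu']) (by simp [this])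
  refine lintegral_strict_mono_of_ae_le_of_ae_lt_on measurable_starI.aemeasurable
    (ne_top_of_le_ne_top ENNReal.one_ne_top (Fv_le_one pos))
    (ae_pi_le_one.mono fun x hx => L.Iv_le_star hc x hx) (box_pos k)
    (Filter.Eventually.of_forall fun x hx => ?_)
  have hx1 := box_le_one hx
  have hx0 := box_gt_zero hx
  refine lt_of_le_of_lt (L.Iv_le_outer hc Ψ hΨ x hx1) ?_
  rw [starI_eq]
  set D := Finset.univ.filter (fun e : Sym2 ι => ¬ e.IsDiag) with hD
  have hmem : s(i, j) ∈ D := by simpa [hD] using hne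
  rw [← Finset.mul_prod_erase D _ hmem, ← Finset.mul_prod_erase D (fun e => wt e.toFinset x) hmem]
  have hle : ∏ e ∈ D.erase s(i, j), wt (pth pos (Ψ e)) x ≤ ∏ e ∈ D.erase s(i, j), wt e.toFinset x := by
    refine Finset.prod_le_prod' fun e he => ?_
    have : ¬ e.IsDiag := by simpa [hD] using Finset.mem_of_mem_erase he
    exact (hΨ e this).wt_le this x
  have h0 : ∏ e ∈ D.erase s(i, j), wt e.toFinset x ≠ 0 :=
    Finset.prod_ne_zero_iff.2 fun e _ => wt_pos _ _ hx0
  have ht : ∏ e ∈ D.erase s(i, j), wt e.toFinset x ≠ ⊤ :=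
    ne_top_of_le_ne_top ENNReal.one_ne_top (Finset.prod_le_one' fun e _ => wt_le_one _ _ hx1)
  refine lt_of_le_of_lt (mul_le_mul' le_rfl hle) ((ENNReal.mul_lt_mul_iff_left h0 ht).2 ?_)
  have hcd := Sym2.card_toFinset_of_not_isDiag _ hnd
  have hcd' := Finset.card_le_card (hΨ _ hnd).subset
  rw [wt, wt, if_pos (by omega), if_pos (by omega)]
  refine lt_of_le_of_lt (Finset.inf_le hk) ((box_self hx).trans ?_)
  rw [Finset.lt_inf_iff (by simp)]
  intro l hl
  refine box_ne hx fun h => hk1 ?_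
  rw [← h]
  simpa using hl

lemma Lab.exists_disjoint (L : Lab T ed pos) (hc : (spanGraph T).Connected)
    (h : ¬ ∃ c : V, ∀ e ∈ T, c ∈ e) : ∃ i j, ∀ v, v ∈ ed i → v ∉ ed j := by
  by_contra hcon
  push Not at hcon h
  obtain ⟨r⟩ := hc.nonempty
  obtain ⟨e0, he0, -⟩ := h r
  obtain ⟨i, rfl⟩ := (L.range _).1 he0
  obtain ⟨a, b, hi⟩ := exists_rep (ed i)
  obtain ⟨e1, he1, ha⟩ := h a
  obtain ⟨j, rfl⟩ := (L.range _).1 he1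
  obtain ⟨e2, he2, hb⟩ := h b
  obtain ⟨k, rfl⟩ := (L.range _).1 he2
  have hbj : b ∈ ed j := by
    obtain ⟨v, h1, h2⟩ := hcon i j
    rw [hi, Sym2.mem_iff] at h1
    rcases h1 with rfl | rfl
    · exact absurd h2 ha
    · exact h2
  have hak : a ∈ ed k := by
    obtain ⟨v, h1, h2⟩ := hcon i k
    rw [hi, Sym2.mem_iff] at h1
    rcases h1 with rfl | rfl
    · exact h2
    · exact absurd h2 hb
  obtain ⟨x, hx⟩ := Sym2.mem_iff_exists.1 hbj
  obtain ⟨y, hy⟩ := Sym2.mem_iff_exists.1 hak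
  have hxy : x = y := by
    obtain ⟨v, h1, h2⟩ := hcon j k
    rw [hx, Sym2.mem_iff] at h1
    rw [hy, Sym2.mem_iff] at h2
    rcases h1 with rfl | rfl
    · rcases h2 with rfl | rfl
      · exact absurd hbj ha
      · rw [hy] at hb; simp at hb
    · rcases h2 with rfl | rfl
      · rw [hx] at ha; simp at ha
      · rfl
  subst hxy
  have hij : i ≠ j := by
    rintro rfl
    rw [hi] at ha; simp at ha
  have hik : i ≠ k := by
    rintro rfl
    rw [hi] at hb; simp at hb
  have f1 := (L.flip i a b hi i).2 rfl
  have f2 : pos b i = pos x i := by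
    by_contra h; exact hij ((L.flip j b x hx i).1 h)
  have f3 : pos a i = pos x i := by
    by_contra h; exact hik ((L.flip k a x hy i).1 h)
  exact f1 (f3.trans f2.symm)

end

lemma star_lab [Fintype V] (T : Finset (Sym2 V)) (hT : IsSpanningTree (⊤ : SimpleGraph V) T)
    (c : V) (h : ∀ e ∈ T, c ∈ e) :
    ∃ (ed : {v : V // v ≠ c} → Sym2 V) (pos : V → {v : V // v ≠ c} → Bool), Lab T ed pos ∧
      ∀ x, Iv pos x = starI x := by
  obtain ⟨hd, hc, hcard⟩ := (spanning_iff T).1 hT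
  let ed : {v : V // v ≠ c} → Sym2 V := fun v => s(c, v)
  have inj : Function.Injective ed := by
    intro a b hab
    have : s(c, (a : V)) = s(c, (b : V)) := hab
    rw [Sym2.congr_right] at this
    exact Subtype.ext this
  have hsub : T ⊆ Finset.univ.image ed := by
    intro e he
    obtain ⟨y, rfl⟩ := Sym2.mem_iff_exists.1 (h e he)
    have : c ≠ y := by simpa using hd _ he
    exact Finset.mem_image.2 ⟨⟨y, this.symm⟩, Finset.mem_univ _, rfl⟩
  have hTe : T = Finset.univ.image ed := by
    refine Finset.eq_of_subset_of_card_le hsub ?_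
    rw [Finset.card_image_of_injective _ inj, Finset.card_univ]
    have := Fintype.card_subtype_compl (fun v => v = c)
    simp only [Fintype.card_subtype_eq] at this
    have h2 : Fintype.card {v : V // v ≠ c} = Fintype.card {v : V // ¬ v = c} := rfl
    omega
  let pos : V → {v : V // v ≠ c} → Bool := fun u i => decide (u = i.1)
  refine ⟨ed, pos, ⟨inj, ?_, ?_⟩, ?_⟩
  · intro e; rw [hTe]; simp
  · intro i u w hi j
    have key : pos c j ≠ pos i.1 j ↔ j = i := by
      have h1 : ¬ c = j.1 := fun h => j.2 h.symm
      simp only [pos, h1, decide_false]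
      rw [ne_comm, ne_eq, Bool.not_eq_false, decide_eq_true_iff, Subtype.ext_iff, eq_comm]
    rcases Sym2.eq_iff.1 hi with ⟨rfl, rfl⟩ | ⟨rfl, rfl⟩
    · exact key
    · rw [ne_comm]; exact key
  · intro x
    unfold Iv starI
    symm
    refine Fintype.prod_of_injective (Sym2.map Subtype.val)
      (Sym2.map.injective Subtype.val_injective) _ _ ?_ ?_
    · intro e he
      obtain ⟨a, b, rfl⟩ := exists_rep e
      have hor : a = c ∨ b = c := by
        by_contra hcon
        push Not at hcon
        exact he ⟨s(⟨a, hcon.1⟩, ⟨b, hcon.2⟩), rfl⟩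
      rw [wt, if_neg]
      rw [not_le]
      refine Nat.lt_succ_of_le (Finset.card_le_one.2 ?_)
      intro i hi j hj
      rw [mem_pth] at hi hj
      have hi' : ¬ c = i.1 := fun h => i.2 h.symm
      have hj' : ¬ c = j.1 := fun h => j.2 h.symm
      rcases hor with rfl | rfl
      · simp only [pos, hi', hj', decide_false] at hi hj
        have h1 : b = i.1 := by simpa using hi
        have h2 : b = j.1 := by simpa using hj
        exact Subtype.ext (h1.symm.trans h2)
      · simp only [pos, hi', hj', decide_false] at hi hj
        have h1 : a = i.1 := by simpa using hi
        have h2 : a = j.1 := by simpa using hj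
        exact Subtype.ext (h1.symm.trans h2)
    · intro e
      obtain ⟨a, b, rfl⟩ := exists_rep e
      rw [Sym2.map_mk]
      by_cases hab : a = b
      · subst hab
        have : pth pos s(a.1, a.1) = ∅ := by
          ext i; simp [mem_pth]
        refine (wt_diag_toFinset _ (by simp) x).trans ?_
        rw [wt, this]
        simp
      · refine toFinset_eq_of _ _ (fun i => ?_) x
        rw [mem_pth, Sym2.mem_iff, iff_comm]
        simp only [pos, ne_eq, decide_eq_decide]
        have hab' : a.1 ≠ b.1 := fun h => hab (Subtype.ext h)
        constructor
        · intro hh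
          by_cases h1 : a.1 = i.1
          · exact Or.inl (Subtype.ext h1.symm)
          · by_cases h2 : b.1 = i.1
            · exact Or.inr (Subtype.ext h2.symm)
            · exact absurd (by tauto) hh
        · rintro (rfl | rfl) hh
          · exact hab' (hh.1 rfl).symm
          · exact hab' (hh.2 rfl)

/-! ### Moving a branch to the end of a leg -/

lemma prod_sym2_rk {W : Type*} [Fintype W] (rk : W → ℕ) (hrk : Function.Injective rk)
    (F : Sym2 W → ENNReal) (hF : ∀ e : Sym2 W, e.IsDiag → F e = 1) :
    ∏ e : Sym2 W, F e = ∏ u, ∏ w, if rk u < rk w then F s(u, w) else 1 := by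
  rw [← Fintype.prod_prod_type' (f := fun u w => if rk u < rk w then F s(u, w) else 1)]
  rw [← Finset.prod_filter]
  symm
  refine Finset.prod_bij_ne_one (fun e _ _ => s(e.1, e.2)) ?_ ?_ ?_ ?_
  · intro e _ _; exact Finset.mem_univ _
  · rintro ⟨a, b⟩ h1 - ⟨c, d⟩ h2 - h
    have h1 : rk a < rk b := by simpa using h1
    have h2 : rk c < rk d := by simpa using h2
    rcases Sym2.eq_iff.1 h with ⟨rfl, rfl⟩ | ⟨rfl, rfl⟩
    · rfl
    · exact absurd h1 h2.not_gt
  · intro e _ hne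
    obtain ⟨a, b, rfl⟩ := exists_rep e
    have hab : a ≠ b := by
      intro h; exact hne (hF _ (by simpa using h))
    rcases lt_or_gt_of_ne (fun h => hab (hrk h)) with h | h
    · exact ⟨(a, b), by simpa using h, hne, rfl⟩
    · exact ⟨(b, a), by simpa using h, by rw [Sym2.eq_swap]; exact hne, Sym2.eq_swap⟩
  · intro e _ _; rfl

lemma Iv_equiv {W ι : Type*} [Fintype W] [Fintype V] [Fintype ι] (e : W ≃ V) (pos : V → ι → Bool)
    (x : ι → ENNReal) : Iv (fun w => pos (e w)) x = Iv pos x := by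
  unfold Iv
  refine Fintype.prod_equiv (Equiv.ofBijective (Sym2.map e) ⟨Sym2.map.injective e.injective, ?_⟩)
    _ _ ?_
  · intro f
    obtain ⟨a, b, rfl⟩ := exists_rep f
    exact ⟨s(e.symm a, e.symm b), by simp⟩
  · intro f
    obtain ⟨a, b, rfl⟩ := exists_rep f
    rfl

lemma Fv_equiv {W ι : Type*} [Fintype W] [Fintype V] [Fintype ι] (e : W ≃ V) (pos : V → ι → Bool) :
    Fv (fun w => pos (e w)) = Fv pos :=
  lintegral_congr fun x => Iv_equiv e pos x

section
variable {ι : Type*} [Fintype ι]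

lemma wt_diag (pos : V → ι → Bool) (x : ι → ENNReal) (e : Sym2 V) (he : e.IsDiag) :
    wt (pth pos e) x = 1 := by
  obtain ⟨a, b, rfl⟩ := exists_rep e
  have : a = b := by simpa using he
  subst this
  have : pth pos s(a, a) = ∅ := by
    ext i; simp [mem_pth]
  rw [wt, this]; simp

lemma wt_eq_of (S : Finset ι) (x : ι → ENNReal) (c : ENNReal) (h2 : 2 ≤ S.card)
    (h : ∀ a, a ≤ c ↔ ∀ i ∈ S, a ≤ x i) : wt S x = c := by
  rw [wt, if_pos h2]
  refine le_antisymm ((h _).2 fun i hi => Finset.inf_le hi) (Finset.le_inf fun i hi => ?_)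
  exact (h c).1 le_rfl i hi

lemma wt_anti {S S' : Finset ι} (h : S ⊆ S') (x : ι → ENNReal) (hx : ∀ i, x i ≤ 1) :
    wt S' x ≤ wt S x := by
  by_cases h2 : 2 ≤ S.card
  · have := Finset.card_le_card h
    rw [wt, wt, if_pos h2, if_pos (by omega)]
    exact Finset.inf_mono h
  · rw [wt.eq_def S, if_neg h2]
    exact wt_le_one _ _ hx

lemma wt_congr {V' : Type*} {pos : V → ι → Bool} {pos' : V' → ι → Bool} {u w : V} {u' w' : V'}
    (x : ι → ENNReal)
    (h : ∀ i, pos u i ≠ pos w i ↔ pos' u' i ≠ pos' w' i) :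
    wt (pth pos s(u, w)) x = wt (pth pos' s(u', w')) x := by
  congr 1
  ext i
  rw [mem_pth, mem_pth, h]

end

lemma le_Mn (x : ℕ → ENNReal) (i j : ℕ) (a : ENNReal) :
    a ≤ Mn x i j ↔ ∀ l, i ≤ l → l < j → a ≤ x l := by
  unfold Mn
  rw [Finset.le_inf_iff]
  simp [Finset.mem_Ico]

lemma le_Mn_ext0 {p : ℕ} (y : Fin p → ENNReal) (i j : ℕ) (hj : j ≤ p) (a : ENNReal) :
    a ≤ Mn (ext0 p y) i j ↔ ∀ l : Fin p, i ≤ l → (l : ℕ) < j → a ≤ y l := by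
  rw [le_Mn]
  constructor
  · intro h l h1 h2
    have := h l h1 h2
    simpa [ext0] using this
  · intro h l h1 h2
    have := h ⟨l, by omega⟩ h1 h2
    simpa [ext0, show l < p by omega] using this

section move
variable {p : ℕ} {ρ β γ : Type*} [Fintype ρ] [Fintype β] [Fintype γ]

/-- Positions before the move. -/
def posA (p : ℕ) (B : β → ρ → Bool) (C : γ → ρ → Bool) :
    Fin (p + 1) ⊕ (β ⊕ γ) → Fin p ⊕ ρ → Bool :=
  Sum.elim (fun i => Sum.elim (fun l => decide ((l : ℕ) < i)) fun _ => false)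
    (Sum.elim (fun b => Sum.elim (fun _ => false) (B b)) (fun c => Sum.elim (fun _ => false) (C c)))

/-- Positions after the move. -/
def posB (p : ℕ) (B : β → ρ → Bool) (C : γ → ρ → Bool) :
    Fin (p + 1) ⊕ (β ⊕ γ) → Fin p ⊕ ρ → Bool :=
  Sum.elim (fun i => Sum.elim (fun l => decide ((l : ℕ) < i)) fun _ => false)
    (Sum.elim (fun b => Sum.elim (fun _ => false) (B b)) (fun c => Sum.elim (fun _ => true) (C c)))

lemma prod_split (F : Sym2 (Fin (p + 1) ⊕ (β ⊕ γ)) → ENNReal)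
    (hF : ∀ e : Sym2 (Fin (p + 1) ⊕ (β ⊕ γ)), e.IsDiag → F e = 1) (rβ : β → ℕ) (rγ : γ → ℕ)
    (hβ : Function.Injective rβ) (hγ : Function.Injective rγ) :
    ∏ e, F e = (∏ i : Fin (p + 1), ∏ j : Fin (p + 1), if i < j then F s(.inl i, .inl j) else 1) *
      (∏ i : Fin (p + 1), ∏ b : β, F s(.inl i, .inr (.inl b))) *
      (∏ i : Fin (p + 1), ∏ c : γ, F s(.inl i, .inr (.inr c))) *
      (∏ b : β, ∏ b' : β, if rβ b < rβ b' then F s(.inr (.inl b), .inr (.inl b')) else 1) *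
      (∏ c : γ, ∏ c' : γ, if rγ c < rγ c' then F s(.inr (.inr c), .inr (.inr c')) else 1) *
      (∏ b : β, ∏ c : γ, F s(.inr (.inl b), .inr (.inr c))) := by
  obtain ⟨N, hN⟩ : ∃ N, ∀ b, rβ b < N := by
    refine ⟨Finset.univ.sup rβ + 1, fun b => Nat.lt_succ_of_le (Finset.le_sup (Finset.mem_univ b))⟩
  let rk : Fin (p + 1) ⊕ (β ⊕ γ) → ℕ := Sum.elim (fun i => (i : ℕ))
    (Sum.elim (fun b => p + 1 + rβ b) (fun c => p + 1 + N + rγ c))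
  have hrk : Function.Injective rk := by
    rintro (i | b | c) (j | b' | c') h
    · exact congrArg _ (Fin.ext h)
    · have h : (i : ℕ) = p + 1 + rβ b' := h
      omega
    · have h : (i : ℕ) = p + 1 + N + rγ c' := h
      omega
    · have h : p + 1 + rβ b = (j : ℕ) := h
      omega
    · have h : p + 1 + rβ b = p + 1 + rβ b' := h
      rw [hβ (show rβ b = rβ b' by omega)]
    · have h : p + 1 + rβ b = p + 1 + N + rγ c' := h
      have := hN b
      omega
    · have h : p + 1 + N + rγ c = (j : ℕ) := h
      omega
    · have h : p + 1 + N + rγ c = p + 1 + rβ b' := h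
      have := hN b'
      omega
    · have h : p + 1 + N + rγ c = p + 1 + N + rγ c' := h
      rw [hγ (show rγ c = rγ c' by omega)]
  rw [prod_sym2_rk rk hrk F hF]
  simp only [Fintype.prod_sum_type, Finset.prod_mul_distrib]
  have e1 : ∀ i j : Fin (p + 1), rk (.inl i) < rk (.inl j) ↔ i < j := fun i j => Iff.rfl
  have e2 : ∀ (i : Fin (p + 1)) (b : β), rk (.inl i) < rk (.inr (.inl b)) := by
    intro i b
    change (i : ℕ) < p + 1 + rβ b
    omega
  have e3 : ∀ (i : Fin (p + 1)) (c : γ), rk (.inl i) < rk (.inr (.inr c)) := by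
    intro i c
    change (i : ℕ) < p + 1 + N + rγ c
    omega
  have e4 : ∀ b b' : β, rk (.inr (.inl b)) < rk (.inr (.inl b')) ↔ rβ b < rβ b' := by
    intro b b'
    change p + 1 + rβ b < p + 1 + rβ b' ↔ _
    omega
  have e5 : ∀ c c' : γ, rk (.inr (.inr c)) < rk (.inr (.inr c')) ↔ rγ c < rγ c' := by
    intro b b'
    change p + 1 + N + rγ b < p + 1 + N + rγ b' ↔ _
    omega
  have e6 : ∀ (b : β) (c : γ), rk (.inr (.inl b)) < rk (.inr (.inr c)) := by
    intro b c
    have := hN b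
    change p + 1 + rβ b < p + 1 + N + rγ c
    omega
  simp only [e1, e2, e3, e4, e5, e6, if_true, fun i b => (e2 i b).not_gt,
    fun i c => (e3 i c).not_gt, fun b c => (e6 b c).not_gt, if_false, Finset.prod_const_one]
  ring

variable (B : β → ρ → Bool) (C : γ → ρ → Bool)

/-- Minimum over the support. -/
def sm (b : ρ → Bool) (z : ρ → ENNReal) : ENNReal := (Finset.univ.filter fun j => b j = true).inf z

lemma le_sm (b : ρ → Bool) (z : ρ → ENNReal) (a : ENNReal) :
    a ≤ sm b z ↔ ∀ j, b j = true → a ≤ z j := by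
  unfold sm
  rw [Finset.le_inf_iff]
  simp

def ph (B : β → ρ → Bool) (z : ρ → ENNReal) (t : ENNReal) : ENNReal := ∏ b, t ⊓ sm (B b) z

lemma two_le_card_of {ι : Type*} {S : Finset ι} (i j : ι) (hi : i ∈ S) (hj : j ∈ S) (h : i ≠ j) :
    2 ≤ S.card := Finset.one_lt_card_iff.2 ⟨i, j, hi, hj, h⟩

lemma wt_LL (pos : Fin (p + 1) ⊕ (β ⊕ γ) → Fin p ⊕ ρ → Bool)
    (hpos : ∀ i, pos (.inl i) = Sum.elim (fun l : Fin p => decide ((l : ℕ) < i)) fun _ => false)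
    (x : Fin p ⊕ ρ → ENNReal) (i j : Fin (p + 1)) (hij : i < j) :
    wt (pth pos s(.inl i, .inl j)) x =
      if (i : ℕ) + 2 ≤ j then Mn (ext0 p fun l => x (.inl l)) i j else 1 := by
  have hm : ∀ l : Fin p, Sum.inl l ∈ pth pos s(.inl i, .inl j) ↔ (i : ℕ) ≤ l ∧ (l : ℕ) < j := by
    intro l
    rw [mem_pth, hpos, hpos]
    simp only [Sum.elim_inl, ne_eq, decide_eq_decide]
    have : (i : ℕ) < j := hij
    omega
  have hm' : ∀ l : ρ, Sum.inr l ∉ pth pos s(.inl i, .inl j) := by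
    intro l
    rw [mem_pth, hpos, hpos]
    simp
  have hj : (j : ℕ) ≤ p := by omega
  split_ifs with h
  · refine wt_eq_of _ _ _ ?_ fun a => ?_
    · refine two_le_card_of (.inl ⟨i, by omega⟩) (.inl ⟨i + 1, by omega⟩) ((hm _).2 ?_)
        ((hm _).2 ?_) (by simp)
      · exact ⟨le_rfl, by simp only; omega⟩
      · exact ⟨by simp only; omega, by simp only; omega⟩
    · rw [le_Mn_ext0 _ _ _ hj]
      constructor
      · rintro h1 (l | l) hl
        · exact h1 l ((hm l).1 hl).1 ((hm l).1 hl).2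
        · exact absurd hl (hm' l)
      · intro h1 l h2 h3
        exact h1 _ ((hm l).2 ⟨h2, h3⟩)
  · rw [wt, if_neg]
    rw [not_le]
    refine Nat.lt_succ_of_le (Finset.card_le_one.2 ?_)
    rintro (l | l) hl (k | k) hk
    · rw [hm] at hl hk
      congr 1
      ext
      omega
    · exact absurd hk (hm' k)
    · exact absurd hl (hm' l)
    · exact absurd hl (hm' l)

/-- The path joins a vertex with a nontrivial part in `ρ` through the leg interval `[i,j)`. -/
lemma wt_LB {W : Type*} (pos : W → Fin p ⊕ ρ → Bool) (u w : W) (i j : ℕ) (hij : i < j) (hj : j ≤ p)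
    (b : ρ → Bool) (hb : ∃ k, b k = true)
    (hl : ∀ l : Fin p, pos u (.inl l) ≠ pos w (.inl l) ↔ i ≤ l ∧ (l : ℕ) < j)
    (hr : ∀ k, pos u (.inr k) ≠ pos w (.inr k) ↔ b k = true) (x : Fin p ⊕ ρ → ENNReal) :
    wt (pth pos s(u, w)) x = Mn (ext0 p fun l => x (.inl l)) i j ⊓ sm b fun k => x (.inr k) := by
  obtain ⟨k, hk⟩ := hb
  refine wt_eq_of _ _ _ ?_ fun a => ?_
  · refine two_le_card_of (.inl ⟨i, by omega⟩) (.inr k) ?_ ?_ (by simp)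
    · rw [mem_pth, hl]; exact ⟨le_rfl, hij⟩
    · rw [mem_pth, hr]; exact hk
  · rw [le_inf_iff, le_Mn_ext0 _ _ _ hj, le_sm]
    constructor
    · rintro ⟨h1, h2⟩ (l | l) hm
      · rw [mem_pth, hl] at hm
        exact h1 l hm.1 hm.2
      · rw [mem_pth, hr] at hm
        exact h2 l hm
    · intro h
      refine ⟨fun l h1 h2 => h _ ?_, fun l h1 => h _ ?_⟩
      · rw [mem_pth, hl]; exact ⟨h1, h2⟩
      · rw [mem_pth, hr]; exact h1

end move

section move2
variable {p : ℕ} {ρ β γ : Type*} [Fintype ρ] [Fintype β] [Fintype γ]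

def sp (b : ρ → Bool) : Finset ρ := Finset.univ.filter fun j => b j = true

def df (b b' : ρ → Bool) : Finset ρ := Finset.univ.filter fun j => b j ≠ b' j

lemma wt_R {W : Type*} (pos : W → Fin p ⊕ ρ → Bool) (u w : W) (S : Finset ρ)
    (hl : ∀ l : Fin p, pos u (.inl l) = pos w (.inl l))
    (hr : ∀ k, pos u (.inr k) ≠ pos w (.inr k) ↔ k ∈ S) (x : Fin p ⊕ ρ → ENNReal) :
    wt (pth pos s(u, w)) x = wt S fun k => x (.inr k) := by
  have : pth pos s(u, w) = S.map Function.Embedding.inr := by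
    ext (l | k)
    · rw [mem_pth]; simp [hl]
    · rw [mem_pth, hr]; simp
  rw [this, wt, wt, Finset.card_map, Finset.inf_map]
  rfl

/-- Factors common to both integrands. -/
def c0 (B : β → ρ → Bool) (C : γ → ρ → Bool) (rβ : β → ℕ) (rγ : γ → ℕ) (z : ρ → ENNReal) : ENNReal :=
  (∏ b, wt (sp (B b)) z) * (∏ c, wt (sp (C c)) z) *
  (∏ b, ∏ b', if rβ b < rβ b' then wt (df (B b) (B b')) z else 1) *
  (∏ c, ∏ c', if rγ c < rγ c' then wt (df (C c) (C c')) z else 1)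

def Z0 (B : β → ρ → Bool) (C : γ → ρ → Bool) (z : ρ → ENNReal) : ENNReal :=
  ∏ b, ∏ c, wt (df (B b) (C c)) z

lemma prod_LL (pos : Fin (p + 1) ⊕ (β ⊕ γ) → Fin p ⊕ ρ → Bool)
    (hpos : ∀ i, pos (.inl i) = Sum.elim (fun l : Fin p => decide ((l : ℕ) < i)) fun _ => false)
    (x : Fin p ⊕ ρ → ENNReal) :
    (∏ i : Fin (p + 1), ∏ j : Fin (p + 1), if i < j then wt (pth pos s(.inl i, .inl j)) x else 1) =
      kap p (ext0 p fun l => x (.inl l)) := by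
  unfold kap
  rw [Finset.prod_range]
  refine Finset.prod_congr rfl fun i _ => ?_
  rw [Finset.prod_range]
  refine Finset.prod_congr rfl fun j _ => ?_
  by_cases h : i < j
  · rw [if_pos h, wt_LL pos hpos x i j h]
  · rw [if_neg h, if_neg]
    have : ¬ (i : ℕ) < j := h
    omega

lemma prod_LB {W : Type*} (pos : Fin (p + 1) ⊕ W → Fin p ⊕ ρ → Bool)
    (hpos : ∀ i, pos (.inl i) = Sum.elim (fun l : Fin p => decide ((l : ℕ) < i)) fun _ => false)
    (g : β → W) (B : β → ρ → Bool) (hB : ∀ b, ∃ k, B b k = true)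
    (hg : ∀ b, pos (.inr (g b)) = Sum.elim (fun _ : Fin p => false) (B b))
    (x : Fin p ⊕ ρ → ENNReal) :
    (∏ i : Fin (p + 1), ∏ b, wt (pth pos s(.inl i, .inr (g b))) x) =
      (∏ b, wt (sp (B b)) fun k => x (.inr k)) *
        Phi (ph B fun k => x (.inr k)) p (ext0 p fun l => x (.inl l)) := by
  rw [Fin.prod_univ_succ]
  congr 1
  · refine Finset.prod_congr rfl fun b _ => ?_
    refine wt_R pos _ _ _ (fun l => ?_) (fun k => ?_) x
    · rw [hpos, hg]; simp
    · rw [hpos, hg]; simp [sp]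
  · unfold Phi ph
    rw [Finset.prod_range]
    refine Finset.prod_congr rfl fun i _ => Finset.prod_congr rfl fun b _ => ?_
    refine wt_LB pos _ _ 0 (i + 1) (by omega) (by omega) (B b) (hB b) (fun l => ?_) (fun k => ?_) x
    · rw [hpos, hg]; simp
    · rw [hpos, hg]; simp

lemma prod_LC {W : Type*} (pos : Fin (p + 1) ⊕ W → Fin p ⊕ ρ → Bool)
    (hpos : ∀ i, pos (.inl i) = Sum.elim (fun l : Fin p => decide ((l : ℕ) < i)) fun _ => false)
    (g : γ → W) (C : γ → ρ → Bool) (hC : ∀ b, ∃ k, C b k = true)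
    (hg : ∀ b, pos (.inr (g b)) = Sum.elim (fun _ : Fin p => true) (C b))
    (x : Fin p ⊕ ρ → ENNReal) :
    (∏ i : Fin (p + 1), ∏ b, wt (pth pos s(.inl i, .inr (g b))) x) =
      (∏ b, wt (sp (C b)) fun k => x (.inr k)) *
        PhiR (ph C fun k => x (.inr k)) p (ext0 p fun l => x (.inl l)) := by
  rw [Fin.prod_univ_castSucc, mul_comm]
  congr 1
  · refine Finset.prod_congr rfl fun b _ => ?_
    refine wt_R pos _ _ _ (fun l => ?_) (fun k => ?_) x
    · rw [hpos, hg]; simp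
    · rw [hpos, hg]; simp [sp]
  · unfold PhiR ph
    rw [Finset.prod_range]
    refine Finset.prod_congr rfl fun i _ => Finset.prod_congr rfl fun b _ => ?_
    refine wt_LB pos _ _ i p (by omega) (by omega) (C b) (hC b) (fun l => ?_) (fun k => ?_) x
    · rw [hpos, hg]; simp
    · rw [hpos, hg]; simp

variable (B : β → ρ → Bool) (C : γ → ρ → Bool) (rβ : β → ℕ) (rγ : γ → ℕ)

lemma Iv_posA (hβ : Function.Injective rβ) (hγ : Function.Injective rγ)
    (hB : ∀ b, ∃ k, B b k = true) (hC : ∀ b, ∃ k, C b k = true)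
    (x : Fin p ⊕ ρ → ENNReal) :
    Iv (posA p B C) x = c0 B C rβ rγ (fun k => x (.inr k)) * Z0 B C (fun k => x (.inr k)) *
      (kap p (ext0 p fun l => x (.inl l)) *
        (Phi (ph B fun k => x (.inr k)) p (ext0 p fun l => x (.inl l)) *
          Phi (ph C fun k => x (.inr k)) p (ext0 p fun l => x (.inl l)))) := by
  unfold Iv
  rw [prod_split (fun e => wt (pth (posA p B C) e) x) (wt_diag _ _) rβ rγ hβ hγ]
  rw [prod_LL (posA p B C) (fun _ => rfl), prod_LB (posA p B C) (fun _ => rfl) Sum.inl B hB (fun _ => rfl),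
    prod_LB (posA p B C) (fun _ => rfl) Sum.inr C hC (fun _ => rfl)]
  have h1 : ∀ b b' : β, wt (pth (posA p B C) s(.inr (.inl b), .inr (.inl b'))) x =
      wt (df (B b) (B b')) fun k => x (.inr k) := fun b b' =>
    wt_R (posA p B C) _ _ _ (fun l => by simp [posA]) (fun k => by simp [posA, df]) x
  have h2 : ∀ b b' : γ, wt (pth (posA p B C) s(.inr (.inr b), .inr (.inr b'))) x =
      wt (df (C b) (C b')) fun k => x (.inr k) := fun b b' =>
    wt_R (posA p B C) _ _ _ (fun l => by simp [posA]) (fun k => by simp [posA, df]) x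
  have h3 : ∀ (b : β) (c : γ), wt (pth (posA p B C) s(.inr (.inl b), .inr (.inr c))) x =
      wt (df (B b) (C c)) fun k => x (.inr k) := fun b b' =>
    wt_R (posA p B C) _ _ _ (fun l => by simp [posA]) (fun k => by simp [posA, df]) x
  simp only [h1, h2, h3, c0, Z0]
  ring

lemma Iv_posB (hβ : Function.Injective rβ) (hγ : Function.Injective rγ)
    (hB : ∀ b, ∃ k, B b k = true) (hC : ∀ b, ∃ k, C b k = true)
    (x : Fin p ⊕ ρ → ENNReal) :
    Iv (posB p B C) x = c0 B C rβ rγ (fun k => x (.inr k)) *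
      (∏ b, ∏ c, wt (pth (posB p B C) s(.inr (.inl b), .inr (.inr c))) x) *
      (kap p (ext0 p fun l => x (.inl l)) *
        (Phi (ph B fun k => x (.inr k)) p (ext0 p fun l => x (.inl l)) *
          PhiR (ph C fun k => x (.inr k)) p (ext0 p fun l => x (.inl l)))) := by
  unfold Iv
  rw [prod_split (fun e => wt (pth (posB p B C) e) x) (wt_diag _ _) rβ rγ hβ hγ]
  rw [prod_LL (posB p B C) (fun _ => rfl), prod_LB (posB p B C) (fun _ => rfl) Sum.inl B hB (fun _ => rfl),
    prod_LC (posB p B C) (fun _ => rfl) Sum.inr C hC (fun _ => rfl)]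
  have h1 : ∀ b b' : β, wt (pth (posB p B C) s(.inr (.inl b), .inr (.inl b'))) x =
      wt (df (B b) (B b')) fun k => x (.inr k) := fun b b' =>
    wt_R (posB p B C) _ _ _ (fun l => by simp [posB]) (fun k => by simp [posB, df]) x
  have h2 : ∀ b b' : γ, wt (pth (posB p B C) s(.inr (.inr b), .inr (.inr b'))) x =
      wt (df (C b) (C b')) fun k => x (.inr k) := fun b b' =>
    wt_R (posB p B C) _ _ _ (fun l => by simp [posB]) (fun k => by simp [posB, df]) x
  simp only [h1, h2, c0]
  ring

lemma ph_mono (z : ρ → ENNReal) : Monotone (ph B z) := fun s t h =>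
  Finset.prod_le_prod' fun _ _ => inf_le_inf_right _ h

lemma ph_le_one (hB : ∀ b, ∃ k, B b k = true) (z : ρ → ENNReal) (hz : ∀ k, z k ≤ 1) (t : ENNReal) : ph B z t ≤ 1 :=
  Finset.prod_le_one' fun b _ => by
    obtain ⟨k, hk⟩ := hB b
    exact inf_le_right.trans (((le_sm _ _ _).1 le_rfl k hk).trans (hz k))

lemma meas_ph (t : (Fin p ⊕ ρ → ENNReal) → ENNReal) (ht : Measurable t) :
    Measurable fun x : Fin p ⊕ ρ → ENNReal => ph B (fun k => x (.inr k)) (t x) := by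
  unfold ph
  refine Finset.measurable_prod _ fun b _ => ht.inf ?_
  exact (measurable_finset_inf_apply _).comp
    (measurable_pi_iff.2 fun k => measurable_pi_apply (Sum.inr k))

lemma meas_ext : Measurable fun x : Fin p ⊕ ρ → ENNReal => ext0 p fun l => x (.inl l) :=
  (measurable_ext0 p).comp (measurable_pi_iff.2 fun k => measurable_pi_apply (Sum.inl k))

lemma measurable_c0 : Measurable (c0 B C rβ rγ) := by
  unfold c0
  refine ((Measurable.mul ?_ ?_).mul ?_).mul ?_
  · exact Finset.measurable_prod _ fun _ _ => measurable_wt _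
  · exact Finset.measurable_prod _ fun _ _ => measurable_wt _
  · refine Finset.measurable_prod _ fun b _ => Finset.measurable_prod _ fun b' _ => ?_
    by_cases h : rβ b < rβ b'
    · simp only [h, if_true]; exact measurable_wt _
    · simp only [h, if_false]; exact measurable_const
  · refine Finset.measurable_prod _ fun b _ => Finset.measurable_prod _ fun b' _ => ?_
    by_cases h : rγ b < rγ b'
    · simp only [h, if_true]; exact measurable_wt _
    · simp only [h, if_false]; exact measurable_const

lemma measurable_Z0 : Measurable (Z0 B C) :=
  Finset.measurable_prod _ fun _ _ => Finset.measurable_prod _ fun _ _ => measurable_wt _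

/-- Intermediate integrand. -/
def Mid (p : ℕ) (B : β → ρ → Bool) (C : γ → ρ → Bool) (rβ : β → ℕ) (rγ : γ → ℕ)
    (x : Fin p ⊕ ρ → ENNReal) : ENNReal :=
  c0 B C rβ rγ (fun k => x (.inr k)) * Z0 B C (fun k => x (.inr k)) *
      (kap p (ext0 p fun l => x (.inl l)) *
        (Phi (ph B fun k => x (.inr k)) p (ext0 p fun l => x (.inl l)) *
          PhiR (ph C fun k => x (.inr k)) p (ext0 p fun l => x (.inl l))))

lemma measurable_Mid : Measurable (Mid p B C rβ rγ) := by
  have hz : Measurable fun (x : Fin p ⊕ ρ → ENNReal) k => x (.inr k) :=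
    measurable_pi_iff.2 fun k => measurable_pi_apply (Sum.inr k)
  unfold Mid
  refine Measurable.mul (Measurable.mul ((measurable_c0 B C rβ rγ).comp hz)
    ((measurable_Z0 B C).comp hz)) (Measurable.mul ((measurable_kap p).comp meas_ext)
    (Measurable.mul ?_ ?_))
  · exact Finset.measurable_prod _ fun j _ => meas_ph B _ ((measurable_Mn _ _).comp meas_ext)
  · exact Finset.measurable_prod _ fun j _ => meas_ph C _ ((measurable_Mn _ _).comp meas_ext)

lemma lintegral_sum_split (G : (Fin p ⊕ ρ → ENNReal) → ENNReal) (hG : Measurable G) :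
    ∫⁻ x, G x ∂(Measure.pi fun _ => mu) = ∫⁻ z, ∫⁻ y, G (Sum.elim y z)
      ∂(Measure.pi fun _ : Fin p => mu) ∂(Measure.pi fun _ : ρ => mu) := by
  have hm : Measurable fun w : (Fin p → ENNReal) × (ρ → ENNReal) => Sum.elim w.1 w.2 := by
    refine measurable_pi_iff.2 ?_
    rintro (i | i)
    · exact (measurable_pi_apply i).comp measurable_fst
    · exact (measurable_pi_apply i).comp measurable_snd
  have mp := measurePreserving_sumPiEquivProdPi (fun _ : Fin p ⊕ ρ => mu)
  have := mp.lintegral_comp (f := fun w => G (Sum.elim w.1 w.2)) (hG.comp hm)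
  rw [lintegral_prod_symm' (fun w : (Fin p → ENNReal) × (ρ → ENNReal) => G (Sum.elim w.1 w.2)) (hG.comp hm)] at this
  rw [← this]
  refine lintegral_congr fun x => ?_
  congr 1
  ext (i | i) <;> rfl

lemma Mid_le (hβ : Function.Injective rβ) (hγ : Function.Injective rγ)
    (hB : ∀ b, ∃ k, B b k = true) (hC : ∀ b, ∃ k, C b k = true) :
    ∫⁻ x, Mid p B C rβ rγ x ∂(Measure.pi fun _ => mu) ≤ Fv (posA p B C) := by
  unfold Fv
  rw [lintegral_sum_split _ (measurable_Mid B C rβ rγ), lintegral_sum_split _ (measurable_Iv _)]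
  refine lintegral_mono_ae (ae_pi_le_one.mono fun z hz => ?_)
  simp only [Iv_posA B C rβ rγ hβ hγ hB hC, Mid, Sum.elim_inl, Sum.elim_inr]
  have mk := (measurable_kap p).comp (measurable_ext0 p)
  have m1 := fun φ hφ => (measurable_Phi φ hφ p).comp (measurable_ext0 p)
  have m2 := fun φ hφ => (measurable_PhiR φ hφ p).comp (measurable_ext0 p)
  have n1 := fun φ hφ => measurable_Phi φ hφ p
  have n2 := fun φ hφ => measurable_PhiR φ hφ p
  have hb := ph_mono B z
  have hc := ph_mono C z
  rw [lintegral_const_mul (f := fun y => kap p (ext0 p y) * (Phi (ph B z) p (ext0 p y) *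
        PhiR (ph C z) p (ext0 p y))) _ (mk.mul ((m1 _ hb).mul (m2 _ hc))),
    lintegral_const_mul (f := fun y => kap p (ext0 p y) * (Phi (ph B z) p (ext0 p y) *
        Phi (ph C z) p (ext0 p y))) _ (mk.mul ((m1 _ hb).mul (m1 _ hc)))]
  refine mul_le_mul' le_rfl ?_
  have := core mu mu_le_one (ph B z) (ph C z) hb hc (ph_le_one B hB z hz) (ph_le_one C hC z hz) p
  rw [II_eq_pi mu p (fun x => kap p x * (Phi (ph B z) p x * PhiR (ph C z) p x))
      ((measurable_kap p).mul ((n1 _ hb).mul (n2 _ hc))),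
    II_eq_pi mu p (fun x => kap p x * (Phi (ph B z) p x * Phi (ph C z) p x))
      ((measurable_kap p).mul ((n1 _ hb).mul (n1 _ hc)))] at this
  exact this

lemma df_sub (b : β) (c : γ) (x : Fin p ⊕ ρ → ENNReal) (hx : ∀ i, x i ≤ 1) :
    wt (pth (posB p B C) s(.inr (.inl b), .inr (.inr c))) x ≤
      wt (df (B b) (C c)) fun k => x (.inr k) := by
  have h3 : wt (pth (posA p B C) s(.inr (.inl b), .inr (.inr c))) x =
      wt (df (B b) (C c)) fun k => x (.inr k) :=
    wt_R (posA p B C) _ _ _ (fun l => by simp [posA]) (fun k => by simp [posA, df]) x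
  rw [← h3]
  refine wt_anti ?_ x hx
  rintro (l | k) hk
  · rw [mem_pth] at hk; simp [posA] at hk
  · rw [mem_pth] at hk ⊢; exact hk

theorem Fv_move (hp : 0 < p) (hB : ∀ b, ∃ k, B b k = true) (j0 : ρ) (hB0 : ∀ b, B b j0 = false)
    (hC0 : ∀ c, C c j0 = true) (b0 : β) (c₀ : γ) : Fv (posB p B C) < Fv (posA p B C) := by
  have hC : ∀ b, ∃ k, C b k = true := fun c => ⟨j0, hC0 c⟩
  obtain ⟨rβ, hβ⟩ : ∃ rβ : β → ℕ, Function.Injective rβ :=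
    ⟨fun b => Fintype.equivFin β b, fun a b h => (Fintype.equivFin β).injective (Fin.ext h)⟩
  obtain ⟨rγ, hγ⟩ : ∃ rγ : γ → ℕ, Function.Injective rγ :=
    ⟨fun b => Fintype.equivFin γ b, fun a b h => (Fintype.equivFin γ).injective (Fin.ext h)⟩
  refine lt_of_lt_of_le ?_ (Mid_le B C rβ rγ hβ hγ hB hC)
  have hle : ∀ x : Fin p ⊕ ρ → ENNReal, (∀ i, x i ≤ 1) → Iv (posB p B C) x ≤ Mid p B C rβ rγ x := by
    intro x hx
    rw [Iv_posB B C rβ rγ hβ hγ hB hC, Mid]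
    gcongr
    exact Finset.prod_le_prod' fun b _ => Finset.prod_le_prod' fun c _ => df_sub B C b c x hx
  refine lintegral_strict_mono_of_ae_le_of_ae_lt_on (measurable_Mid B C rβ rγ).aemeasurable
    (ne_top_of_le_ne_top ENNReal.one_ne_top (Fv_le_one _))
    (ae_pi_le_one.mono hle) (box_pos (Sum.inl ⟨0, hp⟩)) (Filter.Eventually.of_forall fun x hx => ?_)
  have hx1 := box_le_one hx
  have hx0 := box_gt_zero hx
  have key : ∀ (b : β) (c : γ), wt (pth (posB p B C) s(.inr (.inl b), .inr (.inr c))) x <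
      wt (df (B b) (C c)) fun k => x (.inr k) := by
    intro b c
    have h2 : 2 ≤ (pth (posB p B C) s(.inr (.inl b), .inr (.inr c))).card := by
      refine two_le_card_of (.inl ⟨0, hp⟩) (.inr j0) ?_ ?_ (by simp)
      · rw [mem_pth]; simp [posB]
      · rw [mem_pth]; simp [posB, hB0, hC0]
    rw [wt, if_pos h2]
    refine lt_of_le_of_lt (Finset.inf_le (b := Sum.inl ⟨0, hp⟩) ?_) ((box_self hx).trans ?_)
    · rw [mem_pth]; simp [posB]
    · rw [wt]
      split_ifs
      · rw [Finset.lt_inf_iff (by simp)]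
        intro k _
        exact box_ne hx (by simp)
      · rw [← ENNReal.ofReal_one]
        exact (ENNReal.ofReal_lt_ofReal_iff (by norm_num)).2 (by norm_num)
  have hA0 : Iv (posA p B C) x ≠ 0 := Finset.prod_ne_zero_iff.2 fun e _ => wt_pos _ _ hx0
  have hBn0 : Iv (posB p B C) x ≠ 0 := Finset.prod_ne_zero_iff.2 fun e _ => wt_pos _ _ hx0
  have hBt : Iv (posB p B C) x ≠ ⊤ := ne_top_of_le_ne_top ENNReal.one_ne_top (Iv_le_one _ _ hx1)
  rw [Iv_posB B C rβ rγ hβ hγ hB hC] at hBn0 hBt ⊢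
  rw [Mid]
  set P := ∏ b, ∏ c, wt (pth (posB p B C) s(.inr (.inl b), .inr (.inr c))) x with hP
  set K := kap p (ext0 p fun l => x (.inl l)) *
        (Phi (ph B fun k => x (.inr k)) p (ext0 p fun l => x (.inl l)) *
          PhiR (ph C fun k => x (.inr k)) p (ext0 p fun l => x (.inl l))) with hK
  set c := c0 B C rβ rγ (fun k => x (.inr k)) with hc
  have hc0 : c ≠ 0 := fun h => hBn0 (by rw [h]; simp)
  have hK0 : K ≠ 0 := fun h => hBn0 (by rw [h]; simp)
  have hP0 : P ≠ 0 := fun h => hBn0 (by rw [h]; simp)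
  have hct : c ≠ ⊤ := fun h => hBt (by rw [h, ENNReal.top_mul hP0, ENNReal.top_mul hK0])
  have hKt : K ≠ ⊤ := fun h => hBt (by rw [h, ENNReal.mul_top (mul_ne_zero hc0 hP0)])
  rw [ENNReal.mul_lt_mul_iff_left hK0 hKt, ENNReal.mul_lt_mul_iff_right hc0 hct, hP, Z0]
  have aux : ∀ {κ : Type _} [Fintype κ] (f g : κ → ENNReal) (k : κ), (∀ i, f i < g i) →
      (∀ i, g i ≤ 1) → ∏ i, f i < ∏ i, g i := by
    intro κ _ f g k h h1
    rw [← Finset.mul_prod_erase _ f (Finset.mem_univ k), ← Finset.mul_prod_erase _ g (Finset.mem_univ k)]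
    refine lt_of_le_of_lt (mul_le_mul' le_rfl (Finset.prod_le_prod' fun i _ => (h i).le)) ?_
    rw [ENNReal.mul_lt_mul_iff_left]
    · exact h k
    · exact Finset.prod_ne_zero_iff.2 fun i _ => (lt_of_le_of_lt zero_le (h i)).ne'
    · exact ne_top_of_le_ne_top ENNReal.one_ne_top (Finset.prod_le_one' fun i _ => h1 i)
  rw [← Fintype.prod_prod_type' (f := fun b c => wt (pth (posB p B C) s(.inr (.inl b), .inr (.inr c))) x),
    ← Fintype.prod_prod_type' (f := fun b c => wt (df (B b) (C c)) fun k => x (.inr k))]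
  exact aux _ _ (b0, c₀) (fun i => key i.1 i.2) (fun i => wt_le_one _ _ fun k => hx1 _)

end move2

/-! ### Legs of a tree -/

structure Leg (T : Finset (Sym2 V)) (p : ℕ) (g : ℕ → V) : Prop where
  inj : ∀ i ≤ p, ∀ j ≤ p, g i = g j → i = j
  mem : ∀ i < p, s(g i, g (i + 1)) ∈ T
  only : ∀ i < p, ∀ w, s(g i, w) ∈ T → ∃ k < p, s(g i, w) = s(g k, g (k + 1))

lemma exists_leg_one [Fintype V] (T : Finset (Sym2 V)) (hT : IsSpanningTree (⊤ : SimpleGraph V) T)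
    (h2 : 2 ≤ Fintype.card V) : ∃ g, Leg T 1 g := by
  have hd := ((spanning_iff T).1 hT).1
  have : Nontrivial V := Fintype.one_lt_card_iff_nontrivial.1 h2
  have ht : (spanGraph T).IsTree := ⟨hT.2.1, hT.2.2⟩
  obtain ⟨v, hv⟩ := ht.exists_vert_degree_one_of_nontrivial
  obtain ⟨w, hw, huniq⟩ := degree_eq_one_iff_existsUnique_adj.1 hv
  rw [spanGraph_adj] at hw
  refine ⟨fun i => if i = 0 then v else w, ?_, ?_, ?_⟩
  · intro i hi j hj h
    have hi : i = 0 ∨ i = 1 := by omega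
    have hj : j = 0 ∨ j = 1 := by omega
    rcases hi with rfl | rfl <;> rcases hj with rfl | rfl
    · rfl
    · exact absurd h (by simpa using hw.2)
    · exact absurd h.symm (by simpa using hw.2)
    · rfl
  · intro i hi
    have : i = 0 := by omega
    subst this
    simpa using hw.1
  · intro i hi x hx
    have : i = 0 := by omega
    subst this
    refine ⟨0, one_pos, ?_⟩
    have hx : s(v, x) ∈ T := by simpa using hx
    have hvx : v ≠ x := by simpa using hd _ hx
    have := huniq x ((spanGraph_adj _ _ _).2 ⟨hx, hvx⟩)
    simp [this]

lemma Leg.off {T : Finset (Sym2 V)} {p : ℕ} {g : ℕ → V} (L : Leg T (p + 1) g) (w : V)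
    (hw : s(g (p + 1), w) ∈ T) (hne : w ≠ g p) (hd : ∀ e ∈ T, ¬ e.IsDiag) :
    ∀ i ≤ p + 1, g i ≠ w := by
  rintro i hi rfl
  rcases Nat.lt_or_ge i (p + 1) with h | h
  · have h1 : s(g i, g (p + 1)) ∈ T := by rwa [Sym2.eq_swap]
    obtain ⟨k, hk, hk2⟩ := L.only i h _ h1
    have hkk : i ≠ p := fun h => hne (by rw [h])
    rcases Sym2.eq_iff.1 hk2 with ⟨a, b⟩ | ⟨a, b⟩
    · have := L.inj _ (by omega) _ (by omega) a
      have := L.inj _ (by omega) _ (by omega) b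
      omega
    · have := L.inj _ (by omega) _ (by omega) a
      have := L.inj _ (by omega) _ (by omega) b
      omega
  · have : i = p + 1 := by omega
    subst this
    exact hd _ hw (by simp)

lemma exists_leg [Fintype V] (T : Finset (Sym2 V)) (hT : IsSpanningTree (⊤ : SimpleGraph V) T)
    (h2 : 2 ≤ Fintype.card V) :
    (∃ f : ℕ → V, (∀ i < Fintype.card V, ∀ j < Fintype.card V, f i = f j → i = j) ∧
      T = (Finset.range (Fintype.card V - 1)).image fun i => s(f i, f (i + 1))) ∨
    ∃ p g q b, Leg T (p + 1) g ∧ s(g (p + 1), q) ∈ T ∧ s(g (p + 1), b) ∈ T ∧ q ≠ b ∧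
      (∀ i ≤ p + 1, g i ≠ q) ∧ (∀ i ≤ p + 1, g i ≠ b) := by
  obtain ⟨hd, hc, hcard⟩ := (spanning_iff T).1 hT
  by_contra hcon
  rw [not_or] at hcon
  obtain ⟨hnp, hnl⟩ := hcon
  have step : ∀ p, ∃ g, Leg T (p + 1) g := by
    intro p
    induction p with
    | zero => exact exists_leg_one T hT h2
    | succ p ih =>
      obtain ⟨g, L⟩ := ih
      by_cases hw : ∃ w, s(g (p + 1), w) ∈ T ∧ w ≠ g p
      · obtain ⟨w, hw, hwp⟩ := hw
        have hoff := L.off w hw hwp hd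
        have huniq : ∀ w', s(g (p + 1), w') ∈ T → w' ≠ g p → w' = w := by
          intro w' h1 h2
          by_contra hne
          exact hnl ⟨p, g, w', w, L, h1, hw, hne, L.off w' h1 h2 hd, hoff⟩
        have e1 : ∀ i, i ≤ p + 1 → (if i ≤ p + 1 then g i else w) = g i := fun i hi => if_pos hi
        have e2 : (if p + 1 + 1 ≤ p + 1 then g (p + 1 + 1) else w) = w := if_neg (by omega)
        refine ⟨fun i => if i ≤ p + 1 then g i else w, ?_, ?_, ?_⟩
        · intro i hi j hj h
          by_cases hi' : i ≤ p + 1 <;> by_cases hj' : j ≤ p + 1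
          · rw [if_pos hi', if_pos hj'] at h
            exact L.inj i hi' j hj' h
          · rw [if_pos hi', if_neg hj'] at h
            exact absurd h (hoff i hi')
          · rw [if_neg hi', if_pos hj'] at h
            exact absurd h.symm (hoff j hj')
          · omega
        · intro i hi
          rw [e1 i (by omega)]
          by_cases h : i = p + 1
          · rw [h, e2]; exact hw
          · rw [e1 _ (by omega)]
            exact L.mem i (by omega)
        · intro i hi x hx
          rw [e1 i (by omega)] at hx ⊢
          have old : ∀ k < p + 1, s(g i, x) = s(g k, g (k + 1)) →
              ∃ k < p + 1 + 1, s(g i, x) = s(if k ≤ p + 1 then g k else w,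
                if k + 1 ≤ p + 1 then g (k + 1) else w) := by
            intro k hk h
            refine ⟨k, by omega, ?_⟩
            rw [e1 k (by omega), e1 (k + 1) (by omega)]
            exact h
          by_cases h : i = p + 1
          · subst h
            by_cases hxp : x = g p
            · exact old p (by omega) (by rw [hxp, Sym2.eq_swap])
            · refine ⟨p + 1, by omega, ?_⟩
              rw [e1 _ le_rfl, e2, huniq x hx hxp]
          · obtain ⟨k, hk, h3⟩ := L.only i (by omega) x hx
            exact old k hk h3
      · exfalso
        push Not at hw
        have honly : ∀ i ≤ p + 1, ∀ w, s(g i, w) ∈ T → ∃ k < p + 1, s(g i, w) = s(g k, g (k + 1)) := by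
          intro i hi w h
          by_cases hi' : i = p + 1
          · subst hi'
            refine ⟨p, by omega, ?_⟩
            rw [hw w h, Sym2.eq_swap]
          · exact L.only i (by omega) w h
        have hall : ∀ v, ∃ i ≤ p + 1, g i = v := by
          intro v
          refine prop_of_connected hc (fun v => ∃ i ≤ p + 1, g i = v) ?_ (g 0) v ⟨0, by omega, rfl⟩
          rintro a b hab ⟨i, hi, rfl⟩
          obtain ⟨k, hk, h⟩ := honly i hi b ((spanGraph_adj _ _ _).1 hab).1
          rcases Sym2.eq_iff.1 h with ⟨-, h⟩ | ⟨-, h⟩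
          · exact ⟨k + 1, by omega, h.symm⟩
          · exact ⟨k, by omega, h.symm⟩
        have hcV : Fintype.card V = p + 2 := by
          have : Function.Bijective fun i : Fin (p + 2) => g i := by
            constructor
            · intro i j h
              exact Fin.ext (L.inj i (by omega) j (by omega) h)
            · intro v
              obtain ⟨i, hi, h⟩ := hall v
              exact ⟨⟨i, by omega⟩, h⟩
          rw [← Fintype.card_of_bijective this, Fintype.card_fin]
        refine hnp ⟨g, ?_, ?_⟩
        · rw [hcV]
          intro i hi j hj h
          exact L.inj i (by omega) j (by omega) h
        · rw [hcV]
          ext e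
          constructor
          · intro he
            obtain ⟨a, b, rfl⟩ := exists_rep e
            obtain ⟨i, hi, rfl⟩ := hall a
            obtain ⟨k, hk, h⟩ := honly i hi b he
            exact Finset.mem_image.2 ⟨k, by simpa using hk, h.symm⟩
          · intro he
            obtain ⟨k, hk, rfl⟩ := Finset.mem_image.1 he
            exact L.mem k (by simpa using hk)
  obtain ⟨g, L⟩ := step (Fintype.card V)
  have : Function.Injective fun i : Fin (Fintype.card V + 1) => g i := by
    intro i j h
    exact Fin.ext (L.inj i (by omega) j (by omega) h)
  have := Fintype.card_le_of_injective _ this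
  simp at this

/-! ### Path trees -/

lemma path_Fv {n : ℕ} (T : Finset (Sym2 (Fin n))) (hT : IsPathTree n T) (hn : 2 ≤ n) :
    mstProb ⊤ T = (Fv fun (j : Fin n) (i : Fin (n - 1)) => decide ((i : ℕ) < j)).toReal := by
  obtain ⟨hs, f, hf, hTf⟩ := hT
  have hbij : Function.Bijective fun i : Fin n => f i := by
    rw [Finite.injective_iff_bijective.symm]
    intro i j h
    exact Fin.ext (hf i i.2 j j.2 h)
  let E : Fin n ≃ Fin n := Equiv.ofBijective _ hbij
  have hE : ∀ k (hk : k < n), E.symm (f k) = ⟨k, hk⟩ := by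
    intro k hk
    rw [Equiv.symm_apply_eq]; rfl
  let pos : Fin n → Fin (n - 1) → Bool := fun u i => decide ((i : ℕ) < E.symm u)
  let ed : Fin (n - 1) → Sym2 (Fin n) := fun i => s(f i, f (i + 1))
  have key : ∀ i j : Fin (n - 1), pos (f i) j ≠ pos (f (i + 1)) j ↔ j = i := by
    intro i j
    simp only [pos, hE i (by omega), hE (i + 1) (by omega), ne_eq, decide_eq_decide, Fin.ext_iff]
    omega
  have L : Lab T ed pos := by
    refine ⟨?_, ?_, ?_⟩
    · intro i j h
      rcases Sym2.eq_iff.1 h with ⟨a, b⟩ | ⟨a, b⟩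
      · exact Fin.ext (hf _ (by omega) _ (by omega) a)
      · have := hf _ (by omega) _ (by omega) a
        have := hf _ (by omega) _ (by omega) b
        omega
    · intro e
      rw [hTf, Finset.mem_image]
      constructor
      · rintro ⟨k, hk, rfl⟩
        exact ⟨⟨k, by simpa using hk⟩, rfl⟩
      · rintro ⟨k, rfl⟩
        exact ⟨k, by simp, rfl⟩
    · intro i u w h j
      rcases Sym2.eq_iff.1 h with ⟨rfl, rfl⟩ | ⟨rfl, rfl⟩
      · exact key i j
      · rw [ne_comm]; exact key i j
  rw [mstProb_eq L hs, ← Fv_equiv E pos]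
  congr 2
  ext j i
  simp [pos]

/-! ### Every non-path tree can be improved -/

lemma exists_smaller [Fintype V] (T : Finset (Sym2 V)) (hT : IsSpanningTree (⊤ : SimpleGraph V) T)
    (p' : ℕ) (g : ℕ → V) (q b : V) (L : Leg T (p' + 1) g) (hq : s(g (p' + 1), q) ∈ T)
    (hb : s(g (p' + 1), b) ∈ T) (hqb : q ≠ b) (hqo : ∀ i ≤ p' + 1, g i ≠ q)
    (hbo : ∀ i ≤ p' + 1, g i ≠ b) :
    ∃ T', IsSpanningTree (⊤ : SimpleGraph V) T' ∧ mstProb ⊤ T' < mstProb ⊤ T := by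
  obtain ⟨hd, hc, hcard⟩ := (spanning_iff T).1 hT
  obtain ⟨p, hp⟩ : ∃ p, p = p' + 1 := ⟨_, rfl⟩
  rw [← hp] at L hq hb hqo hbo
  have hp0 : 0 < p := by omega
  let f : ℕ → V := fun i => g (p - i)
  have f0 : f 0 = g p := rfl
  have hfinj : ∀ i ≤ p, ∀ j ≤ p, f i = f j → i = j := by
    intro i hi j hj h
    have := L.inj (p - i) (by omega) (p - j) (by omega) h
    omega
  have hfmem : ∀ i < p, s(f i, f (i + 1)) ∈ T := by
    intro i hi
    have := L.mem (p - (i + 1)) (by omega)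
    rw [show p - (i + 1) + 1 = p - i by omega, Sym2.eq_swap] at this
    exact this
  have hfonly : ∀ i ≤ p, 0 < i → ∀ w, s(f i, w) ∈ T → ∃ k < p, s(f i, w) = s(f k, f (k + 1)) := by
    intro i hi h0 w hw
    obtain ⟨k, hk, h⟩ := L.only (p - i) (by omega) w hw
    refine ⟨p - (k + 1), by omega, ?_⟩
    have h1 : f (p - (k + 1)) = g (k + 1) := by
      change g (p - (p - (k + 1))) = _
      congr 1; omega
    have h2 : f (p - (k + 1) + 1) = g k := by
      change g (p - (p - (k + 1) + 1)) = _
      congr 1; omega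
    rw [h1, h2, Sym2.eq_swap (a := g (k + 1))]
    exact h
  have hfq : ∀ i ≤ p, f i ≠ q := fun i hi => hqo _ (by omega)
  have hfb : ∀ i ≤ p, f i ≠ b := fun i hi => hbo _ (by omega)
  rw [← f0] at hq hb
  clear_value f
  clear f0 hqo hbo L
  -- edges
  let isLeg : Sym2 V → Prop := fun e => ∃ k < p, e = s(f k, f (k + 1))
  let ρ := {e : Sym2 V // e ∈ T ∧ ¬ isLeg e}
  let ed : Fin p ⊕ ρ → Sym2 V := Sum.elim (fun i => s(f i, f (i + 1))) (fun e => e.1)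
  have edinj : Function.Injective ed := by
    rintro (i | e) (j | e') h
    · rcases Sym2.eq_iff.1 (show s(f i, f (i + 1)) = s(f j, f (j + 1)) from h) with ⟨a, c⟩ | ⟨a, c⟩
      · exact congrArg _ (Fin.ext (hfinj _ (by omega) _ (by omega) a))
      · have := hfinj _ (by omega) _ (by omega) a
        have := hfinj _ (by omega) _ (by omega) c
        omega
    · exact absurd ⟨i, i.2, h.symm⟩ e'.2.2
    · exact absurd ⟨j, j.2, h⟩ e.2.2
    · exact congrArg _ (Subtype.ext h)
  have edrange : ∀ e, e ∈ T ↔ ∃ i, ed i = e := by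
    intro e
    constructor
    · intro he
      by_cases hl : isLeg e
      · obtain ⟨k, hk, rfl⟩ := hl
        exact ⟨.inl ⟨k, hk⟩, rfl⟩
      · exact ⟨.inr ⟨e, he, hl⟩, rfl⟩
    · rintro ⟨i | e, rfl⟩
      · exact hfmem i i.2
      · exact e.2.1
  obtain ⟨pos0, L0⟩ := exists_lab T hT ed edinj edrange
  obtain ⟨pos, hLab, hv⟩ : ∃ pos, Lab T ed pos ∧ ∀ i, pos (f 0) i = false := by
    refine ⟨fun u i => xor (pos0 u i) (pos0 (f 0) i), ⟨edinj, edrange, ?_⟩, fun i => by simp⟩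
    intro i u w h j
    rw [← L0.flip i u w h j]
    simp
  clear L0
  -- positions on the leg
  have hleg : ∀ i ≤ p, (∀ l : Fin p, pos (f i) (.inl l) = decide ((l : ℕ) < i)) ∧
      ∀ k, pos (f i) (.inr k) = false := by
    intro i
    induction i with
    | zero => intro _; exact ⟨fun l => by simp [hv], fun k => hv _⟩
    | succ i ih =>
      intro hi
      obtain ⟨h1, h2⟩ := ih (by omega)
      have hf := hLab.flip (.inl ⟨i, by omega⟩) (f i) (f (i + 1)) rfl
      constructor
      · intro l
        have := hf (.inl l)
        rw [h1, Sum.inl.injEq, Fin.ext_iff] at this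
        by_cases hl : (l : ℕ) = i
        · have h3 := this.2 hl
          rw [decide_eq_false (by omega)] at h3
          rw [decide_eq_true (by omega)]
          simpa using h3.symm
        · have h3 : ¬ _ := fun h => hl (this.1 h)
          rw [not_not] at h3
          rw [← h3, decide_eq_decide]
          omega
      · intro k
        have := hf (.inr k)
        rw [h2] at this
        by_contra h
        have := this.1 (fun h' => h h'.symm)
        cases this
  have hoff : ∀ u, (∀ i ≤ p, f i ≠ u) → ∀ l, pos u (.inl l) = false := by
    intro u hu l
    have := hLab.const hc (fun u => if ∃ i ≤ p, f i = u then false else pos u (.inl l)) ?_ u (f 0)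
    · rw [if_neg (by push Not; exact hu), if_pos ⟨0, by omega, rfl⟩] at this
      exact this
    · have hkey : ∀ (e : ρ) u w, e.1 = s(u, w) → (if ∃ i ≤ p, f i = u then false else pos u (.inl l)) =
          pos u (.inl l) := by
        intro e u w he
        split_ifs with h
        · obtain ⟨i, hi, rfl⟩ := h
          rcases Nat.eq_zero_or_pos i with rfl | h0
          · rw [hv]
          · obtain ⟨k, hk, h3⟩ := hfonly i hi h0 w (he ▸ e.2.1)
            exact absurd ⟨k, hk, he.trans h3⟩ e.2.2
        · rfl
      rintro (i | e) u w h
      · have hi : ∀ x, x ∈ s(u, w) → ∃ i ≤ p, f i = x := by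
          intro x hx
          rw [← h] at hx
          rcases Sym2.mem_iff.1 hx with rfl | rfl
          · exact ⟨i, by omega, rfl⟩
          · exact ⟨i + 1, by omega, rfl⟩
        rw [if_pos (hi u (by simp)), if_pos (hi w (by simp))]
      · have h : e.1 = s(u, w) := h
        rw [hkey e u w h, hkey e w u (by rw [h, Sym2.eq_swap])]
        by_contra hne
        have := (hLab.flip (.inr e) u w h _).1 hne
        cases this
  have hnotleg : ∀ w, (∀ i ≤ p, f i ≠ w) → ¬ isLeg s(f 0, w) := by
    rintro w hw ⟨k, hk, h⟩
    rcases Sym2.eq_iff.1 h with ⟨-, h⟩ | ⟨-, h⟩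
    · exact hw _ (by omega) h.symm
    · exact hw _ (by omega) h.symm
  let j0 : ρ := ⟨s(f 0, q), hq, hnotleg q hfq⟩
  let j1 : ρ := ⟨s(f 0, b), hb, hnotleg b hfb⟩
  have hj01 : j0 ≠ j1 := by
    intro h
    have : s(f 0, q) = s(f 0, b) := congrArg Subtype.val h
    rw [Sym2.congr_right] at this
    exact hqb this
  have hposq : ∀ i, pos q i = true ↔ i = .inr j0 := by
    intro i
    rw [← hLab.flip (.inr j0) (f 0) q rfl i, hv]
    simp
  have hposb : ∀ i, pos b i = true ↔ i = .inr j1 := by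
    intro i
    rw [← hLab.flip (.inr j1) (f 0) b rfl i, hv]
    simp
  let β := {u : V // (∀ i ≤ p, f i ≠ u) ∧ pos u (.inr j0) = false}
  let γ := {u : V // pos u (.inr j0) = true}
  let B : β → ρ → Bool := fun u k => pos u.1 (.inr k)
  let C : γ → ρ → Bool := fun u k => pos u.1 (.inr k)
  let Ef : Fin (p + 1) ⊕ (β ⊕ γ) → V := Sum.elim (fun i => f i) (Sum.elim (fun u => u.1) (fun u => u.1))
  have hγoff : ∀ u : γ, ∀ i ≤ p, f i ≠ u.1 := by
    intro u i hi h
    have := u.2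
    rw [← h, (hleg i hi).2] at this
    cases this
  have hEf : Function.Bijective Ef := by
    constructor
    · rintro (i | u | u) (j | w | w) h
      · exact congrArg _ (Fin.ext (hfinj _ (by omega) _ (by omega) h))
      · exact absurd h (w.2.1 i (by omega))
      · exact absurd h (hγoff w i (by omega))
      · exact absurd h.symm (u.2.1 j (by omega))
      · exact congrArg _ (congrArg _ (Subtype.ext h))
      · have h : u.1 = w.1 := h
        have h1 := u.2.2
        rw [h, w.2] at h1
        cases h1
      · exact absurd h.symm (hγoff u j (by omega))
      · have h : u.1 = w.1 := h
        have h1 := u.2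
        rw [h, w.2.2] at h1
        cases h1
      · exact congrArg _ (congrArg _ (Subtype.ext h))
    · intro u
      by_cases h1 : pos u (.inr j0) = true
      · exact ⟨.inr (.inr ⟨u, h1⟩), rfl⟩
      · by_cases h2 : ∀ i ≤ p, f i ≠ u
        · exact ⟨.inr (.inl ⟨u, h2, by simpa using h1⟩), rfl⟩
        · push Not at h2
          obtain ⟨i, hi, rfl⟩ := h2
          exact ⟨.inl ⟨i, by omega⟩, rfl⟩
  let E := Equiv.ofBijective Ef hEf
  let pos' : V → Fin p ⊕ ρ → Bool := fun u =>
    Sum.elim (fun l => xor (pos u (.inl l)) (pos u (.inr j0))) (fun k => pos u (.inr k))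
  have hA : (fun w => pos (E w)) = posA p B C := by
    funext w i
    rcases w with i' | u | u <;> rcases i with l | k
    · exact (hleg i' (by omega)).1 l
    · exact (hleg i' (by omega)).2 k
    · exact hoff _ u.2.1 l
    · rfl
    · exact hoff _ (hγoff u) l
    · rfl
  have hB : (fun w => pos' (E w)) = posB p B C := by
    funext w i
    rcases w with i' | u | u <;> rcases i with l | k
    · change xor (pos (f i') (.inl l)) (pos (f i') (.inr j0)) = decide ((l : ℕ) < i')
      rw [(hleg i' (by omega)).1 l, (hleg i' (by omega)).2]
      simp
    · exact (hleg i' (by omega)).2 k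
    · change xor (pos u.1 (.inl l)) (pos u.1 (.inr j0)) = false
      rw [hoff _ u.2.1 l, u.2.2]; rfl
    · rfl
    · change xor (pos u.1 (.inl l)) (pos u.1 (.inr j0)) = true
      rw [hoff _ (hγoff u) l, u.2]; rfl
    · rfl
  have hlt : Fv pos' < Fv pos := by
    rw [← Fv_equiv E pos, ← Fv_equiv E pos', hA, hB]
    refine Fv_move B C hp0 ?_ j0 (fun u => u.2.2) (fun u => u.2) ⟨b, hfb, ?_⟩
      ⟨q, (hposq _).2 rfl⟩
    · intro u
      by_contra hcon
      push Not at hcon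
      have : pos u.1 = pos (f 0) := by
        funext i
        rw [hv]
        rcases i with l | k
        · exact hoff _ u.2.1 l
        · simpa using hcon k
      exact u.2.1 0 (by omega) (hLab.pos_inj hc this).symm
    · by_contra h
      have := (hposb (.inr j0)).1 (by simpa using h)
      exact hj01 (Sum.inr.inj this)
  -- the new tree
  have hpq : s(f p, q) ∉ T := by
    intro h
    obtain ⟨k, hk, h3⟩ := hfonly p le_rfl hp0 q h
    rcases Sym2.eq_iff.1 h3 with ⟨-, h⟩ | ⟨-, h⟩
    · exact hfq _ (by omega) h.symm
    · exact hfq _ (by omega) h.symm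
  have hdiff : pos (f p) (.inr j0) ≠ pos q (.inr j0) := by
    rw [(hleg p le_rfl).2, (hposq _).2 rfl]; simp
  have hT' := hLab.exchange hT (.inr j0) (f p) q hdiff hpq
  refine ⟨_, hT', ?_⟩
  let ed' : Fin p ⊕ ρ → Sym2 V := Function.update ed (.inr j0) s(f p, q)
  have ed'_ne : ∀ i, i ≠ .inr j0 → ed' i = ed i := fun i hi => Function.update_of_ne hi _ _
  have ed'_self : ed' (.inr j0) = s(f p, q) := Function.update_self _ _ _
  have hL' : Lab (insert s(f p, q) (T.erase (ed (.inr j0)))) ed' pos' := by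
    refine ⟨?_, ?_, ?_⟩
    · intro i j h
      by_cases hi : i = .inr j0 <;> by_cases hj : j = .inr j0
      · rw [hi, hj]
      · rw [hi, ed'_self, ed'_ne j hj] at h
        exact absurd ((edrange _).2 ⟨j, h.symm⟩) hpq
      · rw [hj, ed'_self, ed'_ne i hi] at h
        exact absurd ((edrange _).2 ⟨i, h⟩) hpq
      · rw [ed'_ne i hi, ed'_ne j hj] at h
        exact edinj h
    · intro e
      rw [Finset.mem_insert, Finset.mem_erase, edrange]
      constructor
      · rintro (rfl | ⟨h1, i, rfl⟩)
        · exact ⟨_, ed'_self⟩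
        · exact ⟨i, ed'_ne i fun h => h1 (by rw [h])⟩
      · rintro ⟨i, rfl⟩
        by_cases hi : i = .inr j0
        · left; rw [hi, ed'_self]
        · right
          rw [ed'_ne i hi]
          exact ⟨fun h => hi (edinj h), i, rfl⟩
    · intro i u w h j
      by_cases hi : i = .inr j0
      · subst hi
        rw [ed'_self] at h
        have key : pos' (f p) j ≠ pos' q j ↔ j = .inr j0 := by
          rcases j with l | k
          · change xor (pos (f p) (.inl l)) (pos (f p) (.inr j0)) ≠
              xor (pos q (.inl l)) (pos q (.inr j0)) ↔ _
            rw [(hleg p le_rfl).1, (hleg p le_rfl).2, (hposq _).2 rfl, hoff q hfq]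
            simp
          · change pos (f p) (.inr k) ≠ pos q (.inr k) ↔ _
            rw [(hleg p le_rfl).2, ← hposq]
            simp
        rcases Sym2.eq_iff.1 h with ⟨rfl, rfl⟩ | ⟨rfl, rfl⟩
        · exact key
        · rw [ne_comm]; exact key
      · rw [ed'_ne i hi] at h
        have hfl := hLab.flip i u w h
        have h0 : pos u (.inr j0) = pos w (.inr j0) := by
          by_contra hne
          exact hi ((hfl _).1 hne).symm
        rw [← hfl j]
        rcases j with l | k
        · change xor (pos u (.inl l)) (pos u (.inr j0)) ≠ xor (pos w (.inl l)) (pos w (.inr j0)) ↔ _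
          rw [h0]
          simp
        · rfl
  rw [mstProb_eq hL' hT', mstProb_eq hLab hT]
  exact (ENNReal.toReal_lt_toReal (ne_top_of_le_ne_top ENNReal.one_ne_top (Fv_le_one _))
    (ne_top_of_le_ne_top ENNReal.one_ne_top (Fv_le_one _))).2 hlt

lemma path_or_smaller {n : ℕ} (hn : 2 ≤ n) (T : Finset (Sym2 (Fin n)))
    (hT : IsSpanningTree (⊤ : SimpleGraph (Fin n)) T) :
    IsPathTree n T ∨
      ∃ T', IsSpanningTree (⊤ : SimpleGraph (Fin n)) T' ∧ mstProb ⊤ T' < mstProb ⊤ T := by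
  rcases exists_leg T hT (by simpa using hn) with ⟨f, h1, h2⟩ | ⟨p, g, q, b, L, h1, h2, h3, h4, h5⟩
  · left
    rw [Fintype.card_fin] at h1 h2
    refine ⟨hT, f, h1, ?_⟩
    convert h2
  · right
    exact exists_smaller T hT p g q b L h1 h2 h3 h4 h5

lemma path_min {n : ℕ} (hn : 2 ≤ n) (TP T : Finset (Sym2 (Fin n))) (hP : IsPathTree n TP)
    (hT : IsSpanningTree (⊤ : SimpleGraph (Fin n)) T) : mstProb ⊤ TP ≤ mstProb ⊤ T := by
  obtain ⟨M, hM, hmin⟩ := Finset.exists_min_image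
    (Finset.univ.filter fun S : Finset (Sym2 (Fin n)) => IsSpanningTree (⊤ : SimpleGraph (Fin n)) S)
    (fun S => mstProb ⊤ S) ⟨T, by simpa using hT⟩
  have hMs : IsSpanningTree (⊤ : SimpleGraph (Fin n)) M := by simpa using hM
  rcases path_or_smaller hn M hMs with h | ⟨T', h1, h2⟩
  · rw [path_Fv TP hP hn, ← path_Fv M h hn]
    exact hmin T (by simpa using hT)
  · exact absurd h2 (not_lt.2 (hmin T' (by simpa using h1)))

lemma path_lt {n : ℕ} (hn : 2 ≤ n) (TP T : Finset (Sym2 (Fin n))) (hP : IsPathTree n TP)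
    (hT : IsSpanningTree (⊤ : SimpleGraph (Fin n)) T) (h : ¬ IsPathTree n T) :
    mstProb ⊤ TP < mstProb ⊤ T := by
  rcases path_or_smaller hn T hT with h' | ⟨T', h1, h2⟩
  · exact absurd h' h
  · exact (path_min hn TP T' hP h1).trans_lt h2

/-! ### Stars -/

lemma star_cmp [Fintype V] (S T : Finset (Sym2 V)) (hS : IsSpanningTree (⊤ : SimpleGraph V) S)
    (hT : IsSpanningTree (⊤ : SimpleGraph V) T) (c : V) (hc : ∀ e ∈ S, c ∈ e) :
    mstProb ⊤ T ≤ mstProb ⊤ S ∧ ((¬ ∃ c, ∀ e ∈ T, c ∈ e) → mstProb ⊤ T < mstProb ⊤ S) := by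
  obtain ⟨edS, posS, LS, hI⟩ := star_lab S hS c hc
  obtain ⟨hdT, hcT, hcardT⟩ := (spanning_iff T).1 hT
  have hcardS := ((spanning_iff S).1 hS).2.2
  have hcard := LS.card_eq
  obtain ⟨e⟩ : Nonempty ({v : V // v ≠ c} ≃ T) := by
    refine Fintype.card_eq.1 ?_
    rw [Fintype.card_coe]
    convert hcard.trans (show S.card = T.card by omega)
  obtain ⟨posT, LT⟩ := exists_lab T hT (fun i => (e i : Sym2 V))
    (fun i j h => e.injective (Subtype.ext h))
    (fun x => ⟨fun h => ⟨e.symm ⟨x, h⟩, by simp⟩, fun ⟨i, hi⟩ => hi ▸ (e i).2⟩)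
  have hFS : Fv posS = ∫⁻ x, starI x ∂(Measure.pi fun _ : {v : V // v ≠ c} => mu) :=
    lintegral_congr hI
  have hne : ∀ pos : V → {v : V // v ≠ c} → Bool, Fv pos ≠ ⊤ := fun pos =>
    ne_top_of_le_ne_top ENNReal.one_ne_top (Fv_le_one _)
  rw [mstProb_eq LT hT, mstProb_eq LS hS]
  constructor
  · refine (ENNReal.toReal_le_toReal (hne _) (hne _)).2 ?_
    rw [hFS]
    exact LT.Fv_le_star hcT
  · intro hns
    refine (ENNReal.toReal_lt_toReal (hne _) (hne _)).2 ?_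
    rw [hFS]
    obtain ⟨i, j, hij⟩ := LT.exists_disjoint hcT hns
    exact LT.Fv_lt_star hcT i j hij

theorem stars_and_paths_extremal (n : ℕ) (hn : 2 ≤ n)
    (Tstar TP T : Finset (Sym2 (Fin n)))
    (hstar : IsStarTree n Tstar) (hpath : IsPathTree n TP)
    (hT : IsSpanningTree (⊤ : SimpleGraph (Fin n)) T) :
    (mstProb (⊤ : SimpleGraph (Fin n)) Tstar ≥ mstProb (⊤ : SimpleGraph (Fin n)) T ∧
      mstProb (⊤ : SimpleGraph (Fin n)) T ≥ mstProb (⊤ : SimpleGraph (Fin n)) TP) ∧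
    (mstProb (⊤ : SimpleGraph (Fin n)) Tstar = mstProb (⊤ : SimpleGraph (Fin n)) T ↔
      IsStarTree n T) ∧
    (mstProb (⊤ : SimpleGraph (Fin n)) T = mstProb (⊤ : SimpleGraph (Fin n)) TP ↔
      IsPathTree n T) := by
  obtain ⟨hS, c, hc⟩ := hstar
  obtain ⟨hle, hlt⟩ := star_cmp Tstar T hS hT c hc
  refine ⟨⟨hle, path_min hn TP T hpath hT⟩, ⟨fun h => ?_, fun h => ?_⟩, ⟨fun h => ?_, fun h => ?_⟩⟩
  · by_contra hns
    exact absurd h (hlt fun hex => hns ⟨hT, hex⟩).ne'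
  · obtain ⟨-, c', hc'⟩ := h
    exact le_antisymm (star_cmp T Tstar hT hS c' hc').1 hle
  · by_contra hnp
    exact absurd h (path_lt hn TP T hpath hT hnp).ne'
  · rw [path_Fv T h hn, path_Fv TP hpath hn]

end RST
end
end

section
/- For every s = (s_1, …, s_m) ∈ ℝ^m there exists s' = (s'_1, …, s'_m) ∈ ℝ^m such that the union ⋃_{i=1}^m [s'_i, s'_i + 1] is a connected subset of ℝ, and such that the induced distributions on permutations agree: for independent random variables U_i uniform on [s_i, s_i+1] and U'_i uniform on [s'_i, s'_i+1], every permutation σ of {1,…,m} satisfies P(U_{σ(1)} < U_{σ(2)} < ⋯ < U_{σ(m)}) = P(U'_{σ(1)} < U'_{σ(2)} < ⋯ < U'_{σ(m)}). -/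
open MeasureTheory

noncomputable section

namespace RST

/-- The shifted-interval product measure on `ℝ^m`: the `i`-th coordinate is uniform on
`[s i, s i + 1]`. -/
def shiftPi (m : ℕ) (s : Fin m → ℝ) : Measure (Fin m → ℝ) :=
  Measure.pi fun i => (volume : Measure ℝ).restrict (Set.Icc (s i) (s i + 1))

/-- The union of the intervals. -/
def gapU {m : ℕ} (s : Fin m → ℝ) : Set ℝ := ⋃ i, Set.Icc (s i) (s i + 1)

/-- Lebesgue primitive of the indicator of the union. -/
def gapF {m : ℕ} (s : Fin m → ℝ) (y : ℝ) : ℝ :=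
  ∫ t in (0:ℝ)..y, (gapU s).indicator (fun _ => (1:ℝ)) t

lemma gapU_compact {m : ℕ} (s : Fin m → ℝ) : IsCompact (gapU s) :=
  isCompact_iUnion fun _ => isCompact_Icc

lemma gapU_integrable {m : ℕ} (s : Fin m → ℝ) :
    Integrable ((gapU s).indicator (fun _ => (1:ℝ))) := by
  rw [integrable_indicator_iff (gapU_compact s).measurableSet]
  exact integrableOn_const (gapU_compact s).measure_lt_top.ne

lemma gapF_sub {m : ℕ} (s : Fin m → ℝ) (x y : ℝ) :
    gapF s y - gapF s x = ∫ t in x..y, (gapU s).indicator (fun _ => (1:ℝ)) t :=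
  intervalIntegral.integral_interval_sub_left (gapU_integrable s).intervalIntegrable
    (gapU_integrable s).intervalIntegrable

lemma gapF_cont {m : ℕ} (s : Fin m → ℝ) : Continuous (gapF s) :=
  intervalIntegral.continuous_primitive
    (fun _ _ => (gapU_integrable s).intervalIntegrable) 0

lemma gapF_mono {m : ℕ} (s : Fin m → ℝ) : Monotone (gapF s) := by
  intro x y h
  rw [← sub_nonneg, gapF_sub]
  exact intervalIntegral.integral_nonneg h
    fun t _ => Set.indicator_nonneg (fun _ _ => zero_le_one) t

lemma gapF_of_subset {m : ℕ} (s : Fin m → ℝ) {x y : ℝ} (h : x ≤ y)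
    (hU : Set.Icc x y ⊆ gapU s) : gapF s y - gapF s x = y - x := by
  rw [gapF_sub, intervalIntegral.integral_congr (g := fun _ => (1:ℝ))]
  · simp
  · intro t ht
    rw [Set.uIcc_of_le h] at ht
    exact Set.indicator_of_mem (hU ht) _

lemma gapF_of_disjoint {m : ℕ} (s : Fin m → ℝ) {x y : ℝ} (h : x ≤ y)
    (hU : ∀ t, x < t → t ≤ y → t ∉ gapU s) : gapF s y = gapF s x := by
  rw [← sub_eq_zero, gapF_sub, intervalIntegral.integral_of_le h,
    setIntegral_congr_fun (g := fun _ => (0:ℝ)) measurableSet_Ioc]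
  · simp
  · intro t ht
    exact Set.indicator_of_notMem (hU t ht.1 ht.2) _

lemma gapF_add {m : ℕ} (s : Fin m → ℝ) (i : Fin m) {y : ℝ} (h : s i ≤ y) (h' : y ≤ s i + 1) :
    gapF s y = gapF s (s i) + (y - s i) := by
  have := gapF_of_subset s h
    (fun t ht => Set.mem_iUnion.2 ⟨i, ht.1, ht.2.trans h'⟩)
  linarith

lemma gap_union {m : ℕ} (s : Fin m → ℝ) :
    (⋃ i, Set.Icc (gapF s (s i)) (gapF s (s i) + 1)) = gapF s '' gapU s := by
  ext z
  simp only [Set.mem_iUnion, Set.mem_image, gapU]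
  constructor
  · rintro ⟨i, h1, h2⟩
    refine ⟨s i + (z - gapF s (s i)), ⟨i, by linarith, by linarith⟩, ?_⟩
    rw [gapF_add s i (by linarith) (by linarith)]; ring
  · rintro ⟨y, ⟨i, h1, h2⟩, rfl⟩
    refine ⟨i, ?_⟩
    rw [gapF_add s i h1 h2]
    constructor <;> linarith

lemma gap_image {m : ℕ} (s : Fin m → ℝ) (k : Fin m) (hk : ∀ i, s k ≤ s i) :
    gapF s '' gapU s = gapF s '' Set.Ici (s k) := by
  apply Set.Subset.antisymm
  · apply Set.image_mono
    intro y hy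
    obtain ⟨i, hi⟩ := Set.mem_iUnion.1 hy
    exact (hk i).trans hi.1
  · rintro _ ⟨y, hy, rfl⟩
    have hc : IsCompact (gapU s ∩ Set.Iic y) := (gapU_compact s).inter_right isClosed_Iic
    have hne : (gapU s ∩ Set.Iic y).Nonempty :=
      ⟨s k, Set.mem_iUnion.2 ⟨k, le_rfl, by linarith⟩, hy⟩
    obtain ⟨z, hz, hmax⟩ := hc.exists_isGreatest hne
    refine ⟨z, hz.1, (gapF_of_disjoint s hz.2 ?_).symm⟩
    intro t h1 h2 h3
    exact absurd (hmax ⟨h3, h2⟩) (not_le.2 h1)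

lemma gap_mp (m : ℕ) (s s' : Fin m → ℝ) :
    MeasurePreserving (fun (x : Fin m → ℝ) i => x i + (s' i - s i))
      (shiftPi m s) (shiftPi m s') := by
  unfold shiftPi
  refine measurePreserving_pi
    (fun i => (volume : Measure ℝ).restrict (Set.Icc (s i) (s i + 1)))
    (fun i => (volume : Measure ℝ).restrict (Set.Icc (s' i) (s' i + 1)))
    (f := fun i y => y + (s' i - s i)) fun i => ?_
  have h := (measurePreserving_add_right (volume : Measure ℝ) (s' i - s i)).restrict_preimage
    (measurableSet_Icc (a := s' i) (b := s' i + 1))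
  have e : (fun x => x + (s' i - s i)) ⁻¹' Set.Icc (s' i) (s' i + 1)
      = Set.Icc (s i) (s i + 1) := by
    ext x
    simp only [Set.mem_preimage, Set.mem_Icc]
    constructor <;> rintro ⟨h1, h2⟩ <;> constructor <;> linarith
  rwa [e] at h

lemma gap_ae (m : ℕ) (s : Fin m → ℝ) :
    ∀ᵐ x ∂(shiftPi m s), ∀ i, s i < x i ∧ x i < s i + 1 := by
  rw [ae_all_iff]
  intro i
  have h : ∀ᵐ y ∂((volume : Measure ℝ).restrict (Set.Icc (s i) (s i + 1))),
      s i < y ∧ y < s i + 1 := by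
    rw [← restrict_Ioo_eq_restrict_Icc]
    exact ae_restrict_mem measurableSet_Ioo
  exact (Measure.tendsto_eval_ae_ae (μ := fun i => (volume : Measure ℝ).restrict
    (Set.Icc (s i) (s i + 1))) (i := i)).eventually h

lemma gap_meas (m : ℕ) (σ : Equiv.Perm (Fin m)) :
    MeasurableSet {x : Fin m → ℝ | StrictMono fun i => x (σ i)} := by
  have : {x : Fin m → ℝ | StrictMono fun i => x (σ i)}
      = ⋂ i, ⋂ j, ⋂ (_ : i < j), {x | x (σ i) < x (σ j)} := by
    ext x; simp [StrictMono]
  rw [this]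
  exact MeasurableSet.iInter fun i => MeasurableSet.iInter fun j => MeasurableSet.iInter fun _ =>
    measurableSet_lt (measurable_pi_apply _) (measurable_pi_apply _)

lemma gap_lt {m : ℕ} (s : Fin m → ℝ) (x : Fin m → ℝ)
    (hx : ∀ i, s i < x i ∧ x i < s i + 1) (i j : Fin m) (h : x i < x j) :
    x i + (gapF s (s i) - s i) < x j + (gapF s (s j) - s j) := by
  have hi := hx i
  have hj := hx j
  rcases le_total (s i) (s j) with h1 | h1
  · rcases le_total (s j) (s i + 1) with h2 | h2
    · have := gapF_add s i h1 h2
      linarith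
    · have := gapF_mono s h2
      have := gapF_add s i (y := s i + 1) (by linarith) le_rfl
      linarith
  · have := gapF_add s j h1 (by linarith)
    linarith

lemma gap_le {m : ℕ} (s : Fin m → ℝ) (x : Fin m → ℝ)
    (hx : ∀ i, s i < x i ∧ x i < s i + 1) (i j : Fin m) (h : x i ≤ x j) :
    x i + (gapF s (s i) - s i) ≤ x j + (gapF s (s j) - s j) := by
  have hi := hx i
  have hj := hx j
  rcases le_total (s i) (s j) with h1 | h1
  · rcases le_total (s j) (s i + 1) with h2 | h2
    · have := gapF_add s i h1 h2
      linarith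
    · have := gapF_mono s h2
      have := gapF_add s i (y := s i + 1) (by linarith) le_rfl
      linarith
  · have := gapF_add s j h1 (by linarith)
    linarith

/-- Closing gaps: for every `s ∈ ℝ^m` there is `s' ∈ ℝ^m` such that
`⋃ i [s'_i, s'_i + 1]` is a connected subset of `ℝ` and the induced distributions on
permutations agree: for every permutation `σ`, the probability that the coordinates
occur in the order `σ` is the same for the two shifted-interval product measures. -/
theorem closing_gaps (m : ℕ) (hm : 0 < m) (s : Fin m → ℝ) :
    ∃ s' : Fin m → ℝ,
      IsConnected (⋃ i, Set.Icc (s' i) (s' i + 1)) ∧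
      ∀ σ : Equiv.Perm (Fin m),
        shiftPi m s {x | StrictMono fun i => x (σ i)} =
          shiftPi m s' {x | StrictMono fun i => x (σ i)} := by
  have : Nonempty (Fin m) := ⟨⟨0, hm⟩⟩
  refine ⟨fun i => gapF s (s i), ?_, fun σ => ?_⟩
  · obtain ⟨k, hk⟩ := Finite.exists_min s
    rw [gap_union, gap_image s k hk]
    exact isConnected_Ici.image _ (gapF_cont s).continuousOn
  · rw [← (gap_mp m s fun i => gapF s (s i)).measure_preimage (gap_meas m σ).nullMeasurableSet]
    apply measure_congr
    filter_upwards [gap_ae m s] with x hx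
    apply propext
    constructor
    · intro h i j hij
      exact gap_lt s x hx _ _ (h hij)
    · intro h i j hij
      have h0 : x (σ i) + (gapF s (s (σ i)) - s (σ i))
        < x (σ j) + (gapF s (s (σ j)) - s (σ j)) := h hij
      change x (σ i) < x (σ j)
      by_contra hc
      exact absurd (gap_le s x hx _ _ (not_lt.1 hc)) (not_le.2 h0)

end RST
end
end
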